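/- Let α, β ∈ ℝ and let f : ℝ² → ℝ be a smooth function whose 4-jet at the origin is j⁴f(0) = xy² − x³ + αx³y + βy⁴ (a flat umbilic of class Π^f_1 whose cubic part has three real root directions). Let δ = f_xy² − f_xx·f_yy. Then δ(0) = 0, ∇δ(0) = (0,0), and the 2-jet of δ at the origin equals 4y² + 12x², so the Hessian of δ at 0 is positive definite and the origin is an isolated point of the parabolic set of f. Moreover, the asymptotic BDE of f is topologically equivalent at 0 to the star BDE y dy² − 2x dxdy − y dx² = 0, i.e. the BDE with coefficients (a,b,c) = (y, −x, −y). -/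

import Mathlib

open Asymptotics Filter Set

noncomputable section

/-- Partial derivative in the first variable (∂/∂x). -/
def pdx (f : ℝ × ℝ → ℝ) (p : ℝ × ℝ) : ℝ := deriv (fun s => f (s, p.2)) p.1

/-- Partial derivative in the second variable (∂/∂y). -/
def pdy (f : ℝ × ℝ → ℝ) (p : ℝ × ℝ) : ℝ := deriv (fun s => f (p.1, s)) p.2

/-- f_xx -/
def fxx (f : ℝ × ℝ → ℝ) : ℝ × ℝ → ℝ := pdx (pdx f)
/-- f_xy -/
def fxy (f : ℝ × ℝ → ℝ) : ℝ × ℝ → ℝ := pdy (pdx f)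
/-- f_yy -/
def fyy (f : ℝ × ℝ → ℝ) : ℝ × ℝ → ℝ := pdy (pdy f)

/-- The discriminant δ = f_xy² − f_xx·f_yy of the asymptotic BDE of `f`. -/
def bdeDiscr (f : ℝ × ℝ → ℝ) : ℝ × ℝ → ℝ := fun p => (fxy f p) ^ 2 - fxx f p * fyy f p

/-- The BDE `a dy² + 2b dxdy + c dx² = 0`, regarded as the family of quadratic
forms `ω_p(v) = a(p)v₂² + 2b(p)v₁v₂ + c(p)v₁²`. -/
def BDE (a b c : ℝ × ℝ → ℝ) : (ℝ × ℝ) → (ℝ × ℝ) → ℝ :=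
  fun p v => a p * v.2 ^ 2 + 2 * b p * v.1 * v.2 + c p * v.1 ^ 2

/-- The asymptotic BDE `f_yy dy² + 2 f_xy dxdy + f_xx dx² = 0` of the surface `z = f(x,y)`. -/
def asymBDE (f : ℝ × ℝ → ℝ) : (ℝ × ℝ) → (ℝ × ℝ) → ℝ := BDE (fyy f) (fxy f) (fxx f)

/-- `j^k f(0) = P` : the degree-k Taylor polynomial of `f` at the origin is `P`,
i.e. `f − P = o(‖(x,y)‖^k)` as `(x,y) → 0`. -/
def HasJetAt0 (f P : ℝ × ℝ → ℝ) (k : ℕ) : Prop :=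
  (fun p => f p - P p) =o[nhds (0 : ℝ × ℝ)] fun p => ‖p‖ ^ k

/-- `γ` is an integral curve of the BDE `ω` on the open interval `I`:
`γ` is C¹ on `I` with nowhere-vanishing derivative annihilating `ω`. -/
def IsIntegralCurveOnBDE (ω : (ℝ × ℝ) → (ℝ × ℝ) → ℝ) (γ : ℝ → ℝ × ℝ) (I : Set ℝ) : Prop :=
  (∃ a b : ℝ, I = Set.Ioo a b) ∧
  ∃ dγ : ℝ → ℝ × ℝ, ContinuousOn dγ I ∧
    ∀ t ∈ I, HasDerivAt γ (dγ t) t ∧ dγ t ≠ 0 ∧ ω (γ t) (dγ t) = 0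

/-- Topological equivalence of two BDEs at the origin: a local homeomorphism
fixing `0` sending integral curves of one to integral curves of the other. -/
def TopEquivAt0 (ω Ω : (ℝ × ℝ) → (ℝ × ℝ) → ℝ) : Prop :=
  ∃ (U V : Set (ℝ × ℝ)) (h hinv : ℝ × ℝ → ℝ × ℝ),
    IsOpen U ∧ IsOpen V ∧ (0 : ℝ × ℝ) ∈ U ∧ (0 : ℝ × ℝ) ∈ V ∧ h 0 = 0 ∧
    ContinuousOn h U ∧ ContinuousOn hinv V ∧
    Set.BijOn h U V ∧ Set.InvOn hinv h U V ∧
    (∀ γ I, IsIntegralCurveOnBDE ω γ I → Set.MapsTo γ I U →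
      ∃ σ J, IsIntegralCurveOnBDE Ω σ J ∧ h '' (γ '' I) = σ '' J) ∧
    (∀ σ J, IsIntegralCurveOnBDE Ω σ J → Set.MapsTo σ J V →
      ∃ γ I, IsIntegralCurveOnBDE ω γ I ∧ hinv '' (σ '' J) = γ '' I)

/-- Smooth equivalence of two BDEs at the origin: a local C^∞ diffeomorphism `h`
fixing `0` pulling one family of quadratic forms back to a nonvanishing multiple
of the other. -/
def SmoothEquivAt0 (ω Ω : (ℝ × ℝ) → (ℝ × ℝ) → ℝ) : Prop :=
  ∃ (U V : Set (ℝ × ℝ)) (h hinv : ℝ × ℝ → ℝ × ℝ) (ρ : ℝ × ℝ → ℝ),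
    IsOpen U ∧ IsOpen V ∧ (0 : ℝ × ℝ) ∈ U ∧ (0 : ℝ × ℝ) ∈ V ∧ h 0 = 0 ∧
    ContDiffOn ℝ (⊤ : ℕ∞) h U ∧ ContDiffOn ℝ (⊤ : ℕ∞) hinv V ∧
    Set.BijOn h U V ∧ Set.InvOn hinv h U V ∧
    ContDiffOn ℝ (⊤ : ℕ∞) ρ U ∧ (∀ p ∈ U, ρ p ≠ 0) ∧
    (∀ p ∈ U, ∀ v : ℝ × ℝ, Ω (h p) (fderiv ℝ h p v) = ρ p * ω p v)

/-- Fiber topological equivalence at `0` of two 2-parameter families of BDEs: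
a homeomorphism `φ` of parameter spaces (onto its image), fixing `0`, such that
corresponding members of the families are topologically equivalent at `0`. -/
def FiberTopEquivAt0 (ω Ω : (ℝ × ℝ) → (ℝ × ℝ) → (ℝ × ℝ) → ℝ) : Prop :=
  ∃ (W : Set (ℝ × ℝ)) (φ ψ : ℝ × ℝ → ℝ × ℝ),
    W ∈ nhds (0 : ℝ × ℝ) ∧ φ 0 = 0 ∧
    ContinuousOn φ W ∧ ContinuousOn ψ (φ '' W) ∧
    Set.InvOn ψ φ W (φ '' W) ∧
    ∀ q ∈ W, TopEquivAt0 (ω q) (Ω (φ q))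

namespace SB

def P (w : ℂ) : ℂ := w ^ (((2/3 : ℝ)) : ℂ)
def Q (z : ℂ) : ℂ := z ^ (((3/2 : ℝ)) : ℂ)
def T : Set ℂ := {z | |z.im| ≤ √3 * z.re}
def ρ : ℂ := ⟨1/2, √3/2⟩
def ρb : ℂ := ⟨1/2, -(√3/2)⟩

lemma s3 : √3 * √3 = 3 := Real.mul_self_sqrt (by norm_num)
lemma s3pos : 0 < √3 := by positivity

lemma ρ_mul_ρb : ρ * ρb = 1 := by
  apply Complex.ext <;> simp [ρ, ρb] <;> nlinarith [s3]
lemma ρb_mul_ρ : ρb * ρ = 1 := by rw [mul_comm, ρ_mul_ρb]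
lemma ρ_cube : ρ ^ 3 = -1 := by
  apply Complex.ext <;> simp [ρ, pow_succ]
  · nlinarith [s3]
  · linear_combination (-(√3)/8) * s3
lemma ρb_cube : ρb ^ 3 = -1 := by
  apply Complex.ext <;> simp [ρb, pow_succ]
  · nlinarith [s3]
  · linear_combination ((√3)/8) * s3
lemma ρ_ne : ρ ≠ 0 := left_ne_zero_of_mul_eq_one ρ_mul_ρb
lemma ρb_ne : ρb ≠ 0 := left_ne_zero_of_mul_eq_one ρb_mul_ρ
lemma norm_ρ : ‖ρ‖ = 1 := by
  have h : ‖ρ‖ ^ 3 = 1 := by rw [← norm_pow, ρ_cube]; simp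
  exact (pow_eq_one_iff_of_nonneg (norm_nonneg _) (by norm_num)).1 h
lemma norm_ρb : ‖ρb‖ = 1 := by
  have h : ‖ρb‖ ^ 3 = 1 := by rw [← norm_pow, ρb_cube]; simp
  exact (pow_eq_one_iff_of_nonneg (norm_nonneg _) (by norm_num)).1 h

lemma ρ_exp : ρ = Complex.exp ((Real.pi / 3 : ℝ) * Complex.I) := by
  rw [Complex.exp_mul_I, ← Complex.ofReal_cos, ← Complex.ofReal_sin, Real.cos_pi_div_three,
    Real.sin_pi_div_three]
  apply Complex.ext <;> simp [ρ]

lemma ρb_exp : ρb = Complex.exp (-(Real.pi / 3 : ℝ) * Complex.I) := by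
  rw [neg_mul, Complex.exp_neg, ← ρ_exp]
  exact eq_inv_of_mul_eq_one_left ρb_mul_ρ

@[simp] lemma P_zero : P 0 = 0 := by simp [P]
@[simp] lemma Q_zero : Q 0 = 0 := by simp [Q]
lemma norm_P (w : ℂ) : ‖P w‖ = ‖w‖ ^ (2/3 : ℝ) := Complex.norm_cpow_real _ _
lemma norm_Q (w : ℂ) : ‖Q w‖ = ‖w‖ ^ (3/2 : ℝ) := Complex.norm_cpow_real _ _

lemma Q_P (w : ℂ) : Q (P w) = w := by
  unfold Q P
  have h1 := Complex.neg_pi_lt_arg w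
  have h2 := Complex.arg_le_pi w
  have h3 := Real.pi_pos
  have : (Complex.log w * ((2/3 : ℝ) : ℂ)).im = w.arg * (2/3) := by
    rw [Complex.im_mul_ofReal, Complex.log_im]
  rw [← Complex.cpow_mul, ← Complex.ofReal_mul]
  · norm_num
  · rw [this]; linarith
  · rw [this]; linarith

lemma P_Q (z : ℂ) (hz : |z.arg| < 2 * Real.pi / 3) : P (Q z) = z := by
  unfold Q P
  rw [abs_lt] at hz
  have h3 := Real.pi_pos
  have : (Complex.log z * ((3/2 : ℝ) : ℂ)).im = z.arg * (3/2) := by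
    rw [Complex.im_mul_ofReal, Complex.log_im]
  rw [← Complex.cpow_mul, ← Complex.ofReal_mul]
  · norm_num
  · rw [this]; linarith
  · rw [this]; linarith

lemma P_Q_of_re (z : ℂ) (hz : 0 < z.re) : P (Q z) = z := by
  apply P_Q
  have := (Complex.abs_arg_lt_pi_div_two_iff).2 (Or.inl hz)
  have h3 := Real.pi_pos
  linarith

lemma Q_sq (z : ℂ) : Q z ^ 2 = z ^ 3 := by
  unfold Q
  rw [← Complex.cpow_nat_mul, ← Complex.cpow_natCast z 3]
  congr 1
  push_cast; norm_num

lemma P_cube (z : ℂ) : P z ^ 3 = z ^ 2 := by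
  unfold P
  rw [← Complex.cpow_nat_mul, ← Complex.cpow_natCast z 2]
  congr 1
  push_cast; norm_num

lemma norm_Q_sq (z : ℂ) : ‖Q z‖ ^ 2 = ‖z‖ ^ 3 := by
  rw [← norm_pow, Q_sq, norm_pow]

lemma P_ne {w : ℂ} (h : w ≠ 0) : P w ≠ 0 := by
  intro h'; apply h; rw [← Q_P w, h', Q_zero]
lemma Q_ne {w : ℂ} (h : w ≠ 0) : Q w ≠ 0 := by
  intro h'; have := Q_sq w; rw [h'] at this; apply h; simpa using this.symm

lemma P_exp {w : ℂ} (hw : w ≠ 0) : P w = Complex.exp (Complex.log w * (2/3)) := by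
  unfold P; rw [Complex.cpow_def_of_ne_zero hw]; push_cast; rfl

lemma P_mul {a b : ℂ} (ha : a ≠ 0) (hb : b ≠ 0)
    (h : a.arg + b.arg ∈ Ioc (-Real.pi) Real.pi) : P (a * b) = P a * P b := by
  rw [P_exp ha, P_exp hb, P_exp (mul_ne_zero ha hb), Complex.log_mul ha hb h, ← Complex.exp_add]
  ring_nf

lemma P_I : P Complex.I = ρ := by
  rw [P_exp Complex.I_ne_zero, Complex.log_I, ρ_exp]; congr 1; push_cast; ring

lemma P_negI : P (-Complex.I) = ρb := by
  rw [P_exp (neg_ne_zero.2 Complex.I_ne_zero), Complex.log_neg_I, ρb_exp]; congr 1; push_cast; ring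

lemma P_I_mul {w : ℂ} (h : w.arg ≤ Real.pi / 2) : P (Complex.I * w) = ρ * P w := by
  rcases eq_or_ne w 0 with rfl | hw
  · simp
  rw [P_mul Complex.I_ne_zero hw, P_I]
  rw [Complex.arg_I]
  have h1 := Complex.neg_pi_lt_arg w
  have := Real.pi_pos
  constructor <;> linarith

lemma P_negI_mul {w : ℂ} (h : -(Real.pi / 2) < w.arg) : P (-Complex.I * w) = ρb * P w := by
  rcases eq_or_ne w 0 with rfl | hw
  · simp
  rw [P_mul (neg_ne_zero.2 Complex.I_ne_zero) hw, P_negI]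
  rw [Complex.arg_neg_I]
  have h1 := Complex.arg_le_pi w
  have := Real.pi_pos
  constructor <;> linarith

lemma re_add_im_lin (z : ℂ) : √3 * z.re - z.im = 2 * ‖z‖ * Real.sin (Real.pi/3 - z.arg) := by
  rw [Real.sin_sub, Real.cos_pi_div_three, Real.sin_pi_div_three]
  have h1 := Complex.norm_mul_cos_arg z
  have h2 := Complex.norm_mul_sin_arg z
  linear_combination (-√3) * h1 + h2

lemma re_add_im_lin' (z : ℂ) : √3 * z.re + z.im = 2 * ‖z‖ * Real.sin (Real.pi/3 + z.arg) := by
  rw [Real.sin_add, Real.cos_pi_div_three, Real.sin_pi_div_three]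
  have h1 := Complex.norm_mul_cos_arg z
  have h2 := Complex.norm_mul_sin_arg z
  linear_combination (-√3) * h1 - h2

lemma mem_T {z : ℂ} : z ∈ T ↔ |z.im| ≤ √3 * z.re := Iff.rfl
lemma T_re {z : ℂ} (h : z ∈ T) : 0 ≤ z.re := by
  have := (abs_nonneg _).trans (mem_T.1 h)
  exact nonneg_of_mul_nonneg_right this s3pos
lemma T_re_pos {z : ℂ} (h : z ∈ T) (h0 : z ≠ 0) : 0 < z.re := by
  rcases (T_re h).lt_or_eq with h1 | h1
  · exact h1
  · exfalso; apply h0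
    rw [mem_T, ← h1] at h
    apply Complex.ext
    · simp [h1.symm]
    · simpa using h

lemma T_arg {z : ℂ} (h : z ∈ T) : |z.arg| ≤ Real.pi / 3 := by
  rcases eq_or_ne z 0 with rfl | h0
  · simp; positivity
  have hre := T_re_pos h h0
  have h1 := abs_lt.1 ((Complex.abs_arg_lt_pi_div_two_iff).2 (Or.inl hre))
  have hn : 0 < ‖z‖ := norm_pos_iff.2 h0
  rw [mem_T, abs_le] at h
  have hp := Real.pi_pos
  rw [abs_le]
  constructor
  · by_contra hc
    have : Real.sin (Real.pi/3 + z.arg) < 0 :=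
      Real.sin_neg_of_neg_of_neg_pi_lt (by linarith) (by linarith)
    have := re_add_im_lin' z
    nlinarith
  · by_contra hc
    have : Real.sin (Real.pi/3 - z.arg) < 0 :=
      Real.sin_neg_of_neg_of_neg_pi_lt (by linarith) (by linarith)
    have := re_add_im_lin z
    nlinarith

lemma T_of_arg {z : ℂ} (h : |z.arg| ≤ Real.pi / 3) : z ∈ T := by
  rw [abs_le] at h
  have hp := Real.pi_pos
  have h1 : 0 ≤ Real.sin (Real.pi/3 + z.arg) :=
    Real.sin_nonneg_of_nonneg_of_le_pi (by linarith) (by linarith)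
  have h2 : 0 ≤ Real.sin (Real.pi/3 - z.arg) :=
    Real.sin_nonneg_of_nonneg_of_le_pi (by linarith) (by linarith)
  have h3 := re_add_im_lin' z
  have h4 := re_add_im_lin z
  rw [mem_T, abs_le]
  constructor
  · have : 0 ≤ 2 * ‖z‖ * Real.sin (Real.pi/3 + z.arg) := by positivity
    linarith
  · have : 0 ≤ 2 * ‖z‖ * Real.sin (Real.pi/3 - z.arg) := by positivity
    linarith

lemma P_Q_T {z : ℂ} (h : z ∈ T) : P (Q z) = z := by
  apply P_Q
  have := T_arg h
  have := Real.pi_pos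
  linarith

lemma arg_P (w : ℂ) : (P w).arg = 2/3 * w.arg := by
  rcases eq_or_ne w 0 with rfl | hw
  · simp
  have h1 := Complex.neg_pi_lt_arg w
  have h2 := Complex.arg_le_pi w
  have h3 := Real.pi_pos
  rw [P_exp hw, Complex.arg_exp]
  have : (Complex.log w * (2/3)).im = 2/3 * w.arg := by
    have : (2/3 : ℂ) = ((2/3 : ℝ) : ℂ) := by push_cast; rfl
    rw [this, Complex.im_mul_ofReal, Complex.log_im]; ring
  rw [this, (toIocMod_eq_self _).2]
  constructor <;> linarith

lemma P_mem_T {w : ℂ} (h : 0 ≤ w.re) : P w ∈ T := by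
  apply T_of_arg
  rw [arg_P, abs_mul]
  have := Complex.abs_arg_le_pi_div_two_iff.2 h
  rw [abs_of_pos (by norm_num : (0:ℝ) < 2/3)]
  linarith

lemma arg_Q_T {z : ℂ} (h : z ∈ T) : (Q z).arg = 3/2 * z.arg := by
  have := arg_P (Q z)
  rw [P_Q_T h] at this
  linarith

lemma Q_re_T {z : ℂ} (h : z ∈ T) : 0 ≤ (Q z).re := by
  rw [← Complex.abs_arg_le_pi_div_two_iff, arg_Q_T h, abs_mul]
  have := T_arg h
  rw [abs_of_pos (by norm_num : (0:ℝ) < 3/2)]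
  linarith

lemma two_re_sq (w : ℂ) : 2 * w.re ^ 2 = ‖w‖ ^ 2 + (w ^ 2).re := by
  rw [Complex.sq_norm, Complex.normSq_apply]; simp [pow_two]; ring
lemma two_im_sq (w : ℂ) : 2 * w.im ^ 2 = ‖w‖ ^ 2 - (w ^ 2).re := by
  rw [Complex.sq_norm, Complex.normSq_apply]; simp [pow_two]; ring

def N0 (y : ℂ) : ℝ := ‖y‖ ^ 3 - (y ^ 3).re
def N1 (y : ℂ) : ℝ := ‖y‖ ^ 3 + (y ^ 3).re

lemma Q_re_sq (z : ℂ) : 2 * (Q z).re ^ 2 = N1 z := by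
  rw [two_re_sq, norm_Q_sq, Q_sq]; rfl
lemma Q_im_sq (z : ℂ) : 2 * (Q z).im ^ 2 = N0 z := by
  rw [two_im_sq, norm_Q_sq, Q_sq]; rfl

lemma N0_ρ (y : ℂ) : N0 (ρ * y) = N1 y := by
  simp [N0, N1, mul_pow, ρ_cube, norm_ρ]
lemma N1_ρ (y : ℂ) : N1 (ρ * y) = N0 y := by
  simp [N0, N1, mul_pow, ρ_cube, norm_ρ]; ring
lemma N0_ρb (y : ℂ) : N0 (ρb * y) = N1 y := by
  simp [N0, N1, mul_pow, ρb_cube, norm_ρb]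
lemma N1_ρb (y : ℂ) : N1 (ρb * y) = N0 y := by
  simp [N0, N1, mul_pow, ρb_cube, norm_ρb]; ring
lemma N_add (y : ℂ) : N0 y + N1 y = 2 * ‖y‖ ^ 3 := by simp [N0, N1]; ring
lemma N0_cont : Continuous N0 := by unfold N0; fun_prop
lemma N1_cont : Continuous N1 := by unfold N1; fun_prop
lemma N0_nonneg (y : ℂ) : 0 ≤ N0 y := by rw [← Q_im_sq]; positivity
lemma N1_nonneg (y : ℂ) : 0 ≤ N1 y := by rw [← Q_re_sq]; positivity

lemma T_boundary {z : ℂ} (h : |z.im| = √3 * z.re) : (Q z).re = 0 := by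
  have h1 : N1 z = 0 := by
    have hz : 0 ≤ z.re := T_re (z := z) h.le
    have h2 : z.im ^ 2 = 3 * z.re ^ 2 := by
      rw [← sq_abs, h, mul_pow, pow_two √3, s3]
    have h3 : ‖z‖ = 2 * z.re := by
      rw [← abs_of_nonneg (norm_nonneg z), ← abs_of_nonneg (by positivity : (0:ℝ) ≤ 2 * z.re)]
      apply abs_eq_abs.2
      apply sq_eq_sq_iff_eq_or_eq_neg.1
      rw [Complex.sq_norm, Complex.normSq_apply]; nlinarith
    unfold N1; rw [h3]; simp [pow_succ]
    linear_combination (-3 * z.re) * h2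
  have := Q_re_sq z
  rw [h1] at this
  nlinarith

lemma Q_ρb_mul {z : ℂ} (h : z ∈ T) (hi : 0 ≤ z.im) : Q (ρb * z) = -Complex.I * Q z := by
  have : ρb * z = P (-Complex.I * Q z) := by
    rw [P_negI_mul, P_Q_T h]
    rw [arg_Q_T h]
    have := Complex.arg_nonneg_iff.2 hi
    have := Real.pi_pos
    linarith
  rw [this, Q_P]

lemma Q_ρ_mul {z : ℂ} (h : z ∈ T) (hi : z.im ≤ 0) : Q (ρ * z) = Complex.I * Q z := by
  have : ρ * z = P (Complex.I * Q z) := by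
    rw [P_I_mul, P_Q_T h]
    rw [arg_Q_T h]
    have h0 := Real.pi_pos
    rcases hi.lt_or_eq with h1 | h1
    · have := Complex.arg_neg_iff.2 h1
      linarith
    · rw [Complex.arg_eq_zero_iff.2 ⟨T_re h, h1⟩]; linarith
  rw [this, Q_P]

lemma T_closed : IsClosed T := by
  unfold T; apply isClosed_le <;> fun_prop

/-- membership of rotated points -/
lemma ρb_mul_T {z : ℂ} (h : z ∈ T) (hi : 0 ≤ z.im) : ρb * z ∈ T := by
  have h1 := s3; have h2 := s3pos; have h3 := T_re h
  rw [mem_T, abs_le] at *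
  simp [ρb]
  constructor <;> nlinarith
lemma ρ_mul_T {z : ℂ} (h : z ∈ T) (hi : z.im ≤ 0) : ρ * z ∈ T := by
  have h1 := s3; have h2 := s3pos; have h3 := T_re h
  rw [mem_T, abs_le] at *
  simp [ρ]
  constructor <;> nlinarith

lemma hasDerivAt_P {w : ℂ} (h : w ∈ Complex.slitPlane) :
    HasDerivAt P ((2/3) * w ^ ((-1/3 : ℝ) : ℂ)) w := by
  have := (hasDerivAt_id w).cpow_const (c := ((2/3 : ℝ) : ℂ)) h
  simp only [id] at this
  convert! this using 1
  push_cast; norm_num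

lemma hasDerivAt_Q {w : ℂ} (h : w ∈ Complex.slitPlane) :
    HasDerivAt Q ((3/2) * w ^ ((1/2 : ℝ) : ℂ)) w := by
  have := (hasDerivAt_id w).cpow_const (c := ((3/2 : ℝ) : ℂ)) h
  simp only [id] at this
  convert! this using 1
  push_cast; norm_num

lemma sqrt_sq (w : ℂ) : (w ^ ((1/2 : ℝ) : ℂ)) ^ 2 = w := by
  rw [← Complex.cpow_nat_mul]; push_cast; norm_num

lemma P_deriv_sq {w : ℂ} (hw : w ≠ 0) : P w * (w ^ ((-1/3 : ℝ) : ℂ)) ^ 2 = 1 := by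
  unfold P
  rw [← Complex.cpow_nat_mul, ← Complex.cpow_add _ _ hw]
  push_cast; norm_num

lemma continuous_P_at_zero : ContinuousAt P 0 := by
  rw [ContinuousAt, P_zero, tendsto_zero_iff_norm_tendsto_zero]
  simp only [norm_P]
  have : ContinuousAt (fun w : ℂ => ‖w‖ ^ (2/3 : ℝ)) 0 :=
    (continuous_norm.continuousAt).rpow_const (Or.inr (by norm_num))
  have h2 := this.tendsto
  simpa using h2
lemma continuous_Q_at_zero : ContinuousAt Q 0 := by
  rw [ContinuousAt, Q_zero, tendsto_zero_iff_norm_tendsto_zero]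
  simp only [norm_Q]
  have : ContinuousAt (fun w : ℂ => ‖w‖ ^ (3/2 : ℝ)) 0 :=
    (continuous_norm.continuousAt).rpow_const (Or.inr (by norm_num))
  have h2 := this.tendsto
  simpa using h2

lemma slit_of_re {w : ℂ} (h : 0 ≤ w.re) (h0 : w ≠ 0) : w ∈ Complex.slitPlane := by
  rw [Complex.mem_slitPlane_iff]
  rcases h.lt_or_eq with h1 | h1
  · exact Or.inl h1
  · right; intro h2; exact h0 (Complex.ext h1.symm h2)

lemma P_continuousAt {w : ℂ} (h : 0 ≤ w.re) : ContinuousAt P w := by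
  rcases eq_or_ne w 0 with rfl | h0
  · exact continuous_P_at_zero
  · exact (hasDerivAt_P (slit_of_re h h0)).continuousAt
lemma Q_continuousAt {w : ℂ} (h : 0 ≤ w.re) : ContinuousAt Q w := by
  rcases eq_or_ne w 0 with rfl | h0
  · exact continuous_Q_at_zero
  · exact (hasDerivAt_Q (slit_of_re h h0)).continuousAt

end SB

namespace SB

structure Good (M R : ℝ) (A : ℂ → ℝ) : Prop where
  hM : 0 ≤ M
  hR : 0 < R
  small : M * R ≤ 1/1000
  lip : ∀ z z', |A z - A z'| ≤ M * ‖z - z'‖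
  zero : A 0 = 0
  out : ∀ z, R ≤ ‖z‖ → A z = 0

variable {M R : ℝ} {A : ℂ → ℝ}

lemma Good.le_norm (g : Good M R A) (z : ℂ) : |A z| ≤ M * ‖z‖ := by
  have := g.lip z 0
  simpa [g.zero] using this

lemma Good.le_MR (g : Good M R A) (z : ℂ) : |A z| ≤ M * R := by
  rcases le_total R ‖z‖ with h | h
  · rw [g.out z h]; simp; exact mul_nonneg g.hM g.hR.le
  · exact (g.le_norm z).trans (mul_le_mul_of_nonneg_left h g.hM)

lemma Good.MR_nonneg (g : Good M R A) : 0 ≤ M * R := mul_nonneg g.hM g.hR.le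

lemma Good.cont (g : Good M R A) : Continuous A := by
  have : LipschitzWith (Real.toNNReal M) A := by
    apply LipschitzWith.of_dist_le_mul
    intro x y
    rw [Real.dist_eq, dist_eq_norm, Real.coe_toNNReal _ g.hM]
    exact g.lip x y
  exact this.continuous

def pt (u v : ℝ) : ℂ := ⟨u, v⟩
@[simp] lemma pt_re (u v : ℝ) : (pt u v).re = u := rfl
@[simp] lemma pt_im (u v : ℝ) : (pt u v).im = v := rfl
lemma pt_eq (u v : ℝ) : pt u v = (u : ℂ) + (v : ℂ) * Complex.I := by
  apply Complex.ext <;> simp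
lemma pt_eta (w : ℂ) : pt w.re w.im = w := rfl
lemma pt_cont : Continuous (fun p : ℝ × ℝ => pt p.1 p.2) := by
  simp only [pt_eq]; fun_prop
lemma le_norm_pt (u v : ℝ) (hu : 0 ≤ u) : u ≤ ‖pt u v‖ := by
  have := Complex.abs_re_le_norm (pt u v)
  rwa [pt_re, abs_of_nonneg hu] at this

lemma P_lip {u v v' : ℝ} (hu : 0 < u) :
    ‖P (pt u v) - P (pt u v')‖ ≤ (2/3) * u ^ (-1/3 : ℝ) * |v - v'| := by
  have key := Convex.norm_image_sub_le_of_norm_hasDerivWithin_le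
    (f := fun v : ℝ => P (pt u v))
    (f' := fun v : ℝ => ((2/3) * (pt u v) ^ ((-1/3 : ℝ) : ℂ)) * Complex.I)
    (C := (2/3) * u ^ (-1/3 : ℝ)) (s := univ) (x := v') (y := v)
    ?_ ?_ convex_univ (mem_univ _) (mem_univ _)
  · simpa [Real.norm_eq_abs] using key
  · intro x _
    apply HasDerivAt.hasDerivWithinAt
    have h1 : HasDerivAt (fun v : ℝ => pt u v) Complex.I x := by
      simp only [pt_eq]
      have := ((Complex.ofRealCLM.hasDerivAt (x := x)).mul_const Complex.I).const_add (u : ℂ)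
      simpa using this
    exact (hasDerivAt_P (Or.inl hu)).comp x h1
  · intro x _
    rw [norm_mul, norm_mul, Complex.norm_I, mul_one, Complex.norm_cpow_real]
    norm_num
    exact Real.rpow_le_rpow_of_nonpos hu (le_norm_pt u x hu.le) (by norm_num)

lemma Good.AP_lip (g : Good M R A) {u v v' : ℝ} (hu : 0 < u) :
    |A (P (pt u v)) - A (P (pt u v'))| ≤ M * ((2/3) * u ^ (-1/3 : ℝ)) * |v - v'| := by
  refine (g.lip _ _).trans ?_
  rw [mul_assoc]
  exact mul_le_mul_of_nonneg_left (P_lip hu) g.hM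

lemma Good.AP_out (g : Good M R A) {u v : ℝ} (hu : 0 ≤ u) (h : R ≤ u ^ (2/3 : ℝ)) :
    A (P (pt u v)) = 0 := by
  apply g.out
  rw [norm_P]
  exact h.trans (Real.rpow_le_rpow hu (le_norm_pt u v hu) (by norm_num))

structure IsSol (A : ℂ → ℝ) (ψ : ℝ → ℝ) : Prop where
  cont : ContinuousOn ψ (Ici 0)
  der : ∀ u, 0 < u → HasDerivAt ψ (A (P (pt u (ψ u)))) u

lemma AP_cont (g : Good M R A) {u v : ℝ} (hu : 0 ≤ u) :
    ContinuousAt (fun p : ℝ × ℝ => A (P (pt p.1 p.2))) (u, v) := by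
  apply g.cont.continuousAt.comp
  exact ContinuousAt.comp (x := (u, v)) (f := fun p : ℝ × ℝ => pt p.1 p.2) (g := P)
    (P_continuousAt (by simpa using hu)) pt_cont.continuousAt

lemma IsSol.deriv0 (g : Good M R A) {ψ : ℝ → ℝ} (h : IsSol A ψ) {u : ℝ} (hu : 0 ≤ u) :
    HasDerivWithinAt ψ (A (P (pt u (ψ u)))) (Ici 0) u := by
  rcases hu.lt_or_eq with h1 | rfl
  · exact (h.der u h1).hasDerivWithinAt
  apply hasDerivWithinAt_Ici_of_tendsto_deriv (s := Ioi 0)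
  · intro x hx
    exact (h.der x hx).differentiableAt.differentiableWithinAt
  · exact (h.cont 0 self_mem_Ici).mono Ioi_subset_Ici_self
  · exact self_mem_nhdsWithin
  · have h2 : Tendsto (fun x => A (P (pt x (ψ x)))) (nhdsWithin 0 (Ioi 0))
        (nhds (A (P (pt 0 (ψ 0))))) := by
      have := (AP_cont g (u := 0) (v := ψ 0) le_rfl).tendsto
      refine this.comp (f := fun x => (x, ψ x)) ?_
      refine Tendsto.prodMk_nhds ?_ ?_
      · exact tendsto_nhdsWithin_of_tendsto_nhds tendsto_id
      · exact (h.cont 0 self_mem_Ici).mono Ioi_subset_Ici_self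
    refine h2.congr' ?_
    filter_upwards [self_mem_nhdsWithin] with x hx
    exact (h.der x hx).deriv.symm

/-- existence in the substituted time -/
lemma exists_sub (g : Good M R A) {S s0 v0 : ℝ} (hs : 0 ≤ s0) (hsS : s0 ≤ S) :
    ∃ Ψ : ℝ → ℝ, Ψ s0 = v0 ∧ ∀ s ∈ Icc 0 S,
      HasDerivWithinAt Ψ (3 * s ^ 2 * A (P (pt (s ^ 3) (Ψ s)))) (Icc 0 S) s := by
  have hS : 0 ≤ S := hs.trans hsS
  have hMR := g.MR_nonneg
  have hM := g.hM
  set L : NNReal := ⟨3 * S ^ 2 * (M * R), by positivity⟩ with hL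
  set K : NNReal := ⟨2 * M * S, by positivity⟩ with hK
  set a : NNReal := ⟨3 * S ^ 2 * (M * R) * S, by positivity⟩ with ha
  have pl : IsPicardLindelof (fun s v => 3 * s ^ 2 * A (P (pt (s ^ 3) v)))
      (tmin := 0) (tmax := S) ⟨s0, hs, hsS⟩ v0 a 0 L K := by
    constructor
    · intro s hs
      apply LipschitzOnWith.of_dist_le_mul
      intro x _ y _
      rw [Real.dist_eq, Real.dist_eq, ← mul_sub, abs_mul]
      rcases hs.1.eq_or_lt with h0 | h0
      · rw [← h0]; simp; positivity
      have h1 := g.AP_lip (u := s ^ 3) (v := x) (v' := y) (by positivity)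
      have h2 : (s ^ 3) ^ (-1/3 : ℝ) = s⁻¹ := by
        rw [← Real.rpow_natCast, ← Real.rpow_mul h0.le]
        norm_num
        rw [Real.rpow_neg_one]
      rw [h2] at h1
      rw [abs_of_nonneg (by positivity : (0:ℝ) ≤ 3 * s ^ 2)]
      calc 3 * s ^ 2 * |A (P (pt (s ^ 3) x)) - A (P (pt (s ^ 3) y))|
          ≤ 3 * s ^ 2 * (M * (2 / 3 * s⁻¹) * |x - y|) := by gcongr
        _ = 2 * M * s * |x - y| := by field_simp
        _ ≤ 2 * M * S * |x - y| := by gcongr; exact hs.2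
    · intro x _
      intro s hs
      apply ContinuousAt.continuousWithinAt
      apply ContinuousAt.mul (by fun_prop)
      exact (AP_cont g (u := s ^ 3) (v := x) (pow_nonneg hs.1 3)).comp
        (f := fun s : ℝ => (s ^ 3, x)) (by fun_prop)
    · intro s hs x _
      rw [Real.norm_eq_abs, abs_mul, abs_of_nonneg (by positivity : (0:ℝ) ≤ 3 * s ^ 2)]
      have := g.le_MR (P (pt (s ^ 3) x))
      have h0 := hs.1
      change _ ≤ 3 * S ^ 2 * (M * R)
      gcongr
      exact hs.2
    · change 3 * S ^ 2 * (M * R) * max (S - s0) (s0 - 0) ≤ 3 * S ^ 2 * (M * R) * S - 0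
      rw [sub_zero, sub_zero]
      gcongr
      exact max_le (by linarith) hsS
  exact pl.exists_eq_forall_mem_Icc_hasDerivWithinAt₀

lemma exists_sol (g : Good M R A) {u0 v0 : ℝ} (hu : 0 ≤ u0) :
    ∃ ψ, IsSol A ψ ∧ ψ u0 = v0 := by
  set s0 := u0 ^ (1/3 : ℝ) with hs0
  have hs0' : 0 ≤ s0 := by positivity
  set S := max (√R) s0 + 1 with hS
  have hS1 : √R < S := by have := le_max_left (√R) s0; linarith
  have hS2 : s0 < S := by have := le_max_right (√R) s0; linarith
  obtain ⟨Ψ, h0, h1⟩ := exists_sub g (v0 := v0) hs0' hS2.le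
  have hcub : ∀ u : ℝ, 0 ≤ u → (u ^ (1/3 : ℝ)) ^ 3 = u := by
    intro u hu
    rw [← Real.rpow_natCast, ← Real.rpow_mul hu]; norm_num
  have hsq : ∀ u : ℝ, 0 ≤ u → (u ^ (1/3 : ℝ)) ^ 2 = u ^ (2/3 : ℝ) := by
    intro u hu
    rw [← Real.rpow_natCast, ← Real.rpow_mul hu]; norm_num
  have hzero : ∀ s ∈ Icc (√R) S, ∀ v, A (P (pt (s ^ 3) v)) = 0 := by
    intro s hs v
    have hs' : 0 ≤ s := (Real.sqrt_nonneg R).trans hs.1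
    apply g.AP_out (by positivity)
    rw [← Real.rpow_natCast, ← Real.rpow_mul hs']
    norm_num
    have := Real.sq_sqrt g.hR.le
    have := Real.sqrt_nonneg R
    nlinarith [hs.1]
  have hconst : ∀ s ∈ Icc (√R) S, Ψ s = Ψ (√R) := by
    apply constant_of_has_deriv_right_zero
    · intro s hs
      exact ((h1 s ⟨(Real.sqrt_nonneg R).trans hs.1, hs.2⟩).continuousWithinAt).mono
        (Icc_subset_Icc_left (Real.sqrt_nonneg R))
    · intro s hs
      have h2 := h1 s ⟨(Real.sqrt_nonneg R).trans hs.1, hs.2.le⟩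
      rw [hzero s ⟨hs.1, hs.2.le⟩, mul_zero] at h2
      have h3 : HasDerivWithinAt Ψ 0 (Icc s S) s :=
        h2.mono (Icc_subset_Icc_left ((Real.sqrt_nonneg R).trans hs.1))
      exact h3.mono_of_mem_nhdsWithin (Icc_mem_nhdsGE hs.2)
  refine ⟨fun u => Ψ (min (u ^ (1/3 : ℝ)) S), ⟨?_, ?_⟩, ?_⟩
  · have hΨ : ContinuousOn Ψ (Icc 0 S) := fun s hs => (h1 s hs).continuousWithinAt
    apply hΨ.comp
    · exact ((Real.continuous_rpow_const (by norm_num)).min continuous_const).continuousOn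
    · intro u hu
      exact ⟨le_min (Real.rpow_nonneg hu _) (by linarith), min_le_right _ _⟩
  · intro u hu
    have hpos : 0 < u ^ (1/3 : ℝ) := by positivity
    have hc : ContinuousAt (fun u : ℝ => u ^ (1/3 : ℝ)) u :=
      (Real.continuous_rpow_const (by norm_num)).continuousAt
    rcases lt_or_ge (u ^ (1/3 : ℝ)) S with hlt | hge
    · rw [min_eq_left hlt.le]
      have h2 := (h1 _ ⟨hpos.le, hlt.le⟩).hasDerivAt (Icc_mem_nhds hpos hlt)
      have h3 : HasDerivAt (fun u : ℝ => u ^ (1/3 : ℝ)) ((1/3) * u ^ ((1/3 : ℝ) - 1)) u :=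
        Real.hasDerivAt_rpow_const (Or.inl hu.ne')
      have h4 := h2.comp u h3
      rw [hcub u hu.le] at h4
      have h5 : HasDerivAt (Ψ ∘ fun u : ℝ => u ^ (1/3 : ℝ))
          (A (P (pt u (Ψ (u ^ (1/3 : ℝ)))))) u := by
        convert! h4 using 1
        have : (u ^ (1/3 : ℝ)) ^ 2 * u ^ ((1/3 : ℝ) - 1) = 1 := by
          rw [hsq u hu.le, ← Real.rpow_add hu]; norm_num
        linear_combination (-A (P (pt u (Ψ (u ^ (1/3 : ℝ)))))) * this
      apply h5.congr_of_eventuallyEq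
      filter_upwards [hc.eventually_lt continuousAt_const hlt] with x hx
      change Ψ (min (x ^ (1/3 : ℝ)) S) = Ψ (x ^ (1/3 : ℝ))
      rw [min_eq_left (le_of_lt hx)]
    · have hgt : √R < u ^ (1/3 : ℝ) := hS1.trans_le hge
      rw [g.AP_out hu.le]
      · apply (hasDerivAt_const u (Ψ (√R))).congr_of_eventuallyEq
        filter_upwards [continuousAt_const.eventually_lt hc hgt] with x hx
        apply hconst
        exact ⟨le_min (le_of_lt hx) hS1.le, min_le_right _ _⟩
      · rw [← hsq u hu.le]
        have := Real.sq_sqrt g.hR.le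
        have := Real.sqrt_nonneg R
        nlinarith
  · change Ψ (min (u0 ^ (1/3 : ℝ)) S) = v0
    rw [min_eq_left hS2.le, h0]

/-- one sided comparison -/
lemma decay_aux {f f' : ℝ → ℝ} {C U0 : ℝ} (hf : ContinuousOn f (Ici 0))
    (hd : ∀ u, 0 < u → HasDerivAt f (f' u) u)
    (hb : ∀ u, 0 < u → u < U0 → f' u ≤ C * ((2/3) * u ^ (-1/3 : ℝ))) :
    AntitoneOn (fun u => f u - C * u ^ (2/3 : ℝ)) (Icc 0 U0) := by
  have hder : ∀ u, 0 < u → HasDerivAt (fun u => f u - C * u ^ (2/3 : ℝ))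
      (f' u - C * ((2/3) * u ^ (-1/3 : ℝ))) u := by
    intro u hu
    have h3 : HasDerivAt (fun u : ℝ => u ^ (2/3 : ℝ)) ((2/3) * u ^ ((2/3 : ℝ) - 1)) u :=
      Real.hasDerivAt_rpow_const (Or.inl hu.ne')
    have h4 := (hd u hu).sub (h3.const_mul C)
    norm_num at h4 ⊢
    exact h4
  apply antitoneOn_of_deriv_nonpos (convex_Icc 0 U0)
  · apply ContinuousOn.sub
    · exact hf.mono (fun x hx => hx.1)
    · exact (continuous_const.mul (Real.continuous_rpow_const (by norm_num))).continuousOn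
  · intro u hu
    rw [interior_Icc] at hu
    exact (hder u hu.1).differentiableAt.differentiableWithinAt
  · intro u hu
    rw [interior_Icc] at hu
    rw [(hder u hu.1).deriv]
    linarith [hb u hu.1 hu.2]

lemma decay {f f' : ℝ → ℝ} {C R : ℝ} (hR : 0 < R) (hC : 0 ≤ C) (hf : ContinuousOn f (Ici 0))
    (hd : ∀ u, 0 < u → HasDerivAt f (f' u) u)
    (hb : ∀ u, 0 < u → u < R ^ (3/2 : ℝ) → |f' u| ≤ C * ((2/3) * u ^ (-1/3 : ℝ)))
    {u u' : ℝ} (hu : u ∈ Icc 0 (R ^ (3/2 : ℝ))) (hu' : u' ∈ Icc 0 (R ^ (3/2 : ℝ))) :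
    |f u - f u'| ≤ C * R := by
  have hRR : (R ^ (3/2 : ℝ)) ^ (2/3 : ℝ) = R := by
    rw [← Real.rpow_mul hR.le]; norm_num
  have h1 := decay_aux (U0 := R ^ (3/2 : ℝ)) (C := C) hf hd
    (fun u hu hu' => (le_abs_self _).trans (hb u hu hu'))
  have h2 := decay_aux (f := fun u => - f u) (f' := fun u => - f' u) (U0 := R ^ (3/2 : ℝ)) (C := C)
    hf.neg (fun u hu => (hd u hu).neg)
    (fun u hu hu' => (neg_le_abs _).trans (hb u hu hu'))
  wlog h : u ≤ u' generalizing u u'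
  · rw [abs_sub_comm]; exact this hu' hu (le_of_not_ge h)
  have h3 := h1 hu hu' h
  have h4 := h2 hu hu' h
  simp only at h3 h4
  have h5 : u' ^ (2/3 : ℝ) ≤ R := by
    rw [← hRR]; exact Real.rpow_le_rpow hu'.1 hu'.2 (by norm_num)
  have h6 : 0 ≤ u ^ (2/3 : ℝ) := Real.rpow_nonneg hu.1 _
  have h7 : C * u' ^ (2/3 : ℝ) ≤ C * R := mul_le_mul_of_nonneg_left h5 hC
  have h8 : 0 ≤ C * u ^ (2/3 : ℝ) := mul_nonneg hC h6
  rw [abs_le]; constructor <;> linarith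

lemma const_out {f f' : ℝ → ℝ} {U0 : ℝ} (hU : 0 < U0)
    (hd : ∀ u, 0 < u → HasDerivAt f (f' u) u)
    (hb : ∀ u, U0 ≤ u → f' u = 0) {u : ℝ} : f u = f (min u U0) := by
  rcases le_total u U0 with h | h
  · rw [min_eq_left h]
  rw [min_eq_right h]
  apply constant_of_has_deriv_right_zero (a := U0) (b := u)
  · intro x hx; exact (hd x (hU.trans_le hx.1)).continuousAt.continuousWithinAt
  · intro x hx
    have := (hd x (hU.trans_le hx.1))
    rw [hb x hx.1] at this
    exact this.hasDerivWithinAt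
  · exact ⟨h, le_rfl⟩

/-- S2 -/
lemma IsSol.diff (g : Good M R A) {ψ χ : ℝ → ℝ} (h1 : IsSol A ψ) (h2 : IsSol A χ) {u u' : ℝ}
    (hu : 0 ≤ u) (hu' : 0 ≤ u') :
    |(ψ u - χ u) - (ψ u' - χ u')| ≤ 2 * (M * R) * |ψ u' - χ u'| := by
  set U0 := R ^ (3/2 : ℝ) with hU0
  have hU : 0 < U0 := Real.rpow_pos_of_pos g.hR _
  set d := fun u => ψ u - χ u with hd
  have hdc : ContinuousOn d (Ici 0) := h1.cont.sub h2.cont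
  have hder : ∀ u, 0 < u → HasDerivAt d (A (P (pt u (ψ u))) - A (P (pt u (χ u)))) u :=
    fun u hu => (h1.der u hu).sub (h2.der u hu)
  have hRR : U0 ^ (2/3 : ℝ) = R := by
    rw [← Real.rpow_mul g.hR.le]; norm_num
  have hout : ∀ u, d u = d (min u U0) := by
    intro u
    apply const_out hU hder
    intro u hu
    have : R ≤ u ^ (2/3 : ℝ) := by rw [← hRR]; exact Real.rpow_le_rpow hU.le hu (by norm_num)
    rw [g.AP_out (hU.le.trans hu) this, g.AP_out (hU.le.trans hu) this, sub_zero]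
  obtain ⟨m, hm, hmax⟩ := isCompact_Icc.exists_isMaxOn (nonempty_Icc.2 hU.le)
    ((hdc.mono (fun x hx => hx.1 : Icc 0 U0 ⊆ Ici 0)).abs)
  have hbd : ∀ x ∈ Icc 0 U0, |d x| ≤ |d m| := fun x hx => hmax hx
  have key : ∀ x ∈ Icc 0 U0, ∀ y ∈ Icc 0 U0, |d x - d y| ≤ (M * |d m|) * R := by
    intro x hx y hy
    apply decay g.hR (mul_nonneg g.hM (abs_nonneg _)) hdc hder _ hx hy
    intro u hu hlt
    refine (g.AP_lip hu).trans ?_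
    have h3 := hbd u ⟨hu.le, hlt.le⟩
    have h4 : 0 ≤ M * (2 / 3 * u ^ (-1 / 3 : ℝ)) := by
      have := g.hM; positivity
    calc _ ≤ M * (2 / 3 * u ^ (-1 / 3 : ℝ)) * |d m| := mul_le_mul_of_nonneg_left h3 h4
      _ = _ := by ring
  have hmem : ∀ x, 0 ≤ x → min x U0 ∈ Icc 0 U0 := fun x hx => ⟨le_min hx hU.le, min_le_right _ _⟩
  change |d u - d u'| ≤ 2 * (M * R) * |d u'|
  rw [hout u, hout u']
  have k1 := key _ (hmem u hu) _ (hmem u' hu')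
  have k2 := key _ hm _ (hmem u' hu')
  have k3 : |d m| ≤ |d (min u' U0)| + |d m - d (min u' U0)| := by
    have := abs_add_le (d (min u' U0)) (d m - d (min u' U0))
    simpa using this
  have hs := g.small
  have h0 := g.MR_nonneg
  have k4 : |d m| ≤ 2 * |d (min u' U0)| := by nlinarith [abs_nonneg (d m)]
  calc _ ≤ (M * |d m|) * R := k1
    _ = (M * R) * |d m| := by ring
    _ ≤ (M * R) * (2 * |d (min u' U0)|) := mul_le_mul_of_nonneg_left k4 h0
    _ = _ := by ring

lemma IsSol.unique (g : Good M R A) {ψ χ : ℝ → ℝ} (h1 : IsSol A ψ) (h2 : IsSol A χ) {u u' : ℝ}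
    (hu : 0 ≤ u) (hu' : 0 ≤ u') (h : ψ u' = χ u') : ψ u = χ u := by
  have := h1.diff g h2 hu hu'
  rw [h, sub_self, abs_zero, mul_zero, sub_zero] at this
  exact sub_eq_zero.1 (abs_eq_zero.1 (le_antisymm this (abs_nonneg _)))

lemma IsSol.lip_of {ψ : ℝ → ℝ} (h1 : IsSol A ψ) {C b : ℝ}
    (hC : ∀ u, 0 < u → u < b → |A (P (pt u (ψ u)))| ≤ C) {u u' : ℝ}
    (hu : u ∈ Icc 0 b) (hu' : u' ∈ Icc 0 b) :
    |ψ u - ψ u'| ≤ C * |u - u'| := by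
  wlog h : u' ≤ u generalizing u u'
  · rw [abs_sub_comm, abs_sub_comm u]; exact this hu' hu (le_of_not_ge h)
  rcases h.lt_or_eq with h | rfl
  · obtain ⟨c, hc, hcc⟩ := exists_hasDerivAt_eq_slope ψ (fun u => A (P (pt u (ψ u)))) h
      (h1.cont.mono (fun x hx => hu'.1.trans hx.1))
      (fun x hx => h1.der x (hu'.1.trans_lt hx.1))
    have h2 := hC c (hu'.1.trans_lt hc.1) (hc.2.trans_le hu.2)
    rw [hcc, abs_div] at h2
    have h3 : 0 < |u - u'| := abs_pos.2 (sub_pos.2 h).ne'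
    rwa [div_le_iff₀ h3] at h2
  · simp

lemma IsSol.lip (g : Good M R A) {ψ : ℝ → ℝ} (h1 : IsSol A ψ) {u u' : ℝ}
    (hu : 0 ≤ u) (hu' : 0 ≤ u') : |ψ u - ψ u'| ≤ M * R * |u - u'| :=
  h1.lip_of (b := max u u') (fun _ _ _ => g.le_MR _) ⟨hu, le_max_left _ _⟩ ⟨hu', le_max_right _ _⟩

open Classical in
def sol (A : ℂ → ℝ) (w : ℂ) : ℝ → ℝ :=
  if h : ∃ ψ, IsSol A ψ ∧ ψ w.re = w.im then h.choose else fun _ => 0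

lemma sol_spec (g : Good M R A) {w : ℂ} (hw : 0 ≤ w.re) :
    IsSol A (sol A w) ∧ sol A w w.re = w.im := by
  have h := exists_sol g (v0 := w.im) hw
  unfold sol; rw [dif_pos h]; exact h.choose_spec

def Φ (A : ℂ → ℝ) (w : ℂ) : ℝ := sol A w 0
def φ (A : ℂ → ℝ) (w : ℂ) : ℝ := Φ A w - w.im

lemma Φ_sol (g : Good M R A) {ψ : ℝ → ℝ} (h : IsSol A ψ) {u : ℝ} (hu : 0 ≤ u) :
    Φ A (pt u (ψ u)) = ψ 0 := by
  have := sol_spec g (w := pt u (ψ u)) hu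
  exact this.1.unique g h le_rfl hu this.2

lemma Φ_re_zero (g : Good M R A) {w : ℂ} (h : w.re = 0) : Φ A w = w.im := by
  have := (sol_spec g (w := w) h.ge).2
  rwa [h] at this

lemma Φ_near (g : Good M R A) {ψ : ℝ → ℝ} (h : IsSol A ψ) {w : ℂ} (hw : 0 ≤ w.re) :
    |Φ A w - ψ 0| ≤ 2 * |w.im - ψ w.re| := by
  have h1 := sol_spec g hw
  have h2 := h1.1.diff g h le_rfl hw
  rw [h1.2] at h2
  have h3 := g.small
  have h4 : |Φ A w - ψ 0| ≤ |w.im - ψ w.re| + |(sol A w 0 - ψ 0) - (w.im - ψ w.re)| := by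
    have := abs_add_le (w.im - ψ w.re) ((sol A w 0 - ψ 0) - (w.im - ψ w.re))
    rwa [add_sub_cancel] at this
  nlinarith [abs_nonneg (w.im - ψ w.re)]

lemma φ_le (g : Good M R A) {w : ℂ} (hw : 0 ≤ w.re) : |φ A w| ≤ M * R * w.re := by
  have h1 := sol_spec g hw
  have h2 := h1.1.lip g le_rfl hw
  rw [h1.2, zero_sub, abs_neg, abs_of_nonneg hw] at h2
  exact h2

lemma φ_lip (g : Good M R A) {w w' : ℂ} (hw : 0 ≤ w.re) (hw' : 0 ≤ w'.re) :
    |φ A w - φ A w'| ≤ 4 * (M * R) * ‖w - w'‖ := by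
  have h1 := sol_spec g hw
  have h2 := sol_spec g hw'
  set d := fun u => sol A w u - sol A w' u with hd
  have k1 := h1.1.diff g h2.1 le_rfl hw
  have k2 := h2.1.lip g hw' hw
  rw [h2.2] at k2
  rw [h1.2] at k1
  have e : φ A w - φ A w' = ((sol A w 0 - sol A w' 0) - (w.im - sol A w' w.re))
      - (sol A w' w.re - w'.im) - (w.im - w.im) + (w.im - w.im) := by
    unfold φ Φ; ring_nf
  have e2 : φ A w - φ A w' = ((sol A w 0 - sol A w' 0) - (w.im - sol A w' w.re))
      + (w'.im - sol A w' w.re) := by rw [e]; ring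
  have n1 : |w.re - w'.re| ≤ ‖w - w'‖ := by
    simpa using Complex.abs_re_le_norm (w - w')
  have n2 : |w.im - w'.im| ≤ ‖w - w'‖ := by
    simpa using Complex.abs_im_le_norm (w - w')
  have hs := g.small
  have h0 := g.MR_nonneg
  rw [abs_sub_comm w'.re] at k2
  have k3 : |w'.im - sol A w' w.re| ≤ M * R * ‖w - w'‖ := k2.trans (by gcongr)
  have k4 : |w.im - sol A w' w.re| ≤ (1 + M * R) * ‖w - w'‖ := by
    calc |w.im - sol A w' w.re| = |(w.im - w'.im) + (w'.im - sol A w' w.re)| := by ring_nf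
      _ ≤ |w.im - w'.im| + |w'.im - sol A w' w.re| := abs_add_le _ _
      _ ≤ _ := by linarith
  rw [e2]
  calc _ ≤ 2 * (M * R) * |w.im - sol A w' w.re| + M * R * ‖w - w'‖ :=
        (abs_add_le _ _).trans (add_le_add k1 k3)
    _ ≤ 2 * (M * R) * ((1 + M * R) * ‖w - w'‖) + M * R * ‖w - w'‖ := by gcongr
    _ ≤ _ := by nlinarith [mul_nonneg h0 (norm_nonneg (w - w'))]

lemma φ_small (g : Good M R A) {w : ℂ} (hw : 0 ≤ w.re) :
    |φ A w| ≤ M * (3 * ‖w‖) ^ (2/3 : ℝ) * ‖w‖ := by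
  have h1 := sol_spec g hw
  have h3 : w.re ≤ ‖w‖ := by
    have := Complex.abs_re_le_norm w; rwa [abs_of_nonneg hw] at this
  have h4 := Complex.abs_im_le_norm w
  have hs := g.small
  have h0 := g.MR_nonneg
  have h2 := h1.1.lip_of (b := w.re) (C := M * (3 * ‖w‖) ^ (2/3 : ℝ)) ?_
    ⟨le_rfl, hw⟩ ⟨hw, le_rfl⟩
  · rw [h1.2, zero_sub, abs_neg, abs_of_nonneg hw] at h2
    refine h2.trans ?_
    have := g.hM
    gcongr
  · intro u hu hub
    refine (g.le_norm _).trans ?_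
    rw [norm_P]
    have := g.hM
    gcongr
    have k := h1.1.lip g hu.le hw
    rw [h1.2] at k
    have k2 : |sol A w u| ≤ 2 * ‖w‖ := by
      have : |sol A w u| ≤ |sol A w u - w.im| + |w.im| := by
        simpa using abs_add_le (sol A w u - w.im) w.im
      have k3 : |u - w.re| ≤ ‖w‖ := by rw [abs_le]; constructor <;> linarith
      nlinarith [norm_nonneg w]
    refine (Complex.norm_le_abs_re_add_abs_im _).trans ?_
    simp only [pt_re, pt_im]
    rw [abs_of_pos hu]
    linarith

end SB

namespace SB

variable {M R : ℝ} {A B : ℂ → ℝ}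

open Classical in
def τ (A : ℂ → ℝ) (z : ℂ) : ℂ := if z ∈ T then Complex.I * (φ A (Q z) : ℂ) / Q z else 0

lemma τ_zero (A : ℂ → ℝ) : τ A 0 = 0 := by simp [τ]
lemma τ_out {z : ℂ} (h : z ∉ T) : τ A z = 0 := by simp [τ, h]
lemma τ_in {z : ℂ} (h : z ∈ T) : τ A z = Complex.I * (φ A (Q z) : ℂ) / Q z := by simp [τ, h]

lemma norm_τ_in {z : ℂ} (h : z ∈ T) : ‖τ A z‖ = |φ A (Q z)| / ‖Q z‖ := by
  rw [τ_in h]; simp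

lemma re_le_norm' (w : ℂ) : w.re ≤ ‖w‖ := (le_abs_self _).trans (Complex.abs_re_le_norm w)

lemma τ_le (g : Good M R A) (z : ℂ) : ‖τ A z‖ ≤ M * R := by
  by_cases h : z ∈ T
  · rw [norm_τ_in h]
    apply div_le_of_le_mul₀ (norm_nonneg _) g.MR_nonneg
    exact (φ_le g (Q_re_T h)).trans (mul_le_mul_of_nonneg_left (re_le_norm' _) g.MR_nonneg)
  · rw [τ_out h]; simpa using g.MR_nonneg

lemma τ_small (g : Good M R A) (z : ℂ) : ‖τ A z‖ ≤ 3 * M * ‖z‖ := by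
  have hM := g.hM
  by_cases h : z ∈ T
  · rw [norm_τ_in h]
    apply div_le_of_le_mul₀ (norm_nonneg _) (by positivity)
    refine (φ_small g (Q_re_T h)).trans ?_
    refine mul_le_mul_of_nonneg_right ?_ (norm_nonneg _)
    rw [Real.mul_rpow (by norm_num) (norm_nonneg _), norm_Q, ← Real.rpow_mul (norm_nonneg _)]
    norm_num
    have : (3 : ℝ) ^ (2/3 : ℝ) ≤ 3 := by
      conv_rhs => rw [← Real.rpow_one 3]
      exact Real.rpow_le_rpow_of_exponent_le (by norm_num) (by norm_num)
    calc M * (3 ^ (2/3 : ℝ) * ‖z‖) ≤ M * (3 * ‖z‖) := by gcongr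
      _ = _ := by ring
  · rw [τ_out h]; simpa using (by positivity)

lemma τ_bdry (g : Good M R A) {z : ℂ} (h : |z.im| = √3 * z.re) : τ A z = 0 := by
  have h1 : z ∈ T := h.le
  have h2 := T_boundary h
  have h3 := φ_le g h2.ge
  rw [h2, mul_zero] at h3
  rw [τ_in h1, abs_eq_zero.1 (le_antisymm h3 (abs_nonneg _))]; simp

lemma Q_lip {r : ℝ} {z z' : ℂ} (h : 0 < z.re) (h' : 0 < z'.re) (hz : ‖z‖ ≤ r) (hz' : ‖z'‖ ≤ r) :
    ‖Q z - Q z'‖ ≤ (3/2) * r ^ (1/2 : ℝ) * ‖z - z'‖ := by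
  have hconv : Convex ℝ ({z : ℂ | 0 < z.re} ∩ Metric.closedBall 0 r) :=
    (convex_halfSpace_re_gt 0).inter (convex_closedBall _ _)
  apply Convex.norm_image_sub_le_of_norm_hasDerivWithin_le (𝕜 := ℂ)
    (f' := fun w => (3/2) * w ^ ((1/2 : ℝ) : ℂ)) _ _ hconv ⟨h', by simpa using hz'⟩
    ⟨h, by simpa using hz⟩
  · intro x hx
    exact (hasDerivAt_Q (Or.inl hx.1)).hasDerivWithinAt
  · intro x hx
    rw [norm_mul, Complex.norm_cpow_real]
    norm_num
    have := hx.2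
    rw [mem_closedBall_zero_iff] at this
    exact Real.rpow_le_rpow (norm_nonneg _) this (by norm_num)

lemma τ_lip_T1 (g : Good M R A) {z z' : ℂ} (h : z ∈ T) (h' : z' ∈ T) (h0 : z ≠ 0) (h0' : z' ≠ 0)
    (hle : ‖z'‖ ≤ ‖z‖) : ‖τ A z - τ A z'‖ * ‖z‖ ≤ 7.5 * (M * R) * ‖z - z'‖ := by
  have hQ := Q_lip (T_re_pos h h0) (T_re_pos h' h0') le_rfl hle
  have hw := Q_ne h0
  have hw' := Q_ne h0'
  have hMR := g.MR_nonneg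
  have e : τ A z - τ A z' = Complex.I * ((φ A (Q z) - φ A (Q z') : ℝ) : ℂ) / Q z
      + Complex.I * (φ A (Q z') : ℂ) / Q z' * ((Q z' - Q z) / Q z) := by
    rw [τ_in h, τ_in h']; push_cast; field_simp; ring
  have b1 := φ_lip g (Q_re_T h) (Q_re_T h')
  have b2 := τ_le g z'
  rw [τ_in h'] at b2
  have hpos : 0 < ‖Q z‖ := norm_pos_iff.2 hw
  have b3 : ‖τ A z - τ A z'‖ ≤ 5 * (M * R) * ‖Q z - Q z'‖ / ‖Q z‖ := by
    rw [e]
    refine (norm_add_le _ _).trans ?_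
    rw [norm_mul _ (_ / Q z), norm_div _ (Q z), norm_div _ (Q z), norm_mul _ ((_ : ℝ) : ℂ), Complex.norm_I, one_mul, Complex.norm_real,
      Real.norm_eq_abs, norm_sub_rev (Q z')]
    calc _ ≤ 4 * (M * R) * ‖Q z - Q z'‖ / ‖Q z‖ + (M * R) * (‖Q z - Q z'‖ / ‖Q z‖) := by gcongr
      _ = _ := by ring
  have hzp : 0 < ‖z‖ := norm_pos_iff.2 h0
  have hn : ‖Q z‖ = ‖z‖ ^ (1/2 : ℝ) * ‖z‖ := by
    rw [norm_Q]
    nth_rw 3 [← Real.rpow_one ‖z‖]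
    rw [← Real.rpow_add hzp]; norm_num
  calc _ ≤ 5 * (M * R) * ‖Q z - Q z'‖ / ‖Q z‖ * ‖z‖ := by gcongr
    _ ≤ 5 * (M * R) * ((3/2) * ‖z‖ ^ (1/2 : ℝ) * ‖z - z'‖) / ‖Q z‖ * ‖z‖ := by gcongr
    _ = _ := by
      rw [hn]
      have : 0 < ‖z‖ ^ (1/2 : ℝ) := by positivity
      field_simp; ring

lemma τ_lip_T (g : Good M R A) {z z' : ℂ} (h : z ∈ T) (h' : z' ∈ T) :
    ‖τ A z - τ A z'‖ * ‖z‖ ≤ 7.5 * (M * R) * ‖z - z'‖ := by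
  have hMR := g.MR_nonneg
  rcases eq_or_ne z 0 with rfl | h0
  · simp; positivity
  rcases eq_or_ne z' 0 with rfl | h0'
  · rw [τ_zero, sub_zero, sub_zero]
    have := τ_le g z
    nlinarith [norm_nonneg z]
  rcases le_total ‖z'‖ ‖z‖ with hle | hle
  · exact τ_lip_T1 g h h' h0 h0' hle
  · have := τ_lip_T1 g h' h h0' h0 hle
    rw [norm_sub_rev, norm_sub_rev z]
    exact (mul_le_mul_of_nonneg_left hle (norm_nonneg _)).trans this

lemma crossing {z z' : ℂ} (h : z ∈ T) (h' : z' ∉ T) :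
    ∃ p : ℂ, |p.im| = √3 * p.re ∧ ‖z - p‖ ≤ ‖z - z'‖ := by
  have hc : ContinuousOn (fun t : ℝ => √3 * (AffineMap.lineMap z z' t : ℂ).re -
      |(AffineMap.lineMap z z' t : ℂ).im|) (Icc 0 1) := by
    apply Continuous.continuousOn
    have : Continuous (fun t : ℝ => (AffineMap.lineMap z z' t : ℂ)) := AffineMap.lineMap_continuous
    fun_prop
  obtain ⟨t, ht, hz⟩ := intermediate_value_Icc' zero_le_one hc (show (0:ℝ) ∈ _ from by
    constructor
    · simp only [AffineMap.lineMap_apply_one]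
      rw [mem_T] at h'; linarith
    · simp only [AffineMap.lineMap_apply_zero]
      rw [mem_T] at h; linarith)
  refine ⟨AffineMap.lineMap z z' t, by simp only at hz; linarith, ?_⟩
  rw [← dist_eq_norm, ← dist_eq_norm, dist_comm, dist_lineMap_left, Real.norm_eq_abs,
    abs_of_nonneg ht.1]
  nlinarith [ht.2, dist_nonneg (x := z) (y := z')]

lemma τ_lip (g : Good M R A) (z z' : ℂ) :
    ‖τ A z - τ A z'‖ * ‖z‖ ≤ 9 * (M * R) * ‖z - z'‖ := by
  have hMR := g.MR_nonneg
  have key : ∀ {z z' : ℂ}, z ∈ T → z' ∉ T → ‖τ A z‖ * ‖z‖ ≤ 7.5 * (M * R) * ‖z - z'‖ := by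
    intro z z' h h'
    obtain ⟨p, hp, hpn⟩ := crossing h h'
    have := τ_lip_T g h (show p ∈ T from hp.le)
    rw [τ_bdry g hp, sub_zero] at this
    exact this.trans (by gcongr)
  have hn := mul_nonneg hMR (norm_nonneg (z - z'))
  by_cases h : z ∈ T <;> by_cases h' : z' ∈ T
  · have := τ_lip_T g h h'
    linarith
  · rw [τ_out h', sub_zero]
    have := key h h'
    linarith
  · rw [τ_out h, zero_sub, norm_neg]
    have k := key h' h
    have b := τ_le g z'
    rw [norm_sub_rev] at k
    have : ‖z‖ ≤ ‖z'‖ + ‖z - z'‖ := by simpa using norm_add_le z' (z - z')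
    calc _ ≤ ‖τ A z'‖ * (‖z'‖ + ‖z - z'‖) := by gcongr
      _ = ‖τ A z'‖ * ‖z'‖ + ‖τ A z'‖ * ‖z - z'‖ := by ring
      _ ≤ 7.5 * (M * R) * ‖z - z'‖ + (M * R) * ‖z - z'‖ := by gcongr
      _ ≤ _ := by linarith
  · rw [τ_out h, τ_out h']; simp; positivity

structure GoodP (M R : ℝ) (A B : ℂ → ℝ) : Prop where
  a : Good M R A
  b : Good M R B

def rot (A : ℂ → ℝ) : ℂ → ℝ := fun z => A (ρ * z)

def e (A B : ℂ → ℝ) (j : ℕ) : ℂ → ℝ := fun z => if Even j then A (ρ ^ j * z) else B (ρ ^ j * z)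

lemma good_comp (g : Good M R A) {c : ℂ} (hc : ‖c‖ = 1) : Good M R (fun z => A (c * z)) where
  hM := g.hM
  hR := g.hR
  small := g.small
  lip z z' := by
    have := g.lip (c * z) (c * z')
    rwa [← mul_sub, norm_mul, hc, one_mul] at this
  zero := by simp [g.zero]
  out z h := g.out _ (by rwa [norm_mul, hc, one_mul])

lemma norm_ρ_pow (j : ℕ) : ‖ρ ^ j‖ = 1 := by simp [norm_ρ]
lemma norm_ρb_pow (j : ℕ) : ‖ρb ^ j‖ = 1 := by simp [norm_ρb]

lemma GoodP.rot (g : GoodP M R A B) : GoodP M R (rot B) (rot A) :=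
  ⟨good_comp g.b norm_ρ, good_comp g.a norm_ρ⟩

lemma GoodP.e (g : GoodP M R A B) (j : ℕ) : Good M R (e A B j) := by
  unfold SB.e
  by_cases h : Even j
  · simp only [h, if_true]; exact good_comp g.a (norm_ρ_pow j)
  · simp only [h, if_false]; exact good_comp g.b (norm_ρ_pow j)

lemma e_zero : e A B 0 = A := by funext z; simp [e]
lemma e_rot (j : ℕ) : e (rot B) (rot A) j = e A B (j + 1) := by
  funext z
  simp only [e, rot, Nat.even_add_one]
  by_cases h : Even j <;> simp [h, pow_succ', mul_assoc]
lemma ρ_six : ρ ^ 6 = 1 := by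
  have : ρ ^ 6 = (ρ ^ 3) ^ 2 := by ring
  rw [this, ρ_cube]; norm_num
lemma ρb_six : ρb ^ 6 = 1 := by
  have : ρb ^ 6 = (ρb ^ 3) ^ 2 := by ring
  rw [this, ρb_cube]; norm_num
lemma e_six : e A B 6 = A := by
  funext z
  have : Even 6 := by decide
  simp [e, this, ρ_six]

def S (A B : ℂ → ℝ) (z : ℂ) : ℂ := ∑ j ∈ Finset.range 6, τ (e A B j) (ρb ^ j * z)

lemma S_rot (z : ℂ) : S (rot B) (rot A) z = S A B (ρ * z) := by
  unfold S
  have h1 : ∀ j, τ (e (rot B) (rot A) j) (ρb ^ j * z)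
      = τ (e A B (j + 1)) (ρb ^ (j + 1) * (ρ * z)) := by
    intro j
    rw [e_rot, pow_succ, mul_assoc (ρb ^ j), ← mul_assoc ρb, ρb_mul_ρ, one_mul]
  simp only [h1]
  rw [Finset.sum_range_succ, Finset.sum_range_succ' _ 5]
  rw [show (5 + 1 = 6) from rfl, e_six, ρb_six, e_zero, pow_zero]

lemma S_le (g : GoodP M R A B) (z : ℂ) : ‖S A B z‖ ≤ 6 * (M * R) := by
  refine (norm_sum_le _ _).trans ?_
  refine (Finset.sum_le_card_nsmul _ _ (M * R) (fun j _ => τ_le (g.e j) _)).trans ?_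
  simp

lemma S_small (g : GoodP M R A B) (z : ℂ) : ‖S A B z‖ ≤ 18 * M * ‖z‖ := by
  refine (norm_sum_le _ _).trans ?_
  refine (Finset.sum_le_card_nsmul _ _ (3 * M * ‖z‖) (fun j _ => ?_)).trans ?_
  · have := τ_small (g.e j) (ρb ^ j * z)
    rwa [norm_mul, norm_ρb_pow, one_mul] at this
  · simp; linarith

lemma S_lip (g : GoodP M R A B) (z z' : ℂ) :
    ‖S A B z - S A B z'‖ * ‖z‖ ≤ 54 * (M * R) * ‖z - z'‖ := by
  unfold S
  rw [← Finset.sum_sub_distrib]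
  refine (mul_le_mul_of_nonneg_right (norm_sum_le _ _) (norm_nonneg _)).trans ?_
  rw [Finset.sum_mul]
  refine (Finset.sum_le_card_nsmul _ _ (9 * (M * R) * ‖z - z'‖) (fun j _ => ?_)).trans ?_
  · have := τ_lip (g.e j) (ρb ^ j * z) (ρb ^ j * z')
    rwa [← mul_sub, norm_mul, norm_mul, norm_ρb_pow, one_mul, one_mul] at this
  · simp; linarith

lemma P_one : P 1 = 1 := by simp [P]

lemma P_lip_one {s s' : ℂ} (hs : ‖s‖ ≤ 1/2) (hs' : ‖s'‖ ≤ 1/2) :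
    ‖P (1 + s) - P (1 + s')‖ ≤ ‖s - s'‖ := by
  have key := Convex.norm_image_sub_le_of_norm_hasDerivWithin_le (𝕜 := ℂ) (f := P)
    (f' := fun w => (2/3) * w ^ ((-1/3 : ℝ) : ℂ)) (C := 1) (x := 1 + s') (y := 1 + s) ?_ ?_
    (convex_closedBall (1 : ℂ) (1/2)) (by simpa using hs') (by simpa using hs)
  · simpa using key
  · intro x hx
    apply HasDerivAt.hasDerivWithinAt
    apply hasDerivAt_P
    left
    rw [mem_closedBall_iff_norm] at hx
    have := abs_le.1 ((Complex.abs_re_le_norm _).trans hx)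
    simp at this
    linarith [this.1]
  · intro x hx
    rw [mem_closedBall_iff_norm] at hx
    have h1 : (1/2 : ℝ) ≤ ‖x‖ := by
      have := norm_sub_norm_le 1 x
      rw [norm_sub_rev] at this
      simp at this hx; linarith
    rw [norm_mul, Complex.norm_cpow_real]
    have h2 : ‖x‖ ^ (-1/3 : ℝ) ≤ (1/2 : ℝ) ^ (-1/3 : ℝ) :=
      Real.rpow_le_rpow_of_nonpos (by norm_num) h1 (by norm_num)
    have h3 : (1/2 : ℝ) ^ (-1/3 : ℝ) ≤ 3/2 := by
      have : ((1/2 : ℝ) ^ (-1/3 : ℝ)) ^ 3 = 2 := by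
        rw [← Real.rpow_natCast, ← Real.rpow_mul (by norm_num)]; norm_num
      by_contra hc
      push Not at hc
      have : (3/2 : ℝ) ^ 3 < ((1/2 : ℝ) ^ (-1/3 : ℝ)) ^ 3 := by gcongr
      norm_num at *; linarith
    norm_num at *; linarith

def hh (A B : ℂ → ℝ) (z : ℂ) : ℂ := z * P (1 + S A B z)

lemma S_half (g : GoodP M R A B) (z : ℂ) : ‖S A B z‖ ≤ 1/2 := by
  have := S_le g z; have := g.a.small; linarith

lemma hh_sub (g : GoodP M R A B) (z : ℂ) : ‖hh A B z - z‖ ≤ 18 * M * ‖z‖ ^ 2 := by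
  have h1 := P_lip_one (S_half g z) (s' := 0) (by simp)
  rw [add_zero, P_one, sub_zero] at h1
  have : hh A B z - z = z * (P (1 + S A B z) - 1) := by unfold hh; ring
  rw [this, norm_mul]
  have := S_small g z
  calc _ ≤ ‖z‖ * (18 * M * ‖z‖) := by gcongr; exact h1.trans this
    _ = _ := by ring

lemma hh_lip (g : GoodP M R A B) (z z' : ℂ) :
    ‖(hh A B z - z) - (hh A B z' - z')‖ ≤ 1/10 * ‖z - z'‖ := by
  have h1 := P_lip_one (S_half g z) (S_half g z')
  have h2 := P_lip_one (S_half g z') (s' := 0) (by simp)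
  rw [add_zero, P_one, sub_zero] at h2
  have e : (hh A B z - z) - (hh A B z' - z') = (P (1 + S A B z) - P (1 + S A B z')) * z
      + (z - z') * (P (1 + S A B z') - 1) := by unfold hh; ring
  have h3 := S_lip g z z'
  have h4 := S_le g z'
  have hs := g.a.small
  rw [e]
  refine (norm_add_le _ _).trans ?_
  rw [norm_mul, norm_mul]
  calc _ ≤ ‖S A B z - S A B z'‖ * ‖z‖ + ‖z - z'‖ * (6 * (M * R)) := by gcongr; linarith
    _ ≤ 54 * (M * R) * ‖z - z'‖ + ‖z - z'‖ * (6 * (M * R)) := by gcongr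
    _ ≤ _ := by nlinarith [norm_nonneg (z - z')]

lemma hh_zero : hh A B 0 = 0 := by simp [hh]

lemma hh_norm (g : GoodP M R A B) (z : ℂ) : ‖hh A B z - z‖ ≤ 1/10 * ‖z‖ := by
  have := hh_lip g z 0
  simpa [hh_zero] using this

lemma hh_homeo (g : GoodP M R A B) : ∃ H : ℂ ≃ₜ ℂ, ∀ z, H z = hh A B z := by
  have h : ApproximatesLinearOn (hh A B) (ContinuousLinearEquiv.refl ℝ ℂ : ℂ →L[ℝ] ℂ) univ
      (1/10 : NNReal) := by
    intro x _ y _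
    have := hh_lip g x y
    simp only [ContinuousLinearEquiv.coe_refl, ContinuousLinearMap.coe_id', id]
    convert! this using 2
    · ring
  refine ⟨h.toHomeomorph (hh A B) (Or.inr ?_), fun z => rfl⟩
  have : ‖((ContinuousLinearEquiv.refl ℝ ℂ).symm : ℂ →L[ℝ] ℂ)‖₊ = 1 := by
    have : ‖ContinuousLinearMap.id ℝ ℂ‖₊ = 1 := by
      ext; simp
    simpa using this
  rw [this]
  rw [← NNReal.coe_lt_coe]; norm_num

lemma hh_rot (z : ℂ) : hh (rot B) (rot A) z = ρb * hh A B (ρ * z) := by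
  unfold hh; rw [S_rot, ← mul_assoc, ← mul_assoc, ρb_mul_ρ, one_mul]

lemma hh_rot' (z : ℂ) : hh A B (ρ * z) = ρ * hh (rot B) (rot A) z := by
  rw [hh_rot, ← mul_assoc, ρ_mul_ρb, one_mul]

lemma ρb_sq : ρb ^ 2 = -ρ := by
  apply Complex.ext <;> simp [ρ, ρb, pow_two]
  · nlinarith [s3]
  · ring
lemma ρb_4 : ρb ^ 4 = -ρb := by
  rw [show ρb ^ 4 = ρb ^ 3 * ρb by ring, ρb_cube]; ring
lemma ρb_5 : ρb ^ 5 = ρ := by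
  rw [show ρb ^ 5 = ρb ^ 3 * ρb ^ 2 by ring, ρb_cube, ρb_sq]; ring

lemma term1 (g : Good M R A) {z : ℂ} (h : z ∈ T) : (Q z * τ A (ρb * z)).im = 0 := by
  by_cases hi : 0 ≤ z.im
  · rcases eq_or_ne z 0 with rfl | h0
    · simp
    rw [τ_in (ρb_mul_T h hi), Q_ρb_mul h hi]
    have := Q_ne h0
    have e : Q z * (Complex.I * (φ A (-Complex.I * Q z) : ℂ) / (-Complex.I * Q z))
        = ((-φ A (-Complex.I * Q z) : ℝ) : ℂ) := by
      have := Complex.I_ne_zero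
      push_cast; field_simp
    rw [e, Complex.ofReal_im]
  · rw [τ_out]; · simp
    intro hc
    rw [mem_T, abs_le] at h hc
    simp [ρb] at hc
    have := s3; have := s3pos
    nlinarith [hc.1, h.1]

lemma term5 (g : Good M R A) {z : ℂ} (h : z ∈ T) : (Q z * τ A (ρ * z)).im = 0 := by
  by_cases hi : z.im ≤ 0
  · rcases eq_or_ne z 0 with rfl | h0
    · simp
    rw [τ_in (ρ_mul_T h hi), Q_ρ_mul h hi]
    have := Q_ne h0
    have e : Q z * (Complex.I * (φ A (Complex.I * Q z) : ℂ) / (Complex.I * Q z))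
        = ((φ A (Complex.I * Q z) : ℝ) : ℂ) := by
      have := Complex.I_ne_zero
      field_simp
    rw [e, Complex.ofReal_im]
  · rw [τ_out]; · simp
    intro hc
    rw [mem_T, abs_le] at h hc
    simp [ρ] at hc
    have := s3; have := s3pos
    nlinarith [hc.1, h.1]

lemma term2 (g : Good M R A) {z : ℂ} (h : z ∈ T) : τ A (-ρ * z) = 0 := by
  by_cases hc : -ρ * z ∈ T
  · apply τ_bdry g
    rw [mem_T, abs_le] at h hc
    simp [ρ] at hc ⊢
    have h1 := s3; have := s3pos
    have h2 : z.im = √3 * z.re := by nlinarith [hc.1, h.2]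
    rw [h2, ← mul_assoc (√3/2)]
    have h3 : √3 / 2 * √3 = 3/2 := by linarith
    rw [h3]
    have h4 : 0 ≤ z.re := T_re (abs_le.2 h)
    have : -(√3 / 2 * z.re) + -(2⁻¹ * (√3 * z.re)) = -(√3 * z.re) := by ring
    rw [this, abs_neg, abs_of_nonneg (by positivity)]; ring
  · exact τ_out hc

lemma term4 (g : Good M R A) {z : ℂ} (h : z ∈ T) : τ A (-ρb * z) = 0 := by
  by_cases hc : -ρb * z ∈ T
  · apply τ_bdry g
    rw [mem_T, abs_le] at h hc
    simp [ρb] at hc ⊢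
    have h1 := s3; have := s3pos
    have h2 : z.im = -(√3 * z.re) := by nlinarith [hc.2, h.1]
    rw [h2]
    have h3 : √3 / 2 * (√3 * z.re) = 3/2 * z.re := by rw [← mul_assoc]; congr 1; linarith
    have h4 : 0 ≤ z.re := T_re (abs_le.2 h)
    rw [show √3 / 2 * z.re + -(2⁻¹ * -(√3 * z.re)) = √3 * z.re by ring,
      abs_of_nonneg (by positivity), mul_neg, h3]
    ring
  · exact τ_out hc

lemma term3 {z : ℂ} (h : z ∈ T) : τ A (-1 * z) = 0 := by
  by_cases hc : -1 * z ∈ T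
  · have h1 := T_re hc
    rcases eq_or_ne z 0 with rfl | h0
    · simp [τ_zero]
    have := T_re_pos h h0
    simp at h1; linarith
  · exact τ_out hc

lemma key_im (g : GoodP M R A B) {z : ℂ} (h : z ∈ T) : (Q z * (1 + S A B z)).im = Φ A (Q z) := by
  have h0 : (Q z * τ A z).im = φ A (Q z) := by
    rcases eq_or_ne z 0 with rfl | h0
    · have := Φ_re_zero g.a (w := 0) rfl
      simp [φ, this]
    rw [τ_in h, mul_div_cancel₀ _ (Q_ne h0)]; simp
  have hS : Q z * (1 + S A B z) = Q z + Q z * τ A z + Q z * τ (e A B 1) (ρb * z)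
      + Q z * τ (e A B 5) (ρ * z) := by
    unfold S
    simp only [Finset.sum_range_succ, Finset.sum_range_zero, ρb_5, ρb_4, ρb_cube, ρb_sq, pow_zero,
      pow_one, one_mul, e_zero, term2 (g.e 2) h, term3 h, term4 (g.e 4) h]
    ring
  rw [hS]
  simp only [Complex.add_im, h0, term1 (g.e 1) h, term5 (g.e 5) h]
  simp [φ]

lemma N0_hh (g : GoodP M R A B) {z : ℂ} (h : z ∈ T) : N0 (hh A B z) = 2 * Φ A (Q z) ^ 2 := by
  rw [← key_im g h, two_im_sq, norm_mul, mul_pow, norm_Q_sq, mul_pow, Q_sq]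
  unfold N0 hh
  rw [mul_pow, norm_mul, mul_pow, P_cube, ← norm_pow (P _), P_cube, norm_pow]

end SB

namespace SB

variable {M R : ℝ} {A B : ℂ → ℝ}

def ty0 (A : ℂ → ℝ) (z v : ℂ) : Prop :=
  ∃ k : ℝ, 0 < k ∧ z * v ^ 2 = k * (1 + (A z : ℂ) * Complex.I) ^ 2
def ty1 (A : ℂ → ℝ) (z v : ℂ) : Prop :=
  ∃ k : ℝ, 0 < k ∧ z * v ^ 2 = -(k * (1 + (A z : ℂ) * Complex.I) ^ 2)

lemma ρρb (z : ℂ) : ρ * (ρb * z) = z := by rw [← mul_assoc, ρ_mul_ρb, one_mul]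
lemma ρbρ (z : ℂ) : ρb * (ρ * z) = z := by rw [← mul_assoc, ρb_mul_ρ, one_mul]

lemma ty0.rot {z v : ℂ} (h : ty0 A z v) : ty1 (rot A) (ρb * z) (ρb * v) := by
  obtain ⟨k, hk, e⟩ := h
  refine ⟨k, hk, ?_⟩
  rw [SB.rot, ρρb, ← e]
  linear_combination (z * v ^ 2) * ρb_cube
lemma ty1.rot {z v : ℂ} (h : ty1 A z v) : ty0 (rot A) (ρb * z) (ρb * v) := by
  obtain ⟨k, hk, e⟩ := h
  refine ⟨k, hk, ?_⟩
  rw [SB.rot, ρρb, ← neg_eq_iff_eq_neg.2 e]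
  linear_combination (z * v ^ 2) * ρb_cube

lemma sq_re (a k : ℝ) : ((k : ℂ) * (1 + (a : ℂ) * Complex.I) ^ 2).re = k * (1 - a ^ 2) := by
  simp [pow_two]
lemma ty0.re_pos (g : Good M R A) {z v : ℂ} (h : ty0 A z v) : 0 < (z * v ^ 2).re := by
  obtain ⟨k, hk, e⟩ := h
  rw [e, sq_re]
  have h1 := (g.le_MR z).trans g.small
  have h2 : A z ^ 2 < 1 := by rw [sq_lt_one_iff_abs_lt_one]; linarith
  exact mul_pos hk (by linarith)
lemma ty1.re_neg (g : Good M R A) {z v : ℂ} (h : ty1 A z v) : (z * v ^ 2).re < 0 := by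
  obtain ⟨k, hk, e⟩ := h
  rw [e, Complex.neg_re, sq_re]
  have h1 := (g.le_MR z).trans g.small
  have h2 : A z ^ 2 < 1 := by rw [sq_lt_one_iff_abs_lt_one]; linarith
  have := mul_pos hk (by linarith : 0 < 1 - A z ^ 2)
  linarith

lemma Qγ_der {γ : ℝ → ℂ} {v : ℂ} {t : ℝ} (h : HasDerivAt γ v t) (hz : γ t ∈ Complex.slitPlane) :
    HasDerivAt (fun t => Q (γ t)) ((3/2) * (γ t) ^ ((1/2 : ℝ) : ℂ) * v) t :=
  (hasDerivAt_Q hz).comp t h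

lemma D_sq (z v : ℂ) : ((3/2) * z ^ ((1/2 : ℝ) : ℂ) * v) ^ 2 = ((9/4 : ℝ) : ℂ) * (z * v ^ 2) := by
  have := sqrt_sq z
  set x := z ^ ((1/2 : ℝ) : ℂ)
  push_cast
  linear_combination (9/4 * v ^ 2) * this

/-- F1 inside T -/
lemma F1T (g : GoodP M R A B) {γ : ℝ → ℂ} {v : ℂ} {t0 : ℝ} (hγ : HasDerivAt γ v t0)
    (h0 : γ t0 ≠ 0) (ht : ty0 A (γ t0) v) :
    HasDerivWithinAt (fun t => N0 (hh A B (γ t))) 0 {t | γ t ∈ T} t0 := by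
  by_cases hT : γ t0 ∈ T
  swap
  · apply HasFDerivWithinAt.of_notMem_closure
    rw [mem_closure_iff_nhds]
    push Not
    refine ⟨_, hγ.continuousAt.preimage_mem_nhds (T_closed.isOpen_compl.mem_nhds hT), ?_⟩
    ext x; simp
  set s := {t | γ t ∈ T} with hs
  set ψ := sol A (Q (γ t0)) with hψ
  obtain ⟨h1, h2⟩ := sol_spec g.a (Q_re_T hT)
  have hQ := Qγ_der hγ (slit_of_re (T_re hT) h0)
  set D := (3/2) * (γ t0) ^ ((1/2 : ℝ) : ℂ) * v with hD
  have hre : HasDerivAt (fun t => (Q (γ t)).re) D.re t0 :=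
    Complex.reCLM.hasFDerivAt.comp_hasDerivAt t0 hQ
  have him : HasDerivAt (fun t => (Q (γ t)).im) D.im t0 :=
    Complex.imCLM.hasFDerivAt.comp_hasDerivAt t0 hQ
  have hψ' := h1.deriv0 g.a (Q_re_T hT)
  rw [h2, pt_eta, P_Q_T hT] at hψ'
  have hcomp : HasDerivWithinAt (fun t => ψ (Q (γ t)).re) (A (γ t0) * D.re) s t0 :=
    HasDerivWithinAt.comp t0 (h := fun t => (Q (γ t)).re) (h₂ := ψ) hψ' hre.hasDerivWithinAt
      (fun t ht => Q_re_T ht)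
  have hsub := him.hasDerivWithinAt (s := s) |>.sub hcomp
  have hzero : D.im - A (γ t0) * D.re = 0 := by
    obtain ⟨k, hk, e⟩ := ht
    have h3 := D_sq (γ t0) v
    rw [e, ← hD] at h3
    set x := Real.sqrt (9/4 * k)
    have hx : (x : ℂ) ^ 2 = ((9/4 * k : ℝ) : ℂ) := by
      rw [← Complex.ofReal_pow, Real.sq_sqrt (by positivity)]
    have h4 : D ^ 2 = ((x : ℂ) * (1 + (A (γ t0) : ℂ) * Complex.I)) ^ 2 := by
      rw [h3, mul_pow, hx]; push_cast; ring
    rcases sq_eq_sq_iff_eq_or_eq_neg.1 h4 with h5 | h5 <;> rw [h5] <;> simp <;> ring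
  rw [hzero] at hsub
  have hΦ : HasDerivWithinAt (fun t => Φ A (Q (γ t))) 0 s t0 := by
    rw [hasDerivWithinAt_iff_isLittleO] at hsub ⊢
    refine IsBigO.trans_isLittleO ?_ hsub
    apply IsBigO.of_bound 2
    filter_upwards [self_mem_nhdsWithin] with t ht
    have k1 := Φ_near g.a h1 (Q_re_T ht)
    have k2 : Φ A (Q (γ t0)) = ψ 0 := rfl
    simp only [smul_zero, sub_zero, Real.norm_eq_abs, Pi.sub_apply]
    rw [k2, ← h2, sub_self, sub_zero]
    exact k1
  have := (hΦ.pow 2).const_mul 2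
  simp only [Nat.cast_ofNat, mul_zero] at this
  apply this.congr
  · intro t ht; exact N0_hh g ht
  · exact N0_hh g hT

lemma cover (z : ℂ) : z ∈ T ∨ ρb * (ρb * z) ∈ T ∨ ρb * (ρb * (ρb * (ρb * z))) ∈ T := by
  have e2 : ρb * (ρb * z) = -ρ * z := by rw [← ρb_sq]; ring
  have e4 : ρb * (ρb * (ρb * (ρb * z))) = -ρb * z := by rw [← ρb_4]; ring
  rw [e4, e2]
  by_cases h : z ∈ T
  · exact Or.inl h
  right
  rw [mem_T, abs_le, not_and_or] at h
  have h1 := s3; have h2 := s3pos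
  rcases le_total 0 z.im with hi | hi
  · left
    have h3 : √3 * z.re ≤ z.im := by
      rcases h with h | h <;> nlinarith
    rw [mem_T, abs_le]
    simp [ρ]
    constructor <;> nlinarith
  · right
    have h3 : √3 * z.re ≤ -z.im := by
      rcases h with h | h <;> nlinarith
    rw [mem_T, abs_le]
    simp [ρb]
    constructor <;> nlinarith

lemma rotrot (g : GoodP M R A B) : GoodP M R (rot (rot A)) (rot (rot B)) := g.rot.rot

lemma hh_rot2 (z : ℂ) : hh A B z = ρ * (ρ * hh (rot (rot A)) (rot (rot B)) (ρb * (ρb * z))) := by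
  rw [← hh_rot', ρρb, ← hh_rot', ρρb]

lemma F1 (g : GoodP M R A B) {γ : ℝ → ℂ} {v : ℂ} {t0 : ℝ} (hγ : HasDerivAt γ v t0)
    (h0 : γ t0 ≠ 0) (ht : ty0 A (γ t0) v) :
    HasDerivAt (fun t => N0 (hh A B (γ t))) 0 t0 := by
  have key : ∀ {A B : ℂ → ℝ} (_ : GoodP M R A B) {γ : ℝ → ℂ} {v : ℂ} (_ : HasDerivAt γ v t0)
    (_ : γ t0 ≠ 0) (_ : ty0 A (γ t0) v), HasDerivWithinAt (fun t => N0 (hh A B (γ t))) 0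
      {t | ρb * (ρb * γ t) ∈ T} t0 := by
    intro A B g γ v hγ h0 ht
    have := F1T g.rot.rot ((hγ.const_mul ρb).const_mul ρb)
      (mul_ne_zero ρb_ne (mul_ne_zero ρb_ne h0)) ht.rot.rot
    have e : (fun t => N0 (hh A B (γ t))) =
        fun t => N0 (hh (rot (rot A)) (rot (rot B)) (ρb * (ρb * γ t))) := by
      funext t; rw [hh_rot2 (A := A), N0_ρ, N1_ρ]
    rw [e]; exact this
  have k0 := F1T g hγ h0 ht
  have k1 := key g hγ h0 ht
  have k2 : HasDerivWithinAt (fun t => N0 (hh A B (γ t))) 0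
      {t | ρb * (ρb * (ρb * (ρb * γ t))) ∈ T} t0 := by
    have := key g.rot.rot ((hγ.const_mul ρb).const_mul ρb)
      (mul_ne_zero ρb_ne (mul_ne_zero ρb_ne h0)) ht.rot.rot
    have e : (fun t => N0 (hh A B (γ t))) =
        fun t => N0 (hh (rot (rot A)) (rot (rot B)) (ρb * (ρb * γ t))) := by
      funext t; rw [hh_rot2 (A := A), N0_ρ, N1_ρ]
    rw [e]; exact this
  have k3 := (k0.union k1).union k2
  have e : ({t | γ t ∈ T} ∪ {t | ρb * (ρb * γ t) ∈ T}) ∪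
      {t | ρb * (ρb * (ρb * (ρb * γ t))) ∈ T} = univ := by
    rw [eq_univ_iff_forall]
    intro t
    rcases cover (γ t) with h | h | h
    · exact Or.inl (Or.inl h)
    · exact Or.inl (Or.inr h)
    · exact Or.inr h
  rw [e, hasDerivWithinAt_univ] at k3
  exact k3

lemma F1' (g : GoodP M R A B) {γ : ℝ → ℂ} {v : ℂ} {t0 : ℝ} (hγ : HasDerivAt γ v t0)
    (h0 : γ t0 ≠ 0) (ht : ty1 B (γ t0) v) :
    HasDerivAt (fun t => N1 (hh A B (γ t))) 0 t0 := by
  have := F1 g.rot (hγ.const_mul ρb) (mul_ne_zero ρb_ne h0) ht.rot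
  have e : (fun t => N1 (hh A B (γ t))) = fun t => N0 (hh (rot B) (rot A) (ρb * γ t)) := by
    funext t
    rw [← N1_ρ, ← hh_rot', ρρb]
  rw [e]; exact this

def T0 : Set ℂ := {z | |z.im| < √3 * z.re}
lemma mem_T0 {z : ℂ} : z ∈ T0 ↔ |z.im| < √3 * z.re := Iff.rfl
lemma T0_sub {z : ℂ} (h : z ∈ T0) : z ∈ T := le_of_lt (mem_T0.1 h)
lemma T0_open : IsOpen T0 := by
  unfold T0; apply isOpen_lt <;> fun_prop
lemma T0_of {z : ℂ} (h : z ∈ T) (h1 : N1 z ≠ 0) : z ∈ T0 := by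
  rcases (mem_T.1 h).lt_or_eq with h2 | h2
  · exact h2
  · exfalso; apply h1
    rw [← Q_re_sq, T_boundary h2]; simp
lemma T0_re {z : ℂ} (h : z ∈ T0) : 0 < z.re := by
  have := (abs_nonneg _).trans_lt (mem_T0.1 h)
  exact pos_of_mul_pos_right this s3pos.le
lemma T0_norm {z : ℂ} (h : z ∈ T0) : ‖z‖ < 2 * z.re := by
  have h1 := T0_re h
  have h2 : |z.im| ^ 2 < 3 * z.re ^ 2 := by
    have := s3
    calc |z.im| ^ 2 < (√3 * z.re) ^ 2 := by gcongr; exact h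
      _ = _ := by rw [mul_pow, pow_two √3, s3]
  rw [sq_abs] at h2
  apply lt_of_pow_lt_pow_left₀ 2 (by positivity)
  rw [Complex.sq_norm, Complex.normSq_apply]; nlinarith

lemma hh_T0_re (g : GoodP M R A B) {z : ℂ} (h : hh A B z ∈ T0) : 0 < z.re := by
  have h1 := T0_norm h
  have h2 := hh_norm g z
  have h3 : ‖z‖ ≤ ‖hh A B z‖ + ‖hh A B z - z‖ := by
    have := norm_sub_le (hh A B z) (hh A B z - z)
    simpa using this
  have h4 : (hh A B z - z).re ≤ ‖hh A B z - z‖ := re_le_norm' _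
  simp only [Complex.sub_re] at h4
  have h5 : z ≠ 0 := by
    rintro rfl
    rw [hh_zero] at h
    have := T0_re h
    simp at this
  have h6 := norm_pos_iff.2 h5
  linarith

lemma sector_core {I : Set ℝ} (hI : IsPreconnected I) (y : ℝ → ℂ) (hy : ContinuousOn y I)
    (h : ∀ t ∈ I, N1 (y t) ≠ 0) (t1 : ℝ) (ht1 : t1 ∈ I) (hT : y t1 ∈ T0) (t : ℝ) (ht : t ∈ I) :
    y t ∈ T0 := by
  have e2 : ∀ z : ℂ, ρb * (ρb * z) = -ρ * z := fun z => by rw [← ρb_sq]; ring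
  have e4 : ∀ z : ℂ, ρb * (ρb * (ρb * (ρb * z))) = -ρb * z := fun z => by rw [← ρb_4]; ring
  have hpre := hI.image y hy
  have := hpre.subset_left_of_subset_union (u := T0)
    (v := {z | -ρ * z ∈ T0} ∪ {z | -ρb * z ∈ T0}) T0_open ?_ ?_ ?_ ⟨y t1, mem_image_of_mem y ht1, hT⟩
  · exact this (mem_image_of_mem y ht)
  · apply IsOpen.union
    · exact T0_open.preimage (f := fun z => -ρ * z) (by fun_prop)
    · exact T0_open.preimage (f := fun z => -ρb * z) (by fun_prop)
  · rw [disjoint_left]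
    intro z hz hz'
    have h1 := s3; have h2 := s3pos
    have h5 := T0_re hz
    rcases hz' with hz' | hz'
    · change -ρ * z ∈ T0 at hz'
      rw [mem_T0, abs_lt] at hz hz'
      simp [ρ] at hz'
      nlinarith [hz.1, hz.2, hz'.1, hz'.2]
    · change -ρb * z ∈ T0 at hz'
      rw [mem_T0, abs_lt] at hz hz'
      simp [ρb] at hz'
      nlinarith [hz.1, hz.2, hz'.1, hz'.2]
  · rintro _ ⟨s, hs, rfl⟩
    rcases cover (y s) with hc | hc | hc
    · exact Or.inl (T0_of hc (h s hs))
    · right; left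
      change -ρ * y s ∈ T0
      rw [← e2]
      apply T0_of hc
      rw [N1_ρb, N0_ρb]; exact h s hs
    · right; right
      change -ρb * y s ∈ T0
      rw [← e4]
      apply T0_of hc
      rw [N1_ρb, N0_ρb, N1_ρb, N0_ρb]; exact h s hs

/-- connectedness -/
lemma sector {y : ℝ → ℂ} {I : Set ℝ} (hI : IsPreconnected I) (hy : ContinuousOn y I)
    (h : ∀ t ∈ I, N1 (y t) ≠ 0) : ∃ k : ℕ, ∀ t ∈ I, ρb ^ (2 * k) * y t ∈ T0 := by
  have core := sector_core hI
  rcases I.eq_empty_or_nonempty with rfl | ⟨t1, ht1⟩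
  · exact ⟨0, by simp⟩
  rcases cover (y t1) with hc | hc | hc
  · refine ⟨0, fun t ht => ?_⟩
    simpa using core y hy h t1 ht1 (T0_of hc (h t1 ht1)) t ht
  · refine ⟨1, fun t ht => ?_⟩
    have := core (fun t => ρb * (ρb * y t)) (by fun_prop)
      (fun t ht => by rw [N1_ρb, N0_ρb]; exact h t ht) t1 ht1
      (T0_of hc (by rw [N1_ρb, N0_ρb]; exact h t1 ht1)) t ht
    convert! this using 1; ring
  · refine ⟨2, fun t ht => ?_⟩
    have := core (fun t => ρb * (ρb * (ρb * (ρb * y t)))) (by fun_prop)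
      (fun t ht => by rw [N1_ρb, N0_ρb, N1_ρb, N0_ρb]; exact h t ht) t1 ht1
      (T0_of hc (by rw [N1_ρb, N0_ρb, N1_ρb, N0_ρb]; exact h t1 ht1)) t ht
    convert! this using 1; ring

end SB

namespace SB

variable {M R : ℝ} {A B : ℂ → ℝ}

lemma hh_cont (g : GoodP M R A B) : Continuous (hh A B) := by
  obtain ⟨H, hH⟩ := hh_homeo g
  have : hh A B = H := by funext z; exact (hH z).symm
  rw [this]; exact H.continuous
lemma hh_inj (g : GoodP M R A B) {z w : ℂ} (h : hh A B z = hh A B w) : z = w := by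
  obtain ⟨H, hH⟩ := hh_homeo g
  rw [← hH, ← hH] at h; exact H.injective h

structure Crv (A B : ℂ → ℝ) (γ γ' : ℝ → ℂ) (I : Set ℝ) : Prop where
  der : ∀ t ∈ I, HasDerivAt γ (γ' t) t
  cont : ContinuousOn γ' I
  ne : ∀ t ∈ I, γ' t ≠ 0
  typ : ∀ t ∈ I, γ t = 0 ∨ ty0 A (γ t) (γ' t) ∨ ty1 B (γ t) (γ' t)

def C0 (A : ℂ → ℝ) (γ : ℝ → ℂ) (I : Set ℝ) : Prop :=
  ∀ t ∈ I, ∃ v, HasDerivAt γ v t ∧ γ t ≠ 0 ∧ ty0 A (γ t) v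
def C1 (A : ℂ → ℝ) (γ : ℝ → ℂ) (I : Set ℝ) : Prop :=
  ∀ t ∈ I, ∃ v, HasDerivAt γ v t ∧ γ t ≠ 0 ∧ ty1 A (γ t) v

lemma C0.rot {γ : ℝ → ℂ} {I : Set ℝ} (h : C0 A γ I) : C1 (rot A) (fun t => ρb * γ t) I := by
  intro t ht
  obtain ⟨v, h1, h2, h3⟩ := h t ht
  exact ⟨ρb * v, h1.const_mul ρb, mul_ne_zero ρb_ne h2, h3.rot⟩
lemma C1.rot {γ : ℝ → ℂ} {I : Set ℝ} (h : C1 A γ I) : C0 (rot A) (fun t => ρb * γ t) I := by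
  intro t ht
  obtain ⟨v, h1, h2, h3⟩ := h t ht
  exact ⟨ρb * v, h1.const_mul ρb, mul_ne_zero ρb_ne h2, h3.rot⟩

def ZF (A B : ℂ → ℝ) (γ : ℝ → ℂ) (I : Set ℝ) : Prop :=
  ∃ j : ℕ, (∀ t ∈ I, ρb ^ j * hh A B (γ t) ∈ T0) ∧
    ((∃ c0 : ℝ, 0 < c0 ∧ ∀ t ∈ I, (Q (ρb ^ j * hh A B (γ t))).re = c0 ∧
        ∃ d : ℝ, d ≠ 0 ∧ HasDerivAt (fun t => (Q (ρb ^ j * γ t)).im) d t) ∨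
     (∀ t ∈ I, (ρb ^ j * hh A B (γ t)).im = 0 ∧
        ∃ d : ℝ, d ≠ 0 ∧ HasDerivAt (fun t => (Q (ρb ^ j * γ t)).re) d t))

lemma hh_rotb (z : ℂ) : hh (rot B) (rot A) (ρb * z) = ρb * hh A B z := by
  rw [hh_rot, ρρb]

lemma ZF.unrot {γ : ℝ → ℂ} {I : Set ℝ} (h : ZF (rot B) (rot A) (fun t => ρb * γ t) I) :
    ZF A B γ I := by
  obtain ⟨j, h1, h2⟩ := h
  refine ⟨j + 1, ?_⟩
  have e : ∀ z : ℂ, ρb ^ j * (ρb * z) = ρb ^ (j+1) * z := fun z => by ring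
  simp only [hh_rotb, e] at h1 h2
  exact ⟨h1, h2⟩

lemma im_zero_of {z : ℂ} (h : z ∈ T) (h0 : N0 z = 0) : z.im = 0 := by
  have h1 : (Q z).im = 0 := by
    rw [← Q_im_sq] at h0; simpa using h0
  have h2 := Q_re_T h
  rw [← P_Q_T h, show Q z = (((Q z).re : ℝ) : ℂ) from Complex.ext (by simp) (by simp [h1])]
  unfold P
  rw [← Complex.ofReal_cpow h2, Complex.ofReal_im]

lemma ZF_d0 (g : GoodP M R A B) {γ : ℝ → ℂ} {I : Set ℝ} (h : C0 A γ I)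
    (hT : ∀ t ∈ I, hh A B (γ t) ∈ T0) (hN : ∀ t ∈ I, N0 (hh A B (γ t)) = 0) : ZF A B γ I := by
  refine ⟨0, by simpa using hT, Or.inr ?_⟩
  intro t ht
  simp only [pow_zero, one_mul]
  refine ⟨im_zero_of (T0_sub (hT t ht)) (hN t ht), ?_⟩
  obtain ⟨v, h1, h2, h3⟩ := h t ht
  have hQ := Qγ_der h1 (slit_of_re (hh_T0_re g (hT t ht)).le h2)
  set D := (3/2) * (γ t) ^ ((1/2 : ℝ) : ℂ) * v with hD
  refine ⟨D.re, ?_, Complex.reCLM.hasFDerivAt.comp_hasDerivAt t hQ⟩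
  intro h0
  have := D_sq (γ t) v
  rw [← hD] at this
  have h4 := congrArg Complex.re this
  rw [Complex.re_ofReal_mul, pow_two, Complex.mul_re, h0] at h4
  have := h3.re_pos g.a
  nlinarith [mul_self_nonneg D.im]

lemma ZF_d1 (g : GoodP M R A B) {γ : ℝ → ℂ} {I : Set ℝ} (h : C1 B γ I)
    (hT : ∀ t ∈ I, hh A B (γ t) ∈ T0) {c : ℝ} (hc : 0 < c)
    (hN : ∀ t ∈ I, N1 (hh A B (γ t)) = c) : ZF A B γ I := by
  refine ⟨0, by simpa using hT, Or.inl ⟨√(c/2), by positivity, ?_⟩⟩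
  intro t ht
  simp only [pow_zero, one_mul]
  constructor
  · have h1 := hN t ht
    rw [← Q_re_sq] at h1
    rw [← h1, mul_div_cancel_left₀ _ two_ne_zero, Real.sqrt_sq (Q_re_T (T0_sub (hT t ht)))]
  obtain ⟨v, h1, h2, h3⟩ := h t ht
  have hQ := Qγ_der h1 (slit_of_re (hh_T0_re g (hT t ht)).le h2)
  set D := (3/2) * (γ t) ^ ((1/2 : ℝ) : ℂ) * v with hD
  refine ⟨D.im, ?_, Complex.imCLM.hasFDerivAt.comp_hasDerivAt t hQ⟩
  intro h0
  have := D_sq (γ t) v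
  rw [← hD] at this
  have h4 := congrArg Complex.re this
  rw [Complex.re_ofReal_mul, pow_two, Complex.mul_re, h0] at h4
  have := h3.re_neg g.b
  nlinarith [mul_self_nonneg D.re]

lemma ZF_k0 (k : ℕ) : ∀ {A B : ℂ → ℝ} (_ : GoodP M R A B) {γ : ℝ → ℂ} {I : Set ℝ} (_ : C0 A γ I)
    (_ : ∀ t ∈ I, ρb ^ (2 * k) * hh A B (γ t) ∈ T0) (_ : ∀ t ∈ I, N0 (hh A B (γ t)) = 0),
    ZF A B γ I := by
  induction k with
  | zero => intro A B g γ I h hT hN; exact ZF_d0 g h (by simpa using hT) hN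
  | succ k ih =>
    intro A B g γ I h hT hN
    apply ZF.unrot; apply ZF.unrot
    apply ih g.rot.rot h.rot.rot
    · intro t ht
      rw [hh_rotb, hh_rotb]
      convert hT t ht using 1; ring
    · intro t ht
      rw [hh_rotb, hh_rotb, N0_ρb, N1_ρb]; exact hN t ht

lemma ZF_k1 (k : ℕ) : ∀ {A B : ℂ → ℝ} (_ : GoodP M R A B) {γ : ℝ → ℂ} {I : Set ℝ} (_ : C1 B γ I)
    (_ : ∀ t ∈ I, ρb ^ (2 * k) * hh A B (γ t) ∈ T0) {c : ℝ} (_ : 0 < c)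
    (_ : ∀ t ∈ I, N1 (hh A B (γ t)) = c), ZF A B γ I := by
  induction k with
  | zero => intro A B g γ I h hT c hc hN; exact ZF_d1 g h (by simpa using hT) hc hN
  | succ k ih =>
    intro A B g γ I h hT c hc hN
    apply ZF.unrot; apply ZF.unrot
    apply ih g.rot.rot h.rot.rot _ hc
    · intro t ht
      rw [hh_rotb, hh_rotb, N1_ρb, N0_ρb]; exact hN t ht
    · intro t ht
      rw [hh_rotb, hh_rotb]
      convert hT t ht using 1; ring

lemma ZF_0 (g : GoodP M R A B) {γ : ℝ → ℂ} {a b : ℝ} (hab : a < b) (h : C0 A γ (Ioo a b)) :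
    ZF A B γ (Ioo a b) := by
  have hd : ∀ t ∈ Ioo a b, HasDerivAt (fun t => N0 (hh A B (γ t))) 0 t := by
    intro t ht
    obtain ⟨v, h1, h2, h3⟩ := h t ht
    exact F1 g h1 h2 h3
  have hγc : ContinuousOn γ (Ioo a b) := fun t ht => by
    obtain ⟨v, h1, h2, h3⟩ := h t ht
    exact h1.continuousAt.continuousWithinAt
  have hyc : ContinuousOn (fun t => hh A B (γ t)) (Ioo a b) := (hh_cont g).comp_continuousOn hγc
  have hne : ∀ t ∈ Ioo a b, hh A B (γ t) ≠ 0 := by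
    intro t ht h0
    obtain ⟨v, h1, h2, h3⟩ := h t ht
    apply h2; apply hh_inj g; rw [h0, hh_zero]
  have hm : (a + b) / 2 ∈ Ioo a b := ⟨by linarith, by linarith⟩
  obtain ⟨c, hc⟩ : ∃ c, ∀ t ∈ Ioo a b, N0 (hh A B (γ t)) = c := by
    refine ⟨N0 (hh A B (γ ((a+b)/2))), fun t ht => ?_⟩
    apply isOpen_Ioo.is_const_of_deriv_eq_zero isPreconnected_Ioo _ _ ht hm
    · intro t ht; exact (hd t ht).differentiableAt.differentiableWithinAt
    · intro t ht; exact (hd t ht).deriv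
  have hc0 : 0 ≤ c := by rw [← hc _ hm]; exact N0_nonneg _
  rcases hc0.eq_or_lt with rfl | hc0
  · obtain ⟨k, hk⟩ := sector isPreconnected_Ioo hyc (fun t ht h1 => by
      have := N_add (hh A B (γ t))
      rw [hc t ht, h1] at this
      have h2 := norm_pos_iff.2 (hne t ht)
      have : 0 < 2 * ‖hh A B (γ t)‖ ^ 3 := by positivity
      linarith)
    exact ZF_k0 k g h hk hc
  · apply ZF.unrot
    obtain ⟨k, hk⟩ := sector (y := fun t => ρb * hh A B (γ t)) isPreconnected_Ioo
      (by fun_prop) (fun t ht h1 => by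
      rw [N1_ρb, hc t ht] at h1; exact hc0.ne' h1)
    apply ZF_k1 k g.rot h.rot _ hc0
    · intro t ht; rw [hh_rotb, N1_ρb, hc t ht]
    · intro t ht; rw [hh_rotb]; exact hk t ht

lemma Crv.zf (g : GoodP M R A B) {γ γ' : ℝ → ℂ} {a b : ℝ} (hab : a < b) (h : Crv A B γ γ' (Ioo a b))
    (h0 : ∀ t ∈ Ioo a b, γ t ≠ 0) : ZF A B γ (Ioo a b) := by
  have hγc : ContinuousOn γ (Ioo a b) := fun t ht =>
    (h.der t ht).continuousAt.continuousWithinAt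
  have hc := h.cont
  have hcc : ContinuousOn (fun t => (γ t * γ' t ^ 2).re) (Ioo a b) := by fun_prop
  have hne : ∀ t ∈ Ioo a b, (γ t * γ' t ^ 2).re ≠ 0 := by
    intro t ht
    rcases h.typ t ht with h1 | h1 | h1
    · exact absurd h1 (h0 t ht)
    · exact (h1.re_pos g.a).ne'
    · exact (h1.re_neg g.b).ne
  have hm : (a + b) / 2 ∈ Ioo a b := ⟨by linarith, by linarith⟩
  have hsgn : (∀ t ∈ Ioo a b, 0 < (γ t * γ' t ^ 2).re) ∨ (∀ t ∈ Ioo a b, (γ t * γ' t ^ 2).re < 0) := by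
    by_contra! hcon
    obtain ⟨⟨s, hs, hs'⟩, ⟨t, ht, ht'⟩⟩ := hcon
    obtain ⟨u, hu, hu'⟩ := isPreconnected_Ioo.intermediate_value hs ht hcc ⟨hs', ht'⟩
    exact hne u hu hu'
  rcases hsgn with hs | hs
  · apply ZF_0 g hab
    intro t ht
    refine ⟨γ' t, h.der t ht, h0 t ht, ?_⟩
    rcases h.typ t ht with h1 | h1 | h1
    · exact absurd h1 (h0 t ht)
    · exact h1
    · exact absurd (h1.re_neg g.b) (hs t ht).le.not_gt
  · apply ZF.unrot
    apply ZF_0 g.rot hab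
    apply C1.rot
    intro t ht
    refine ⟨γ' t, h.der t ht, h0 t ht, ?_⟩
    rcases h.typ t ht with h1 | h1 | h1
    · exact absurd h1 (h0 t ht)
    · exact absurd (h1.re_pos g.a) (hs t ht).le.not_gt
    · exact h1

lemma img_Ioo {θ : ℝ → ℝ} {a b C : ℝ} (hab : a < b) (hc : ContinuousOn θ (Ioo a b))
    (hi : InjOn θ (Ioo a b)) (hb : ∀ t ∈ Ioo a b, |θ t| ≤ C) :
    ∃ a' b', a' < b' ∧ θ '' Ioo a b = Ioo a' b' := by
  set s := θ '' Ioo a b with hs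
  have hcon : IsConnected s := (isConnected_Ioo hab).image θ hc
  have hba : BddAbove s := ⟨C, by rintro _ ⟨t, ht, rfl⟩; exact (abs_le.1 (hb t ht)).2⟩
  have hbb : BddBelow s := ⟨-C, by rintro _ ⟨t, ht, rfl⟩; exact (abs_le.1 (hb t ht)).1⟩
  have key : ∀ x ∈ s, (∃ y ∈ s, y < x) ∧ (∃ y ∈ s, x < y) := by
    rintro _ ⟨t, ht, rfl⟩
    have h1 : (a + t) / 2 ∈ Ioo a b := ⟨by linarith [ht.1], by linarith [ht.1, ht.2]⟩
    have h2 : (t + b) / 2 ∈ Ioo a b := ⟨by linarith [ht.1, ht.2], by linarith [ht.2]⟩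
    rcases ContinuousOn.strictMonoOn_of_injOn_Ioo hab hc hi with hm | hm
    · exact ⟨⟨_, mem_image_of_mem θ h1, hm h1 ht (by linarith [ht.1])⟩,
        ⟨_, mem_image_of_mem θ h2, hm ht h2 (by linarith [ht.2])⟩⟩
    · exact ⟨⟨_, mem_image_of_mem θ h2, hm ht h2 (by linarith [ht.2])⟩,
        ⟨_, mem_image_of_mem θ h1, hm h1 ht (by linarith [ht.1])⟩⟩
  have hE : s = Ioo (sInf s) (sSup s) := by
    apply Subset.antisymm _ (hcon.Ioo_csInf_csSup_subset hbb hba)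
    intro x hx
    obtain ⟨⟨y, hy, hyx⟩, ⟨w, hw, hxw⟩⟩ := key x hx
    exact ⟨(csInf_le hbb hy).trans_lt hyx, hxw.trans_le (le_csSup hba hw)⟩
  refine ⟨sInf s, sSup s, ?_, hE⟩
  obtain ⟨x, hx⟩ := hcon.nonempty
  rw [hE] at hx
  exact hx.1.trans hx.2

end SB

namespace SB

variable {M R : ℝ} {A B : ℂ → ℝ}

lemma rolle {F : ℝ → ℝ} {a b : ℝ} (hab : a < b) (hc : ContinuousOn F (Icc a b)) (he : F a = F b)
    (hd : ∀ t ∈ Ioo a b, ∃ d : ℝ, d ≠ 0 ∧ HasDerivAt F d t) : False := by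
  choose! d hd0 hd using hd
  obtain ⟨c, hc, h⟩ := exists_hasDerivAt_eq_zero hab hc he hd
  exact hd0 c hc h

lemma inj_of_rolle {F : ℝ → ℝ} {a b : ℝ}
    (hd : ∀ t ∈ Ioo a b, ∃ d : ℝ, d ≠ 0 ∧ HasDerivAt F d t) : InjOn F (Ioo a b) := by
  have : ∀ s ∈ Ioo a b, ∀ t ∈ Ioo a b, s < t → F s ≠ F t := by
    intro s hs t ht hst he
    refine rolle hst ?_ he ?_
    · intro u hu
      obtain ⟨d, _, h⟩ := hd u ⟨hs.1.trans_le hu.1, hu.2.trans_lt ht.2⟩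
      exact h.continuousAt.continuousWithinAt
    · intro u hu; exact hd u ⟨hs.1.trans hu.1, hu.2.trans ht.2⟩
  intro s hs t ht he
  rcases lt_trichotomy s t with h | h | h
  · exact absurd he (this s hs t ht h)
  · exact h
  · exact absurd he.symm (this t ht s hs h)

lemma ZF.inj {γ : ℝ → ℂ} {a b : ℝ} (h : ZF A B γ (Ioo a b)) : InjOn γ (Ioo a b) := by
  obtain ⟨j, h1, ⟨c0, hc, h2⟩ | h2⟩ := h
  · intro s hs t ht he
    exact inj_of_rolle (fun t ht => (h2 t ht).2) hs ht (by rw [he])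
  · intro s hs t ht he
    exact inj_of_rolle (fun t ht => (h2 t ht).2) hs ht (by rw [he])

def Arc (X : Set ℂ) : Prop := ∃ (j : ℕ) (a b : ℝ), a < b ∧
  ((∃ c0 : ℝ, 0 < c0 ∧ X = (fun s : ℝ => ρ ^ j * P (pt c0 s)) '' Ioo a b) ∨
    X = (fun s : ℝ => ρ ^ j * (s : ℂ)) '' Ioo a b)

lemma ρρb_pow (j : ℕ) (z : ℂ) : ρ ^ j * (ρb ^ j * z) = z := by
  rw [← mul_assoc, ← mul_pow, ρ_mul_ρb, one_pow, one_mul]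
lemma ρbρ_pow (j : ℕ) (z : ℂ) : ρb ^ j * (ρ ^ j * z) = z := by
  rw [← mul_assoc, ← mul_pow, ρb_mul_ρ, one_pow, one_mul]

lemma norm_ρbj (j : ℕ) (z : ℂ) : ‖ρb ^ j * z‖ = ‖z‖ := by
  rw [norm_mul, norm_ρb_pow, one_mul]

lemma Crv.mono {γ γ' : ℝ → ℂ} {I J : Set ℝ} (h : Crv A B γ γ' I) (hJ : J ⊆ I) : Crv A B γ γ' J :=
  ⟨fun t ht => h.der t (hJ ht), h.cont.mono hJ, fun t ht => h.ne t (hJ ht),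
    fun t ht => h.typ t (hJ ht)⟩

lemma real_of {w : ℂ} (h : w.im = 0) : w = (w.re : ℂ) := Complex.ext (by simp) (by simp [h])

/-- no zero -/
lemma fwd_nz (g : GoodP M R A B) {γ γ' : ℝ → ℂ} {a b C : ℝ} (hab : a < b)
    (h : Crv A B γ γ' (Ioo a b)) (h0 : ∀ t ∈ Ioo a b, γ t ≠ 0)
    (hC : ∀ t ∈ Ioo a b, ‖hh A B (γ t)‖ ≤ C) : Arc (hh A B '' (γ '' Ioo a b)) := by
  have hz := h.zf g hab h0
  have hinj := hz.inj
  have hγc : ContinuousOn γ (Ioo a b) := fun t ht =>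
    (h.der t ht).continuousAt.continuousWithinAt
  have hyc : ContinuousOn (fun t => hh A B (γ t)) (Ioo a b) := (hh_cont g).comp_continuousOn hγc
  obtain ⟨j, h1, ⟨c0, hc, h2⟩ | h2⟩ := hz
  · set θ := fun t => (Q (ρb ^ j * hh A B (γ t))).im with hθ
    have hrec : ∀ t ∈ Ioo a b, hh A B (γ t) = ρ ^ j * P (pt c0 (θ t)) := by
      intro t ht
      have : Q (ρb ^ j * hh A B (γ t)) = pt c0 (θ t) := by
        rw [← (h2 t ht).1]; exact (pt_eta _).symm
      rw [← this, P_Q_T (T0_sub (h1 t ht)), ρρb_pow]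
    have hθc : ContinuousOn θ (Ioo a b) := by
      intro t ht
      have e1 : ContinuousWithinAt (fun t => ρb ^ j * hh A B (γ t)) (Ioo a b) t :=
        (hyc t ht).const_mul (ρb ^ j)
      have := (Q_continuousAt (T_re (T0_sub (h1 t ht)))).comp_continuousWithinAt
        (f := fun t => ρb ^ j * hh A B (γ t)) e1
      exact Complex.continuous_im.continuousAt.comp_continuousWithinAt this
    have hθi : InjOn θ (Ioo a b) := by
      intro s hs t ht he
      apply hinj hs ht
      apply hh_inj g
      rw [hrec s hs, hrec t ht, he]
    obtain ⟨a', b', hab', him⟩ := img_Ioo (C := C ^ (3/2 : ℝ)) hab hθc hθi (by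
      intro t ht
      refine (Complex.abs_im_le_norm _).trans ?_
      rw [norm_Q, norm_ρbj]
      exact Real.rpow_le_rpow (norm_nonneg _) (hC t ht) (by norm_num))
    refine ⟨j, a', b', hab', Or.inl ⟨c0, hc, ?_⟩⟩
    rw [← him, image_image, image_image]
    exact image_congr hrec
  · set θ := fun t => (ρb ^ j * hh A B (γ t)).re with hθ
    have hrec : ∀ t ∈ Ioo a b, hh A B (γ t) = ρ ^ j * (θ t : ℂ) := by
      intro t ht
      rw [← real_of (h2 t ht).1, ρρb_pow]
    have hθc : ContinuousOn θ (Ioo a b) := by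
      have : ContinuousOn (fun t => ρb ^ j * hh A B (γ t)) (Ioo a b) := by fun_prop
      exact Complex.continuous_re.comp_continuousOn this
    have hθi : InjOn θ (Ioo a b) := by
      intro s hs t ht he
      apply hinj hs ht
      apply hh_inj g
      rw [hrec s hs, hrec t ht, he]
    obtain ⟨a', b', hab', him⟩ := img_Ioo (C := C) hab hθc hθi (by
      intro t ht
      refine (Complex.abs_re_le_norm _).trans ?_
      rw [norm_ρbj]; exact hC t ht)
    refine ⟨j, a', b', hab', Or.inr ?_⟩
    rw [← him, image_image, image_image]
    exact image_congr hrec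

/-- If the curve tends to zero somewhere in the closure, it is a ray. -/
lemma ray (g : GoodP M R A B) {γ : ℝ → ℂ} {a b : ℝ} (h : ZF A B γ (Ioo a b)) {l : Filter ℝ} [l.NeBot]
    (hl : Ioo a b ∈ l) (h0 : Tendsto γ l (nhds 0)) :
    ∃ j : ℕ, (∀ t ∈ Ioo a b, ρb ^ j * hh A B (γ t) ∈ T0) ∧
     (∀ t ∈ Ioo a b, (ρb ^ j * hh A B (γ t)).im = 0 ∧
        ∃ d : ℝ, d ≠ 0 ∧ HasDerivAt (fun t => (Q (ρb ^ j * γ t)).re) d t) := by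
  obtain ⟨j, h1, ⟨c0, hc, h2⟩ | h2⟩ := h
  · exfalso
    have e1 : Tendsto (fun t => ρb ^ j * hh A B (γ t)) l (nhds 0) := by
      have := (((hh_cont g).tendsto 0).comp h0).const_mul (ρb ^ j)
      rw [hh_zero, mul_zero] at this
      exact this
    have e2 : Tendsto (fun t => (Q (ρb ^ j * hh A B (γ t))).re) l (nhds 0) := by
      have e3 : ContinuousAt Q 0 := Q_continuousAt (by simp)
      have := e3.tendsto.comp e1
      rw [Q_zero] at this
      exact (Complex.continuous_re.tendsto 0).comp this
    have e4 : Tendsto (fun t => (Q (ρb ^ j * hh A B (γ t))).re) l (nhds c0) := by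
      apply tendsto_const_nhds.congr'
      filter_upwards [hl] with t ht
      exact (h2 t ht).1.symm
    exact hc.ne (tendsto_nhds_unique e2 e4)
  · exact ⟨j, h1, h2⟩

lemma nz_near {γ : ℝ → ℂ} {v : ℂ} {t : ℝ} (h : HasDerivAt γ v t) (hv : v ≠ 0) (h0 : γ t = 0) :
    ∃ ε > 0, ∀ s, s ≠ t → |s - t| < ε → γ s ≠ 0 := by
  have := h.eventually_ne hv (c := 0)
  rw [eventually_nhdsWithin_iff, Metric.eventually_nhds_iff] at this
  obtain ⟨ε, hε, h1⟩ := this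
  exact ⟨ε, hε, fun s hs hst => h1 (by rwa [Real.dist_eq]) hs⟩

lemma one_zero (g : GoodP M R A B) {γ γ' : ℝ → ℂ} {a b : ℝ}
    (h : Crv A B γ γ' (Ioo a b)) {s t : ℝ} (hs : s ∈ Ioo a b) (ht : t ∈ Ioo a b) (hst : s < t)
    (hs0 : γ s = 0) (ht0 : γ t = 0) : False := by
  have hcI : ∀ u ∈ Icc s t, ContinuousAt γ u := fun u hu =>
    (h.der u ⟨hs.1.trans_le hu.1, hu.2.trans_lt ht.2⟩).continuousAt
  obtain ⟨ε, hε, hn⟩ := nz_near (h.der s hs) (h.ne s hs) hs0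
  have htε : s + ε ≤ t := by
    by_contra! hlt
    exact hn t hst.ne' (by rw [abs_of_pos (by linarith)]; linarith) ht0
  set K := Icc (s + ε/2) t ∩ γ ⁻¹' {0} with hK
  have hKc : IsCompact K := by
    apply isCompact_Icc.of_isClosed_subset _ inter_subset_left
    apply ContinuousOn.preimage_isClosed_of_isClosed _ isClosed_Icc isClosed_singleton
    intro u hu
    exact (hcI u ⟨by linarith [hu.1], hu.2⟩).continuousWithinAt
  obtain ⟨t1, ht1, hmin⟩ := hKc.exists_isLeast ⟨t, ⟨by linarith, le_rfl⟩, ht0⟩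
  have hst1 : s < t1 := by linarith [ht1.1.1]
  have hsub : Ioo s t1 ⊆ Ioo a b := fun u hu =>
    ⟨hs.1.trans hu.1, hu.2.trans (ht1.1.2.trans_lt ht.2)⟩
  have hnz : ∀ u ∈ Ioo s t1, γ u ≠ 0 := by
    intro u hu h0
    by_cases hu2 : u < s + ε
    · exact hn u hu.1.ne' (by rw [abs_of_pos (by linarith [hu.1])]; linarith) h0
    · exact absurd (hmin ⟨⟨by linarith, hu.2.le.trans ht1.1.2⟩, h0⟩) hu.2.not_ge
  have hz := (h.mono hsub).zf g hst1 hnz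
  obtain ⟨j, h1, h2⟩ := ray g hz (l := nhdsWithin s (Ioi s)) (Ioo_mem_nhdsGT hst1) (by
    have := (hcI s ⟨le_rfl, hst.le⟩).tendsto
    rw [hs0] at this
    exact this.mono_left nhdsWithin_le_nhds)
  have hq : ∀ u ∈ Icc s t, γ u = 0 → ContinuousAt (fun t => (Q (ρb ^ j * γ t)).re) u := by
    intro u hu h0
    have e1 : ContinuousAt (fun t => ρb ^ j * γ t) u := by
      have := hcI u hu; fun_prop
    have e2 : ContinuousAt Q (ρb ^ j * γ u) := Q_continuousAt (by simp [h0])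
    exact Complex.continuous_re.continuousAt.comp (e2.comp (f := fun t => ρb ^ j * γ t) e1)
  refine rolle hst1 (F := fun t => (Q (ρb ^ j * γ t)).re) ?_ ?_ (fun u hu => (h2 u hu).2)
  · intro u hu
    rcases hu.1.eq_or_lt with rfl | hu1
    · exact (hq _ ⟨le_rfl, hst.le⟩ hs0).continuousWithinAt
    rcases hu.2.eq_or_lt with rfl | hu2
    · exact (hq _ ⟨hst1.le, ht1.1.2⟩ ht1.2).continuousWithinAt
    obtain ⟨d, -, hd⟩ := (h2 u ⟨hu1, hu2⟩).2
    exact hd.continuousAt.continuousWithinAt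
  · have : γ t1 = 0 := ht1.2
    simp [hs0, this]

lemma hh_der (g : GoodP M R A B) {γ : ℝ → ℂ} {v : ℂ} {t : ℝ} (h : HasDerivAt γ v t) (h0 : γ t = 0) :
    HasDerivAt (fun t => hh A B (γ t)) v t := by
  have h1 : HasDerivAt (fun t => hh A B (γ t) - γ t) 0 t := by
    rw [hasDerivAt_iff_isLittleO]
    have e : (fun s => γ s) =O[nhds t] fun s => s - t := by
      simpa [h0] using h.isBigO_sub
    have e1 : (fun s => hh A B (γ s) - γ s) =O[nhds t] fun s => (s - t) ^ 2 := by
      refine IsBigO.trans ?_ (e.pow 2)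
      apply IsBigO.of_bound (18 * M)
      filter_upwards with s
      rw [norm_pow]; exact hh_sub g _
    have e2 : (fun s : ℝ => (s - t) ^ 2) =o[nhds t] fun s => s - t := by
      have : Tendsto (fun s : ℝ => s - t) (nhds t) (nhds 0) := by
        have : Continuous (fun s : ℝ => s - t) := by fun_prop
        simpa using this.tendsto t
      have h3 := (isLittleO_pow_id (𝕜 := ℝ) (n := 2) (by norm_num)).comp_tendsto this
      exact h3
    simpa [h0, hh_zero] using e1.trans_isLittleO e2
  have := h1.fun_add h
  simpa using this

lemma fwd_z (g : GoodP M R A B) {γ γ' : ℝ → ℂ} {a b C : ℝ} (hab : a < b)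
    (h : Crv A B γ γ' (Ioo a b)) {t0 : ℝ} (ht0 : t0 ∈ Ioo a b) (h0 : γ t0 = 0)
    (hC : ∀ t ∈ Ioo a b, ‖hh A B (γ t)‖ ≤ C) : Arc (hh A B '' (γ '' Ioo a b)) := by
  have hγc : ContinuousOn γ (Ioo a b) := fun t ht =>
    (h.der t ht).continuousAt.continuousWithinAt
  have hyc : ContinuousOn (fun t => hh A B (γ t)) (Ioo a b) := (hh_cont g).comp_continuousOn hγc
  have hL : Ioo a t0 ⊆ Ioo a b := fun u hu => ⟨hu.1, hu.2.trans ht0.2⟩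
  have hR : Ioo t0 b ⊆ Ioo a b := fun u hu => ⟨ht0.1.trans hu.1, hu.2⟩
  have zL := (h.mono hL).zf g ht0.1 (fun t ht h1 => one_zero g h (hL ht) ht0 ht.2 h1 h0)
  have zR := (h.mono hR).zf g ht0.2 (fun t ht h1 => one_zero g h ht0 (hR ht) ht.1 h0 h1)
  have iL := zL.inj
  have iR := zR.inj
  have hγ0 : Tendsto γ (nhds t0) (nhds 0) := by
    have := (h.der t0 ht0).continuousAt.tendsto; rwa [h0] at this
  obtain ⟨j, jT, hj⟩ := ray g zL (l := nhdsWithin t0 (Iio t0)) (Ioo_mem_nhdsLT ht0.1)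
    (hγ0.mono_left nhdsWithin_le_nhds)
  obtain ⟨k, kT, hk⟩ := ray g zR (l := nhdsWithin t0 (Ioi t0)) (Ioo_mem_nhdsGT ht0.2)
    (hγ0.mono_left nhdsWithin_le_nhds)
  set v := γ' t0 with hv
  have hd := hh_der g (h.der t0 ht0) h0
  have hslope : ∀ i : ℕ, Tendsto (fun t => ((t - t0)⁻¹ : ℝ) • (ρb ^ i * hh A B (γ t)))
      (nhdsWithin t0 {t0}ᶜ) (nhds (ρb ^ i * v)) := by
    intro i
    have := (hd.const_mul (ρb ^ i)).tendsto_slope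
    simpa [slope_fun_def, h0, hh_zero] using this
  have l1 : Tendsto (fun t => ((t - t0)⁻¹ : ℝ) • (ρb ^ j * hh A B (γ t)))
      (nhdsWithin t0 (Iio t0)) (nhds (ρb ^ j * v)) :=
    (hslope j).mono_left (nhdsWithin_mono _ (fun x hx => ne_of_lt hx))
  have l2 : Tendsto (fun t => ((t - t0)⁻¹ : ℝ) • (ρb ^ k * hh A B (γ t)))
      (nhdsWithin t0 (Ioi t0)) (nhds (ρb ^ k * v)) :=
    (hslope k).mono_left (nhdsWithin_mono _ (fun x hx => ne_of_gt hx))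
  have j1 : (ρb ^ j * v).im = 0 := by
    refine (isClosed_eq Complex.continuous_im continuous_const).mem_of_tendsto l1 ?_
    filter_upwards [Ioo_mem_nhdsLT ht0.1] with t ht
    simp [Complex.real_smul, (hj t ht).1]
  have k1 : (ρb ^ k * v).im = 0 := by
    refine (isClosed_eq Complex.continuous_im continuous_const).mem_of_tendsto l2 ?_
    filter_upwards [Ioo_mem_nhdsGT ht0.2] with t ht
    simp [Complex.real_smul, (hk t ht).1]
  have j2 : (ρb ^ j * v).re ≤ 0 := by
    refine (isClosed_le Complex.continuous_re continuous_const).mem_of_tendsto l1 ?_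
    filter_upwards [Ioo_mem_nhdsLT ht0.1] with t ht
    have p1 := T0_re (jT t ht)
    have p2 : (t - t0)⁻¹ ≤ 0 := inv_nonpos.2 (by linarith [ht.2])
    change (((t - t0)⁻¹ : ℝ) • (ρb ^ j * hh A B (γ t))).re ≤ 0
    rw [Complex.smul_re, smul_eq_mul]
    exact mul_nonpos_of_nonpos_of_nonneg p2 p1.le
  have k2 : 0 ≤ (ρb ^ k * v).re := by
    refine (isClosed_le continuous_const Complex.continuous_re).mem_of_tendsto l2 ?_
    filter_upwards [Ioo_mem_nhdsGT ht0.2] with t ht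
    have p1 := T0_re (kT t ht)
    have p2 : 0 ≤ (t - t0)⁻¹ := inv_nonneg.2 (by linarith [ht.1])
    change 0 ≤ (((t - t0)⁻¹ : ℝ) • (ρb ^ k * hh A B (γ t))).re
    rw [Complex.smul_re, smul_eq_mul]
    exact mul_nonneg p2 p1.le
  have hvn : ‖v‖ ≠ 0 := norm_ne_zero_iff.2 (h.ne t0 ht0)
  have j3 : ρb ^ j * v = ((-‖v‖ : ℝ) : ℂ) := by
    have e := real_of j1
    have : ‖ρb ^ j * v‖ = -(ρb ^ j * v).re := by
      conv_lhs => rw [e]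
      rw [Complex.norm_real, Real.norm_eq_abs, abs_of_nonpos j2]
    rw [norm_ρbj] at this
    rw [e, this, neg_neg]
  have k3 : ρb ^ k * v = ((‖v‖ : ℝ) : ℂ) := by
    have e := real_of k1
    have : ‖ρb ^ k * v‖ = (ρb ^ k * v).re := by
      conv_lhs => rw [e]
      rw [Complex.norm_real, Real.norm_eq_abs, abs_of_nonneg k2]
    rw [norm_ρbj] at this
    rw [e, this]
  have hjk : ρb ^ j = -ρb ^ k := by
    have hv0 : v ≠ 0 := h.ne t0 ht0
    have : (ρb ^ j + ρb ^ k) * v = 0 := by rw [add_mul, j3, k3]; push_cast; ring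
    rcases mul_eq_zero.1 this with h | h
    · exact eq_neg_of_add_eq_zero_left h
    · exact absurd h hv0
  set θ := fun t => (ρb ^ k * hh A B (γ t)).re with hθ
  have hz0 : θ t0 = 0 := by simp [hθ, h0, hh_zero]
  have hpos : ∀ t ∈ Ioo t0 b, 0 < θ t := fun t ht => T0_re (kT t ht)
  have hneg : ∀ t ∈ Ioo a t0, θ t < 0 := fun t ht => by
    have := T0_re (jT t ht)
    rw [hjk, neg_mul, Complex.neg_re] at this
    change (ρb ^ k * hh A B (γ t)).re < 0
    linarith
  have hreal : ∀ t ∈ Ioo a b, (ρb ^ k * hh A B (γ t)).im = 0 := by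
    intro t ht
    rcases lt_trichotomy t t0 with h3 | rfl | h3
    · have := (hj t ⟨ht.1, h3⟩).1
      rwa [hjk, neg_mul, Complex.neg_im, neg_eq_zero] at this
    · simp [h0, hh_zero]
    · exact (hk t ⟨h3, ht.2⟩).1
  have hrec : ∀ t ∈ Ioo a b, hh A B (γ t) = ρ ^ k * (θ t : ℂ) := by
    intro t ht
    rw [← real_of (hreal t ht), ρρb_pow]
  have hθc : ContinuousOn θ (Ioo a b) := by
    have : ContinuousOn (fun t => ρb ^ k * hh A B (γ t)) (Ioo a b) := by fun_prop
    exact Complex.continuous_re.comp_continuousOn this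
  have hθi : InjOn θ (Ioo a b) := by
    intro s hs t ht he
    have heγ : γ s = γ t := by
      apply hh_inj g
      rw [hrec s hs, hrec t ht, he]
    rcases lt_trichotomy s t0 with h3 | h3 | h3 <;> rcases lt_trichotomy t t0 with h4 | h4 | h4
    · exact iL ⟨hs.1, h3⟩ ⟨ht.1, h4⟩ heγ
    · have := hneg s ⟨hs.1, h3⟩; rw [h4] at he; linarith
    · have := hneg s ⟨hs.1, h3⟩; have := hpos t ⟨h4, ht.2⟩; linarith
    · have := hneg t ⟨ht.1, h4⟩; rw [h3] at he; linarith
    · exact h3.trans h4.symm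
    · have := hpos t ⟨h4, ht.2⟩; rw [h3] at he; linarith
    · have := hpos s ⟨h3, hs.2⟩; have := hneg t ⟨ht.1, h4⟩; linarith
    · have := hpos s ⟨h3, hs.2⟩; rw [h4] at he; linarith
    · exact iR ⟨h3, hs.2⟩ ⟨h4, ht.2⟩ heγ
  obtain ⟨a', b', hab', him⟩ := img_Ioo (C := C) hab hθc hθi (by
    intro t ht
    refine (Complex.abs_re_le_norm _).trans ?_
    rw [norm_ρbj]; exact hC t ht)
  refine ⟨k, a', b', hab', Or.inr ?_⟩
  rw [← him, image_image, image_image]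
  exact image_congr hrec

lemma fwd (g : GoodP M R A B) {γ γ' : ℝ → ℂ} {a b C : ℝ} (hab : a < b)
    (h : Crv A B γ γ' (Ioo a b)) (hC : ∀ t ∈ Ioo a b, ‖γ t‖ ≤ C) :
    Arc (hh A B '' (γ '' Ioo a b)) := by
  have hC' : ∀ t ∈ Ioo a b, ‖hh A B (γ t)‖ ≤ 2 * C := by
    intro t ht
    have h1 := hh_norm g (γ t)
    have h2 := hC t ht
    have h3 := norm_nonneg (γ t)
    have := norm_add_le (γ t) (hh A B (γ t) - γ t)
    rw [add_sub_cancel] at this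
    linarith
  by_cases hz : ∃ t0 ∈ Ioo a b, γ t0 = 0
  · obtain ⟨t0, ht0, h0⟩ := hz
    exact fwd_z g hab h ht0 h0 hC'
  · push Not at hz
    exact fwd_nz g hab h hz hC'

end SB

namespace SB

variable {M R : ℝ} {A B : ℂ → ℝ}

lemma mono_img {θ : ℝ → ℝ} (hc : Continuous θ) (hm : StrictMono θ) {ε C : ℝ} (hε : 0 < ε)
    (hb : ∀ x, ε * |x| - C ≤ |θ x|) {a b : ℝ} (hab : a < b) :
    ∃ a' b', a' < b' ∧ θ '' Ioo a' b' = Ioo a b := by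
  have hs : Function.Surjective θ := by
    intro y
    have h1 : ∃ x, y ≤ θ x := by
      by_contra! hcon
      set x := (|y| + |θ 0| + |C| + 1) / ε with hx
      have hx0 : 0 < x := by positivity
      have h2 := hb x
      rw [abs_of_pos hx0, hx, mul_div_cancel₀ _ hε.ne', ← hx] at h2
      have h3 := hm hx0
      have h4 := hcon x
      have h5 : |θ x| ≤ |y| + |θ 0| := by
        rw [abs_le]
        have := neg_abs_le (θ 0); have := le_abs_self y
        have := abs_nonneg y; have := abs_nonneg (θ 0)
        constructor <;> linarith
      have := le_abs_self C
      linarith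
    have h2 : ∃ x, θ x ≤ y := by
      by_contra! hcon
      set x := (|y| + |θ 0| + |C| + 1) / ε with hx
      have hx0 : 0 < x := by positivity
      have h2 := hb (-x)
      rw [abs_neg, abs_of_pos hx0, hx, mul_div_cancel₀ _ hε.ne', ← hx] at h2
      have h3 := hm (neg_lt_zero.2 hx0)
      have h4 := hcon (-x)
      have h5 : |θ (-x)| ≤ |y| + |θ 0| := by
        rw [abs_le]
        have := le_abs_self (θ 0); have := neg_abs_le y
        have := abs_nonneg y; have := abs_nonneg (θ 0)
        constructor <;> linarith
      have := le_abs_self C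
      linarith
    obtain ⟨x1, h1⟩ := h1
    obtain ⟨x2, h2⟩ := h2
    exact mem_range_of_exists_le_of_exists_ge hc ⟨x2, h2⟩ ⟨x1, h1⟩
  obtain ⟨a', rfl⟩ := hs a
  obtain ⟨b', rfl⟩ := hs b
  refine ⟨a', b', hm.lt_iff_lt.1 hab, ?_⟩
  exact (hm.orderIsoOfSurjective θ hs).image_Ioo a' b'

lemma lin_img {θ : ℝ → ℝ} (hc : Continuous θ) (hi : Function.Injective θ) {ε C : ℝ} (hε : 0 < ε)
    (hb : ∀ x, ε * |x| - C ≤ |θ x|) {a b : ℝ} (hab : a < b) :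
    ∃ a' b', a' < b' ∧ θ '' Ioo a' b' = Ioo a b := by
  rcases hc.strictMono_of_inj hi with hm | hm
  · exact mono_img hc hm hε hb hab
  · have hm' : StrictMono (fun x => θ (-x)) := fun x y hxy => hm (neg_lt_neg hxy)
    obtain ⟨a', b', h1, h2⟩ := mono_img (θ := fun x => θ (-x)) (by fun_prop) hm' hε
      (fun x => by simpa using hb (-x)) hab
    refine ⟨-b', -a', by linarith, ?_⟩
    rw [← h2, ← image_neg_Ioo, image_image]

def Real' (A B : ℂ → ℝ) (X : Set ℂ) : Prop := ∃ (γ γ' : ℝ → ℂ) (a b : ℝ), a < b ∧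
  Crv A B γ γ' (Ioo a b) ∧ hh A B '' (γ '' Ioo a b) = X

lemma ty0.unrot {z v : ℂ} (h : ty0 (SB.rot A) z v) : ty1 A (ρ * z) (ρ * v) := by
  obtain ⟨k, hk, e⟩ := h
  refine ⟨k, hk, ?_⟩
  rw [SB.rot] at e
  rw [← e]
  linear_combination (z * v ^ 2) * ρ_cube
lemma ty1.unrot {z v : ℂ} (h : ty1 (SB.rot A) z v) : ty0 A (ρ * z) (ρ * v) := by
  obtain ⟨k, hk, e⟩ := h
  refine ⟨k, hk, ?_⟩
  rw [SB.rot] at e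
  rw [← neg_eq_iff_eq_neg.2 e]
  linear_combination (z * v ^ 2) * ρ_cube

lemma Crv.unrot {γ γ' : ℝ → ℂ} {I : Set ℝ} (h : Crv (rot B) (rot A) γ γ' I) :
    Crv A B (fun t => ρ * γ t) (fun t => ρ * γ' t) I where
  der t ht := (h.der t ht).const_mul ρ
  cont := by have := h.cont; fun_prop
  ne t ht := mul_ne_zero ρ_ne (h.ne t ht)
  typ t ht := by
    rcases h.typ t ht with h1 | h1 | h1
    · left; rw [h1, mul_zero]
    · right; right; exact h1.unrot
    · right; left; exact h1.unrot

lemma Real'.unrot {X : Set ℂ} (h : Real' (rot B) (rot A) X) : Real' A B ((fun z => ρ * z) '' X) := by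
  obtain ⟨γ, γ', a, b, hab, h1, h2⟩ := h
  refine ⟨_, _, a, b, hab, h1.unrot, ?_⟩
  rw [← h2, image_image, image_image, image_image]
  simp only [hh_rot']

/-- half curves -/
lemma half (g : Good M R A) : ∃ G G' : ℝ → ℂ, G 0 = 0 ∧ G' 0 = 1 ∧
    (∀ r : ℝ, 0 < r → HasDerivAt G (G' r) r ∧ ty0 A (G r) (G' r) ∧ G r ∈ T ∧ Φ A (Q (G r)) = 0 ∧
      ‖G r - r‖ ≤ r / 1000 ∧ (Q (G r)).re = r ^ (3/2 : ℝ)) ∧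
    HasDerivWithinAt G 1 (Ici 0) 0 ∧ ContinuousOn G' (Ici 0) := by
  obtain ⟨ψ, hψ, hψ0⟩ := exists_sol g (u0 := 0) (v0 := 0) le_rfl
  set σ : ℝ → ℝ := fun r => ψ (r ^ (3/2 : ℝ)) / r ^ (3/2 : ℝ) with hσ
  have hσ0 : σ 0 = 0 := by simp [hσ]
  have hσle : ∀ r, 0 ≤ r → |σ r| ≤ 1/1000 := by
    intro r hr
    have hu : 0 ≤ r ^ (3/2 : ℝ) := by positivity
    have := hψ.lip g hu le_rfl
    rw [hψ0, sub_zero, sub_zero, abs_of_nonneg hu] at this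
    simp only [hσ]
    rw [abs_div, abs_of_nonneg hu]
    apply div_le_of_le_mul₀ hu (by norm_num)
    exact this.trans (mul_le_mul_of_nonneg_right g.small hu)
  have hupos : ∀ r : ℝ, 0 < r → 0 < r ^ (3/2 : ℝ) := fun r hr => by positivity
  have hσc0 : ContinuousWithinAt σ (Ici 0) 0 := by
    have h1 := hψ.deriv0 g le_rfl
    rw [hψ0] at h1
    have e0 : pt 0 0 = 0 := rfl
    rw [e0, P_zero, g.zero, hasDerivWithinAt_iff_tendsto_slope] at h1
    have h2 : ContinuousWithinAt (fun u => ψ u / u) (Ici 0) 0 := by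
      rw [← continuousWithinAt_sdiff_self]
      unfold ContinuousWithinAt
      simp only [div_zero]
      refine h1.congr (fun u => ?_)
      rw [slope_def_field, hψ0, sub_zero, sub_zero]
    have h3 : ContinuousWithinAt (fun r : ℝ => r ^ (3/2 : ℝ)) (Ici 0) 0 :=
      (Real.continuousAt_rpow_const _ _ (Or.inr (by norm_num))).continuousWithinAt
    have h4 : (0 : ℝ) ^ (3/2 : ℝ) = 0 := Real.zero_rpow (by norm_num)
    exact ContinuousWithinAt.comp (t := Ici 0) (g := fun u => ψ u / u) (by simpa only [h4] using h2) h3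
      (fun r hr => Real.rpow_nonneg hr _)
  have hσd : ∀ r : ℝ, 0 < r →
      HasDerivAt σ ((3/2) * (A (P (pt (r ^ (3/2 : ℝ)) (ψ (r ^ (3/2 : ℝ))))) - σ r) / r) r := by
    intro r hr
    have h1 : HasDerivAt (fun r : ℝ => r ^ (3/2 : ℝ)) ((3/2) * r ^ ((3/2 : ℝ) - 1)) r :=
      Real.hasDerivAt_rpow_const (Or.inl hr.ne')
    have h2 := (hψ.der _ (hupos r hr)).comp r h1
    have h3 := h2.div h1 (hupos r hr).ne'
    convert! h3 using 1
    simp only [hσ, Function.comp]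
    rw [Real.rpow_sub hr, Real.rpow_one]
    have := (hupos r hr).ne'
    field_simp
  set s : ℝ → ℂ := fun r => 1 + (σ r : ℂ) * Complex.I with hs
  have hsre : ∀ r, (s r).re = 1 := fun r => by simp [hs]
  have hsne : ∀ r, s r ≠ 0 := fun r h => by have := hsre r; rw [h] at this; simp at this
  have hss : ∀ r, s r ∈ Complex.slitPlane := fun r => slit_of_re (by rw [hsre]; norm_num) (hsne r)
  have hsc : ContinuousOn s (Ici 0) := by
    have : ContinuousOn σ (Ici 0) := by
      intro r hr
      rcases (mem_Ici.1 hr).eq_or_lt with rfl | h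
      · exact hσc0
      · exact (hσd r h).continuousAt.continuousWithinAt
    simp only [hs]
    exact continuousOn_const.add ((Complex.continuous_ofReal.comp_continuousOn this).mul continuousOn_const)
  have hPs : ContinuousOn (fun r => P (s r)) (Ici 0) := fun r hr =>
    (P_continuousAt (by rw [hsre]; norm_num)).comp_continuousWithinAt (hsc r hr)
  set G : ℝ → ℂ := fun r => (r : ℂ) * P (s r) with hG
  have hGP : ∀ r : ℝ, 0 < r → G r = P (pt (r ^ (3/2 : ℝ)) (ψ (r ^ (3/2 : ℝ)))) := by
    intro r hr
    have hu := hupos r hr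
    have e1 : pt (r ^ (3/2 : ℝ)) (ψ (r ^ (3/2 : ℝ))) = ((r ^ (3/2 : ℝ) : ℝ) : ℂ) * s r := by
      simp only [hs, hσ]
      rw [pt_eq]
      have : ((r ^ (3/2 : ℝ) : ℝ) : ℂ) ≠ 0 := Complex.ofReal_ne_zero.2 hu.ne'
      push_cast
      field_simp
    rw [e1, P_mul (Complex.ofReal_ne_zero.2 hu.ne') (hsne r)
      (by rw [Complex.arg_ofReal_of_nonneg hu.le, zero_add]; exact ⟨Complex.neg_pi_lt_arg _, Complex.arg_le_pi _⟩)]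
    simp only [hG]
    congr 1
    unfold P
    rw [← Complex.ofReal_cpow hu.le, ← Real.rpow_mul hr.le]
    norm_num
  refine ⟨G, fun r => (s r) ^ ((-1/3 : ℝ) : ℂ) * (1 + (A (G r) : ℂ) * Complex.I), by simp [hG], ?_, ?_, ?_, ?_⟩
  · have : G 0 = 0 := by simp [hG]
    simp [this, g.zero, hs, hσ0]
  · intro r hr
    have hu := hupos r hr
    refine ⟨?_, ?_, ?_, ?_, ?_, ?_⟩
    · have h1 : HasDerivAt s ((((3/2) * (A (G r) - σ r) / r : ℝ) : ℂ) * Complex.I) r := by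
        rw [hGP r hr]
        exact ((hσd r hr).ofReal_comp.mul_const Complex.I).const_add 1
      have h2 := (hasDerivAt_P (hss r)).comp r h1
      have h3 := (Complex.ofRealCLM.hasDerivAt (x := r)).mul h2
      convert! h3 using 1
      have hr' : (r : ℂ) ≠ 0 := Complex.ofReal_ne_zero.2 hr.ne'
      have e1 : P (s r) = s r * (s r) ^ ((-1/3 : ℝ) : ℂ) := by
        unfold P
        rw [show ((2/3 : ℝ) : ℂ) = 1 + ((-1/3 : ℝ) : ℂ) by push_cast; ring,
          Complex.cpow_add _ _ (hsne r), Complex.cpow_one]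
      simp only [Function.comp, Complex.ofRealCLM_apply, e1]
      push_cast
      simp only [hs]
      field_simp
      ring
    · refine ⟨r, hr, ?_⟩
      have := P_deriv_sq (hsne r)
      simp only [hG]
      linear_combination (r * (1 + (A (G r) : ℂ) * Complex.I) ^ 2) * this
    · rw [hGP r hr]; exact P_mem_T hu.le
    · rw [hGP r hr, Q_P, Φ_sol g hψ hu.le, hψ0]
    · have e1 : G r - r = r * (P (s r) - P (1 + 0)) := by
        simp only [hG]; rw [add_zero, P_one]; ring
      rw [e1, norm_mul, Complex.norm_real, Real.norm_eq_abs, abs_of_pos hr]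
      have h1 : ‖(σ r : ℂ) * Complex.I‖ ≤ 1/1000 := by simpa using hσle r hr.le
      have := P_lip_one (s := (σ r : ℂ) * Complex.I) (s' := 0) (by linarith) (by simp)
      rw [sub_zero] at this
      calc r * _ ≤ r * (1/1000) := mul_le_mul_of_nonneg_left (this.trans h1) hr.le
        _ = _ := by ring
    · rw [hGP r hr, Q_P, pt_re]
  · rw [hasDerivWithinAt_iff_tendsto_slope]
    have h1 : Tendsto (fun r => P (s r)) (nhdsWithin 0 (Ici 0 \ {0})) (nhds 1) := by
      have := (hPs 0 (by simp)).mono (sdiff_subset (t := {(0 : ℝ)}))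
      have e : P (s 0) = 1 := by simp only [hs, hσ0]; simp [P_one]
      change Tendsto _ _ (nhds (P (s 0))) at this
      rwa [e] at this
    refine h1.congr' ?_
    filter_upwards [self_mem_nhdsWithin] with r hr
    have hr' : (r : ℂ) ≠ 0 := Complex.ofReal_ne_zero.2 hr.2
    rw [slope_def_module]
    simp only [hG, Complex.real_smul]
    push_cast
    field_simp
    simp
  · have hGc : ContinuousOn G (Ici 0) := by
      simp only [hG]
      exact Complex.continuous_ofReal.continuousOn.mul hPs
    have hAc := g.cont.comp_continuousOn hGc
    have h1 : ContinuousOn (fun r => s r ^ ((-1/3 : ℝ) : ℂ)) (Ici 0) := fun r hr =>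
      (hsc r hr).cpow continuousWithinAt_const (hss r)
    refine h1.mul ?_
    exact continuousOn_const.add ((Complex.continuous_ofReal.comp_continuousOn hAc).mul continuousOn_const)

end SB

namespace SB

variable {M R : ℝ} {A B : ℂ → ℝ}

lemma ty0.ne {z v : ℂ} (g : Good M R A) (h : ty0 A z v) : v ≠ 0 ∧ z ≠ 0 := by
  have := h.re_pos g
  constructor <;> rintro rfl <;> simp at this
lemma ty1.ne {z v : ℂ} (g : Good M R A) (h : ty1 A z v) : v ≠ 0 ∧ z ≠ 0 := by
  have := h.re_neg g
  constructor <;> rintro rfl <;> simp at this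

lemma half_hh (g : GoodP M R A B) {z : ℂ} {r : ℝ} (hr : 0 < r) (hT : z ∈ T) (hΦ : Φ A (Q z) = 0)
    (hz : ‖z - r‖ ≤ r / 1000) : (hh A B z).im = 0 ∧ r / 2 ≤ (hh A B z).re := by
  have h1 := hh_norm g z
  have h2 : ‖z‖ ≤ r + r / 1000 := by
    have := norm_add_le (r : ℂ) (z - r)
    rw [add_sub_cancel, Complex.norm_real, Real.norm_eq_abs, abs_of_pos hr] at this
    linarith
  have h3 : ‖hh A B z - r‖ ≤ r / 5 := by
    have := norm_add_le (hh A B z - z) (z - r)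
    rw [sub_add_sub_cancel] at this
    linarith
  have h4 := (Complex.abs_re_le_norm _).trans h3
  have h5 := (Complex.abs_im_le_norm _).trans h3
  simp at h4 h5
  rw [abs_le] at h4 h5
  refine ⟨?_, by linarith [h4.1]⟩
  apply im_zero_of
  · rw [mem_T, abs_le]
    have e1 := s3; have e2 := s3pos
    constructor <;> nlinarith
  · rw [N0_hh g hT, hΦ]; ring

lemma hh_neg (z : ℂ) : hh A B (-z) = -hh (rot (rot (rot B))) (rot (rot (rot A))) z := by
  have e : ∀ z : ℂ, -z = ρ * (ρ * (ρ * z)) := fun z => by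
    linear_combination -z * ρ_cube
  rw [e, hh_rot', hh_rot', hh_rot', ← e]

lemma rpow_inj {r s : ℝ} (hr : 0 < r) (hs : 0 < s) (h : r ^ (3/2 : ℝ) = s ^ (3/2 : ℝ)) : r = s := by
  have := congrArg (fun x : ℝ => x ^ (2/3 : ℝ)) h
  simp only [← Real.rpow_mul hr.le, ← Real.rpow_mul hs.le] at this
  norm_num at this
  exact this

lemma bwdB (g : GoodP M R A B) {a b : ℝ} (hab : a < b) :
    Real' A B ((fun s : ℝ => (s : ℂ)) '' Ioo a b) := by
  obtain ⟨G, G', G0, G0', hG, hGd, hGc⟩ := half g.a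
  have g3 := g.rot.rot.rot
  obtain ⟨K, K', K0, K0', hK, hKd, hKc⟩ := half g3.a
  set Γ : ℝ → ℂ := fun r => if 0 ≤ r then G r else -K (-r) with hΓ
  set Γ' : ℝ → ℂ := fun r => if 0 ≤ r then G' r else K' (-r) with hΓ'
  have Γp : ∀ r, 0 ≤ r → Γ r = G r := fun r hr => by simp [hΓ, hr]
  have Γn : ∀ r, r ≤ 0 → Γ r = -K (-r) := fun r hr => by
    rcases hr.lt_or_eq with h | rfl
    · simp [hΓ, not_le.2 h]
    · simp [hΓ, G0, K0]
  have Γp' : ∀ r, 0 ≤ r → Γ' r = G' r := fun r hr => by simp [hΓ', hr]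
  have Γn' : ∀ r, r ≤ 0 → Γ' r = K' (-r) := fun r hr => by
    rcases hr.lt_or_eq with h | rfl
    · simp [hΓ', not_le.2 h]
    · simp [hΓ', G0', K0']
  have Γ0 : Γ 0 = 0 := by rw [Γp 0 le_rfl, G0]
  have hd : ∀ r, HasDerivAt Γ (Γ' r) r := by
    intro r
    rcases lt_trichotomy r 0 with h | rfl | h
    · rw [Γn' r h.le]
      have h1 := (hK (-r) (by linarith)).1.scomp r (hasDerivAt_neg r)
      have h2 := h1.neg
      simp only [neg_smul, one_smul, neg_neg] at h2
      apply h2.congr_of_eventuallyEq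
      filter_upwards [Iio_mem_nhds h] with s hs
      rw [Γn s (le_of_lt hs)]; rfl
    · rw [Γp' 0 le_rfl, G0', ← hasDerivWithinAt_univ, ← Ici_union_Iic (a := (0:ℝ))]
      apply HasDerivWithinAt.union
      · exact hGd.congr (fun r hr => Γp r hr) (Γp 0 le_rfl)
      · have h1 : HasDerivWithinAt K 1 (Ici 0) (-0) := by simpa using hKd
        have h2 := (h1.scomp (h := fun r : ℝ => -r) (s := Iic 0) (x := (0:ℝ)) (hasDerivAt_neg (0:ℝ)).hasDerivWithinAt
          (fun r hr => by simpa using hr)).neg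
        simp only [neg_smul, one_smul, neg_neg] at h2
        exact h2.congr (fun r hr => Γn r hr) (Γn 0 le_rfl)
    · rw [Γp' r h.le]
      apply (hG r h).1.congr_of_eventuallyEq
      filter_upwards [Ioi_mem_nhds h] with s hs
      rw [Γp s (le_of_lt hs)]
  have hc' : Continuous Γ' := by
    rw [← continuousOn_univ, ← Ici_union_Iic (a := (0:ℝ))]
    apply ContinuousOn.union_of_isClosed _ _ isClosed_Ici isClosed_Iic
    · exact hGc.congr (fun r hr => Γp' r hr)
    · have : ContinuousOn (fun r : ℝ => K' (-r)) (Iic 0) :=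
        hKc.comp continuous_neg.continuousOn (fun r hr => by simpa using hr)
      exact this.congr (fun r hr => Γn' r hr)
  have hpt : ∀ r, 0 < r → (hh A B (Γ r)).im = 0 ∧ r / 2 ≤ (hh A B (Γ r)).re := by
    intro r hr
    obtain ⟨-, -, h3, h4, h5, -⟩ := hG r hr
    rw [Γp r hr.le]
    exact half_hh g hr h3 h4 h5
  have hnt : ∀ r, r < 0 → (hh A B (Γ r)).im = 0 ∧ (hh A B (Γ r)).re ≤ r / 2 := by
    intro r hr
    obtain ⟨-, -, h3, h4, h5, -⟩ := hK (-r) (by linarith)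
    rw [Γn r hr.le, hh_neg]
    have := half_hh g3 (by linarith) h3 h4 h5
    simp only [Complex.neg_im, Complex.neg_re, neg_eq_zero]
    exact ⟨this.1, by linarith [this.2]⟩
  set θ := fun r => (hh A B (Γ r)).re with hθ
  have hrec : ∀ r, hh A B (Γ r) = (θ r : ℂ) := by
    intro r
    apply real_of
    rcases lt_trichotomy r 0 with h | rfl | h
    · exact (hnt r h).1
    · simp [Γ0, hh_zero]
    · exact (hpt r h).1
  have hθ0 : θ 0 = 0 := by simp [hθ, Γ0, hh_zero]
  have hθc : Continuous θ := by
    have : Continuous Γ := continuous_iff_continuousAt.2 (fun r => (hd r).continuousAt)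
    exact Complex.continuous_re.comp ((hh_cont g).comp this)
  have hsp : ∀ r, 0 < r → r / 2 ≤ θ r := fun r hr => (hpt r hr).2
  have hsn : ∀ r, r < 0 → θ r ≤ r / 2 := fun r hr => (hnt r hr).2
  have hθi : Function.Injective θ := by
    intro s t he
    have heΓ : Γ s = Γ t := by
      apply hh_inj g; rw [hrec, hrec, he]
    rcases lt_trichotomy s 0 with h3 | h3 | h3 <;> rcases lt_trichotomy t 0 with h4 | h4 | h4
    · rw [Γn s h3.le, Γn t h4.le, neg_inj] at heΓ
      have := (hK (-s) (by linarith)).2.2.2.2.2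
      rw [heΓ, (hK (-t) (by linarith)).2.2.2.2.2] at this
      have := rpow_inj (by linarith) (by linarith) this
      linarith
    · have := hsn s h3; rw [h4, hθ0] at he; linarith
    · have := hsn s h3; have := hsp t h4; linarith
    · have := hsn t h4; rw [h3, hθ0] at he; linarith
    · rw [h3, h4]
    · have := hsp t h4; rw [h3, hθ0] at he; linarith
    · have := hsp s h3; have := hsn t h4; linarith
    · have := hsp s h3; rw [h4, hθ0] at he; linarith
    · rw [Γp s h3.le, Γp t h4.le] at heΓ
      have := (hG s h3).2.2.2.2.2
      rw [heΓ, (hG t h4).2.2.2.2.2] at this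
      exact (rpow_inj h4 h3 this).symm
  obtain ⟨a', b', hab', him⟩ := lin_img hθc hθi (ε := 1/2) (C := 0) (by norm_num) (by
    intro r
    rcases lt_trichotomy r 0 with h | rfl | h
    · have := hsn r h; rw [abs_of_neg h, abs_of_neg (by linarith)]; linarith
    · simp
    · have := hsp r h; rw [abs_of_pos h, abs_of_pos (by linarith)]; linarith) hab
  refine ⟨Γ, Γ', a', b', hab', ⟨fun t _ => hd t, hc'.continuousOn, ?_, ?_⟩, ?_⟩
  · intro r _
    rcases lt_trichotomy r 0 with h | rfl | h
    · rw [Γn' r h.le]; exact ((hK (-r) (by linarith)).2.1.ne g3.a).1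
    · rw [Γp' 0 le_rfl, G0']; exact one_ne_zero
    · rw [Γp' r h.le]; exact ((hG r h).2.1.ne g.a).1
  · intro r _
    rcases lt_trichotomy r 0 with h | rfl | h
    · right; right
      rw [Γn' r h.le, Γn r h.le]
      obtain ⟨k, hk, e⟩ := (hK (-r) (by linarith)).2.1
      refine ⟨k, hk, ?_⟩
      have e2 : rot (rot (rot B)) (K (-r)) = B (-K (-r)) := by
        unfold rot
        congr 1
        linear_combination (K (-r)) * ρ_cube
      rw [← e2, ← e]; ring
    · left; exact Γ0
    · right; left
      rw [Γp' r h.le, Γp r h.le]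
      exact (hG r h).2.1
  · rw [← him, image_image, image_image]
    exact image_congr (fun r _ => hrec r)

end SB

namespace SB

variable {M R : ℝ} {A B : ℂ → ℝ}

lemma ode (g : Good M R B) {c0 : ℝ} (hc : 0 < c0) :
    ∃ y : ℝ → ℝ, y 0 = c0 ∧ ∀ x, HasDerivAt y (-B (P (pt (y x) x))) x := by
  obtain ⟨p, hp, hp0⟩ := exists_sol (good_comp g norm_ρ) (u0 := 0) (v0 := -c0) le_rfl
  obtain ⟨q, hq, hq0⟩ := exists_sol (good_comp g norm_ρb) (u0 := 0) (v0 := c0) le_rfl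
  set y : ℝ → ℝ := fun x => if 0 ≤ x then -p x else q (-x) with hy
  have yp : ∀ r, 0 ≤ r → y r = -p r := fun r hr => by simp [hy, hr]
  have yn : ∀ r, r ≤ 0 → y r = q (-r) := fun r hr => by
    rcases hr.lt_or_eq with h | rfl
    · simp [hy, not_le.2 h]
    · simp [hy, hp0, hq0]
  have e1 : ∀ x, 0 ≤ x → P (pt (y x) x) = ρ * P (pt x (p x)) := by
    intro x hx
    rw [← P_I_mul, yp x hx]
    · congr 1; apply Complex.ext <;> simp
    · have : |(pt x (p x)).arg| ≤ Real.pi / 2 := by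
        rw [Complex.abs_arg_le_pi_div_two_iff]; simpa using hx
      exact (abs_le.1 this).2
  have e2 : ∀ x, x ≤ 0 → P (pt (y x) x) = ρb * P (pt (-x) (q (-x))) := by
    intro x hx
    rw [← P_negI_mul, yn x hx]
    · congr 1; apply Complex.ext <;> simp
    · have h3 := Real.pi_pos
      rcases hx.lt_or_eq with h | rfl
      · have : |(pt (-x) (q (-x))).arg| < Real.pi / 2 := by
          rw [Complex.abs_arg_lt_pi_div_two_iff]; left; simpa using h
        exact (abs_lt.1 this).1
      · have : 0 ≤ (pt (-0) (q (-0))).arg := by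
          rw [Complex.arg_nonneg_iff]; simp [hq0, hc.le]
        refine lt_of_lt_of_le ?_ this
        linarith
  have d1 : ∀ x, 0 ≤ x → HasDerivWithinAt y (-B (P (pt (y x) x))) (Ici 0) x := by
    intro x hx
    rw [e1 x hx]
    exact ((hp.deriv0 (good_comp g norm_ρ) hx).neg).congr (fun r hr => yp r hr) (yp x hx)
  have d2 : ∀ x, x ≤ 0 → HasDerivWithinAt y (-B (P (pt (y x) x))) (Iic 0) x := by
    intro x hx
    rw [e2 x hx]
    have h1 := hq.deriv0 (good_comp g norm_ρb) (u := -x) (by linarith)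
    have h2 := h1.scomp (h := fun r : ℝ => -r) (s := Iic 0) (x := x) (hasDerivAt_neg x).hasDerivWithinAt
          (fun r hr => by simpa using hr)
    simp only [neg_smul, one_smul] at h2
    exact h2.congr (fun r hr => yn r hr) (yn x hx)
  refine ⟨y, by rw [yp 0 le_rfl, hp0, neg_neg], fun x => ?_⟩
  rcases lt_trichotomy x 0 with h | rfl | h
  · exact (d2 x h.le).hasDerivAt (Iic_mem_nhds h)
  · rw [← hasDerivWithinAt_univ, ← Ici_union_Iic (a := (0:ℝ))]
    exact (d1 0 le_rfl).union (d2 0 le_rfl)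
  · exact (d1 x h.le).hasDerivAt (Ici_mem_nhds h)

lemma bwdA (g : GoodP M R A B) {c0 : ℝ} (hc : 0 < c0) {a b : ℝ} (hab : a < b) :
    Real' A B ((fun s : ℝ => P (pt c0 s)) '' Ioo a b) := by
  obtain ⟨y, y0, hy⟩ := ode g.b hc
  set w : ℝ → ℂ := fun x => pt (y x) x with hw
  have hs : ∀ x, w x ∈ Complex.slitPlane := by
    intro x
    rw [Complex.mem_slitPlane_iff]
    rcases eq_or_ne x 0 with rfl | h
    · left; simp [hw, y0, hc]
    · right; simpa [hw] using h
  have hw0 : ∀ x, w x ≠ 0 := fun x => Complex.slitPlane_ne_zero (hs x)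
  set Γ : ℝ → ℂ := fun x => P (w x) with hΓ
  have dw : ∀ x, HasDerivAt w (-(B (Γ x) : ℂ) + Complex.I) x := by
    intro x
    have h1 := (hy x).ofReal_comp
    have h2 := ((Complex.ofRealCLM.hasDerivAt (x := x)).mul_const Complex.I)
    have h3 := h1.add h2
    have e : w = fun x => ((y x : ℝ) : ℂ) + (x : ℂ) * Complex.I := by
      funext x; exact pt_eq _ _
    rw [e]
    refine h3.congr_deriv ?_
    simp [hΓ, hw]
  have wc : Continuous w := continuous_iff_continuousAt.2 (fun r => (dw r).continuousAt)
  set Γ' : ℝ → ℂ := fun x => (2/3) * (w x) ^ ((-1/3 : ℝ) : ℂ) * (-(B (Γ x) : ℂ) + Complex.I) with hΓ'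
  have dΓ : ∀ x, HasDerivAt Γ (Γ' x) x := fun x => (hasDerivAt_P (hs x)).comp x (dw x)
  have Γc : Continuous Γ := continuous_iff_continuousAt.2 (fun r => (dΓ r).continuousAt)
  have Γc' : Continuous Γ' := by
    apply Continuous.mul
    · apply continuous_const.mul
      exact wc.cpow continuous_const hs
    · exact ((Complex.continuous_ofReal.comp (g.b.cont.comp Γc)).neg).add continuous_const
  have Γ0 : ∀ x, Γ x ≠ 0 := fun x => P_ne (hw0 x)
  have typ : ∀ x, ty1 B (Γ x) (Γ' x) := by
    intro x
    refine ⟨4/9, by norm_num, ?_⟩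
    have := P_deriv_sq (hw0 x)
    simp only [hΓ']
    have hI : Complex.I ^ 2 = -1 := Complex.I_sq
    change Γ x * _ = 1 at this
    set W := w x ^ ((-1/3 : ℝ) : ℂ)
    push_cast
    linear_combination (4/9) * (-(B (Γ x) : ℂ) + Complex.I) ^ 2 * this + (4/9) * (1 + (B (Γ x) : ℂ)^2) * hI
  set c : ℝ → ℂ := fun x => hh A B (Γ x) with hcdef
  have cc : Continuous c := (hh_cont g).comp Γc
  have hN : ∀ x, N1 (c x) = N1 (c 0) := by
    intro x
    exact is_const_of_deriv_eq_zero (f := fun x => N1 (c x))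
      (fun x => (F1' g (dΓ x) (Γ0 x) (typ x)).differentiableAt)
      (fun x => (F1' g (dΓ x) (Γ0 x) (typ x)).deriv) x 0
  have w00 : w 0 = (c0 : ℂ) := by apply Complex.ext <;> simp [hw, y0]
  have G0 : Γ 0 = ((c0 ^ (2/3 : ℝ) : ℝ) : ℂ) := by
    simp only [hΓ, w00, P]
    rw [Complex.ofReal_cpow hc.le]
  have hr : 0 < c0 ^ (2/3 : ℝ) := by positivity
  set r0 := c0 ^ (2/3 : ℝ)
  have GT : Γ 0 ∈ T := by
    rw [G0, mem_T]; simp; exact hr.le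
  have hN0 : N1 (c 0) = 2 * c0 ^ 2 := by
    have i0 : (0:ℝ) ≤ (Γ 0).im := by rw [G0]; simp
    rw [← N0_ρb, hcdef, ← hh_rotb, N0_hh g.rot (ρb_mul_T GT i0), Q_ρb_mul GT i0]
    have : Q (Γ 0) = c0 := by rw [hΓ]; simp only; rw [Q_P, w00]
    rw [this, Φ_re_zero g.rot.a (by simp)]; simp
  have hT0 : ∀ x, c x ∈ T0 := by
    intro x
    apply sector_core isPreconnected_univ c cc.continuousOn _ 0 (mem_univ _) _ x (mem_univ _)
    · intro t _; rw [hN, hN0]; positivity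
    · have h1 := hh_norm g (Γ 0)
      have h2 : ‖Γ 0‖ = r0 := by rw [G0, Complex.norm_real, Real.norm_eq_abs, abs_of_pos hr]
      rw [h2] at h1
      have h4 := (Complex.abs_re_le_norm _).trans h1
      have h5 := (Complex.abs_im_le_norm _).trans h1
      rw [G0] at h4 h5
      simp at h4 h5
      rw [← G0] at h4 h5
      rw [mem_T0]
      have e1 := s3; have e2 := s3pos
      rw [abs_le] at h4
      have h6 : (9/10) * r0 ≤ (c 0).re := by
        have := h4.1; simp only [hcdef]; linarith
      have h7 : 1 < √3 := by nlinarith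
      change |(c 0).im| ≤ _ at h5
      nlinarith
  have hQre : ∀ x, (Q (c x)).re = c0 := by
    intro x
    have h1 := Q_re_sq (c x)
    rw [hN, hN0] at h1
    have h2 := Q_re_T (T0_sub (hT0 x))
    nlinarith
  set θ : ℝ → ℝ := fun x => (Q (c x)).im with hθ
  have hrec : ∀ x, c x = P (pt c0 (θ x)) := by
    intro x
    rw [← P_Q_T (T0_sub (hT0 x))]
    congr 1
    rw [← hQre x]
    apply Complex.ext <;> simp [hθ, P_Q_T (T0_sub (hT0 x))]
  have hθc : Continuous θ := by
    apply Complex.continuous_im.comp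
    rw [continuous_iff_continuousAt]
    intro x
    exact ContinuousAt.comp (Q_continuousAt (T0_re (hT0 x)).le) cc.continuousAt
  have hθi : Function.Injective θ := by
    intro s t he
    have h1 : c s = c t := by rw [hrec, hrec, he]
    have h2 := hh_inj g h1
    have h3 := congrArg Q h2
    simp only [hΓ, Q_P] at h3
    simpa [hw] using congrArg Complex.im h3
  obtain ⟨a', b', hab', him⟩ := lin_img hθc hθi (ε := 4/5) (C := c0) (by norm_num) (by
    intro x
    have h1 : ‖Q (c x)‖ ^ 2 = c0 ^ 2 + θ x ^ 2 := by
      rw [← Complex.normSq_eq_norm_sq, Complex.normSq_apply, hQre]; simp only [hθ]; ring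
    rw [norm_Q_sq] at h1
    have h2 : ‖w x‖ ^ 2 = ‖Γ x‖ ^ 3 := by rw [← norm_Q_sq, hΓ]; simp only; rw [Q_P]
    have h3 := hh_norm g (Γ x)
    have h4 : (9/10) * ‖Γ x‖ ≤ ‖c x‖ := by
      have := norm_sub_norm_le (Γ x) (c x)
      rw [norm_sub_rev] at this
      simp only [hcdef] at *
      linarith
    have h5 : ((9/10) * ‖Γ x‖) ^ 3 ≤ ‖c x‖ ^ 3 := by gcongr
    have h6 : |x| ≤ ‖w x‖ := by simpa [hw] using Complex.abs_im_le_norm (w x)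
    have h7 : |x| ^ 2 ≤ ‖w x‖ ^ 2 := by gcongr
    have h8 : ((4/5) * |x|) ^ 2 ≤ (c0 + |θ x|) ^ 2 := by
      have h9 : 0 ≤ c0 * |θ x| := by positivity
      have h10 := sq_abs (θ x)
      nlinarith [sq_nonneg |x|]
    have := abs_le_of_sq_le_sq h8 (by positivity)
    have := le_abs_self (4 / 5 * |x|)
    linarith) hab
  refine ⟨Γ, Γ', a', b', hab', ⟨fun t _ => dΓ t, Γc'.continuousOn,
    fun t _ => ((typ t).ne g.b).1, fun t _ => Or.inr (Or.inr (typ t))⟩, ?_⟩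
  rw [← him, image_image, image_image]
  exact image_congr (fun r _ => hrec r)

lemma bwd_pow (j : ℕ) : ∀ {A B : ℂ → ℝ}, GoodP M R A B → ∀ X : Set ℂ,
    (∀ {A B : ℂ → ℝ}, GoodP M R A B → Real' A B X) → Real' A B ((fun z => ρ ^ j * z) '' X) := by
  induction j with
  | zero => intro A B g X h; simpa using h g
  | succ n ih =>
    intro A B g X h
    have := (ih g.rot X h).unrot
    rw [image_image] at this
    simpa [pow_succ', mul_assoc] using this

lemma bwd (g : GoodP M R A B) {X : Set ℂ} (h : Arc X) : Real' A B X := by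
  obtain ⟨j, a, b, hab, ⟨c0, hc, rfl⟩ | rfl⟩ := h
  · have := bwd_pow j g _ (fun g => bwdA g hc hab)
    rwa [image_image] at this
  · have := bwd_pow j g _ (fun g => bwdB g hab)
    rwa [image_image] at this

end SB

namespace SB

/-- zero 1-jet estimate -/
structure Q1 (r L : ℝ) (h : ℂ → ℂ) : Prop where
  hr : 0 < r
  hL : 0 ≤ L
  zero : h 0 = 0
  lip : ∀ z z', ‖z'‖ ≤ ‖z‖ → ‖z‖ ≤ r → ‖h z - h z'‖ ≤ L * ‖z‖ * ‖z - z'‖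

lemma Q1.norm {r L : ℝ} {h : ℂ → ℂ} (q : Q1 r L h) {z : ℂ} (hz : ‖z‖ ≤ r) :
    ‖h z‖ ≤ L * ‖z‖ * ‖z‖ := by
  simpa [q.zero] using q.lip z 0 (by simp) hz

lemma Q1.div_le {r L : ℝ} {h d : ℂ → ℂ} (q : Q1 r L h) (dn : ∀ z, ‖d z‖ = ‖z‖) {z : ℂ}
    (hz : ‖z‖ ≤ r) : ‖h z / d z‖ ≤ L * ‖z‖ := by
  rw [norm_div, dn]
  rcases eq_or_ne z 0 with rfl | h0
  · simp
  rw [div_le_iff₀ (norm_pos_iff.2 h0)]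
  exact q.norm hz

lemma Q1.div_lip {r L : ℝ} {h d : ℂ → ℂ} (q : Q1 r L h) (dn : ∀ z, ‖d z‖ = ‖z‖)
    (dl : ∀ z z', ‖d z - d z'‖ ≤ ‖z - z'‖) {z z' : ℂ} (hz : ‖z‖ ≤ r) (hz' : ‖z'‖ ≤ r) :
    ‖h z / d z - h z' / d z'‖ ≤ 2 * L * ‖z - z'‖ := by
  wlog hle : ‖z'‖ ≤ ‖z‖ generalizing z z'
  · rw [norm_sub_rev, norm_sub_rev z]; exact this hz' hz (le_of_not_ge hle)
  have hL := q.hL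
  rcases eq_or_ne z' 0 with rfl | h0
  · have := q.div_le dn hz
    simp only [q.zero, zero_div, sub_zero]
    nlinarith [norm_nonneg z]
  have n' : 0 < ‖z'‖ := norm_pos_iff.2 h0
  have n : 0 < ‖z‖ := n'.trans_le hle
  have d0 : d z ≠ 0 := by rw [← norm_pos_iff, dn]; exact n
  have d0' : d z' ≠ 0 := by rw [← norm_pos_iff, dn]; exact n'
  have e : h z / d z - h z' / d z' = (h z - h z') / d z + (h z' / d z') * ((d z' - d z) / d z) := by
    field_simp; ring
  rw [e]
  have b1 : ‖(h z - h z') / d z‖ ≤ L * ‖z - z'‖ := by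
    rw [norm_div, dn, div_le_iff₀ n]
    have := q.lip z z' hle hz
    linarith
  have b2 : ‖(h z' / d z') * ((d z' - d z) / d z)‖ ≤ L * ‖z - z'‖ := by
    rw [norm_mul, norm_div (_ - _), dn]
    have c1 := q.div_le dn hz'
    have c2 := dl z' z
    rw [norm_sub_rev z'] at c2
    calc _ ≤ (L * ‖z'‖) * (‖z - z'‖ / ‖z‖) := by gcongr
      _ = L * ‖z - z'‖ * (‖z'‖ / ‖z‖) := by ring
      _ ≤ L * ‖z - z'‖ * 1 := by
        gcongr
        exact (div_le_one n).2 hle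
      _ = _ := by ring
  linarith [norm_add_le ((h z - h z') / d z) ((h z' / d z') * ((d z' - d z) / d z))]

def chi (R : ℝ) (z : ℂ) : ℝ := max 0 (min 1 (2 - 2 * ‖z‖ / R))

lemma chi_nonneg (R : ℝ) (z : ℂ) : 0 ≤ chi R z := le_max_left _ _
lemma chi_le (R : ℝ) (z : ℂ) : chi R z ≤ 1 := max_le zero_le_one (min_le_left _ _)
lemma chi_one {R : ℝ} (hR : 0 < R) {z : ℂ} (h : ‖z‖ ≤ R / 2) : chi R z = 1 := by
  unfold chi
  have : 2 * ‖z‖ / R ≤ 1 := by rw [div_le_one hR]; linarith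
  rw [min_eq_left (by linarith), max_eq_right zero_le_one]
lemma chi_zero {R : ℝ} (hR : 0 < R) {z : ℂ} (h : R ≤ ‖z‖) : chi R z = 0 := by
  unfold chi
  have : 2 ≤ 2 * ‖z‖ / R := by rw [le_div_iff₀ hR]; linarith
  rw [max_eq_left]
  exact (min_le_right _ _).trans (by linarith)
lemma chi_lip {R : ℝ} (hR : 0 < R) (z z' : ℂ) : |chi R z - chi R z'| ≤ 2 / R * ‖z - z'‖ := by
  unfold chi
  have h0 : |max 0 (min 1 (2 - 2 * ‖z‖ / R)) - max 0 (min 1 (2 - 2 * ‖z'‖ / R))| ≤ |min 1 (2 - 2 * ‖z‖ / R) - min 1 (2 - 2 * ‖z'‖ / R)| := by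
    have := abs_max_sub_max_le_max (0:ℝ) (min 1 (2 - 2 * ‖z‖ / R)) 0 (min 1 (2 - 2 * ‖z'‖ / R))
    simpa using this
  refine h0.trans ?_
  have h1 : |min 1 (2 - 2 * ‖z‖ / R) - min 1 (2 - 2 * ‖z'‖ / R)| ≤ |(2 - 2 * ‖z‖ / R) - (2 - 2 * ‖z'‖ / R)| := by
    have := abs_min_sub_min_le_max (1:ℝ) (2 - 2 * ‖z‖ / R) 1 (2 - 2 * ‖z'‖ / R)
    simpa using this
  have h2 : (2 - 2 * ‖z‖ / R) - (2 - 2 * ‖z'‖ / R) = (2 / R) * (‖z'‖ - ‖z‖) := by ring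
  rw [h2, abs_mul, abs_of_pos (by positivity : 0 < 2 / R)] at h1
  refine h1.trans ?_
  gcongr
  rw [norm_sub_rev]
  exact abs_norm_sub_norm_le _ _

lemma cut_lip {r L R : ℝ} {h d : ℂ → ℂ} (q : Q1 r L h) (dn : ∀ z, ‖d z‖ = ‖z‖)
    (dl : ∀ z z', ‖d z - d z'‖ ≤ ‖z - z'‖) (hR : 0 < R) (hRr : R ≤ r) (z z' : ℂ) :
    ‖(chi R z : ℂ) * (h z / d z) - (chi R z' : ℂ) * (h z' / d z')‖ ≤ 6 * L * ‖z - z'‖ := by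
  wlog hle : ‖z'‖ ≤ ‖z‖ generalizing z z'
  · rw [norm_sub_rev, norm_sub_rev z]; exact this z' z (le_of_not_ge hle)
  have hL := q.hL
  have n := norm_nonneg (z - z')
  rcases le_total R ‖z'‖ with h1 | h1
  · rw [chi_zero hR h1, chi_zero hR (h1.trans hle)]; simp; positivity
  have b1 : ‖((chi R z - chi R z' : ℝ) : ℂ) * (h z' / d z')‖ ≤ 2 * L * ‖z - z'‖ := by
    rw [norm_mul, Complex.norm_real, Real.norm_eq_abs]
    calc _ ≤ (2 / R * ‖z - z'‖) * (L * ‖z'‖) := by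
          gcongr
          · exact chi_lip hR z z'
          · exact q.div_le dn (h1.trans hRr)
      _ ≤ (2 / R * ‖z - z'‖) * (L * R) := by gcongr
      _ = _ := by field_simp
  have nL : 0 ≤ L * ‖z - z'‖ := by positivity
  have b2 : ‖(chi R z : ℂ) * (h z / d z - h z' / d z')‖ ≤ 2 * L * ‖z - z'‖ := by
    rcases le_total R ‖z‖ with h2 | h2
    · rw [chi_zero hR h2]; simp; positivity
    · rw [norm_mul, Complex.norm_real, Real.norm_eq_abs, abs_of_nonneg (chi_nonneg _ _)]
      calc _ ≤ 1 * (2 * L * ‖z - z'‖) := by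
            gcongr
            · exact chi_le _ _
            · exact q.div_lip dn dl (h2.trans hRr) (h1.trans hRr)
        _ = _ := by ring
  have e : (chi R z : ℂ) * (h z / d z) - (chi R z' : ℂ) * (h z' / d z') =
     (chi R z : ℂ) * (h z / d z - h z' / d z') + ((chi R z - chi R z' : ℝ) : ℂ) * (h z' / d z') := by
    push_cast; ring
  rw [e]
  have := norm_add_le ((chi R z : ℂ) * (h z / d z - h z' / d z')) (((chi R z - chi R z' : ℝ) : ℂ) * (h z' / d z'))
  linarith

/-- small root of m a^2 - 2(1+q) a + n -/
def rt (m n q : ℝ) : ℝ := n / ((1 + q) + √((1 + q) ^ 2 - m * n))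

lemma rt_spec {m n q : ℝ} (hm : |m| ≤ 1/10) (hn : |n| ≤ 1/10) (hq : |q| ≤ 1/10) :
    m * rt m n q ^ 2 - 2 * (1 + q) * rt m n q + n = 0 ∧ |rt m n q| ≤ 1/2 := by
  have hq' := abs_le.1 hq
  have hmn : |m * n| ≤ 1/100 := by
    rw [abs_mul]; nlinarith [abs_nonneg m, abs_nonneg n]
  have h1 : 0 ≤ (1 + q) ^ 2 - m * n := by
    have := le_abs_self (m * n); nlinarith
  have h2 := Real.sq_sqrt h1
  have h3 := Real.sqrt_nonneg ((1 + q) ^ 2 - m * n)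
  set s := √((1 + q) ^ 2 - m * n)
  have hD : 0 < (1 + q) + s := by linarith
  have e : rt m n q * ((1 + q) + s) = n := by
    exact div_mul_cancel₀ _ hD.ne'
  set a := rt m n q
  constructor
  · have : (m * a ^ 2 - 2 * (1 + q) * a + n) * ((1 + q) + s) = 0 := by
      rw [← e]
      have h4 : m * (a * ((1 + q) + s)) = (1 + q) ^ 2 - s ^ 2 := by rw [e, h2]; ring
      linear_combination a * h4
    exact (mul_eq_zero.1 this).resolve_right hD.ne'
  · have : |a| * ((1 + q) + s) = |n| := by
      rw [← e, abs_mul, abs_of_pos hD]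
    nlinarith [abs_nonneg a]

lemma rt_diff {m n q m' n' q' a a' : ℝ} (hm : |m| ≤ 1/10) (hq : |q| ≤ 1/10)
    (ha : |a| ≤ 1) (ha' : |a'| ≤ 1/2) (h : m * a ^ 2 - 2 * (1 + q) * a + n = 0)
    (h' : m' * a' ^ 2 - 2 * (1 + q') * a' + n' = 0) :
    |a - a'| ≤ |q - q'| + |m - m'| + |n - n'| := by
  have e : 2 * (1 + q) * (a - a') = m * (a + a') * (a - a') - 2 * (q - q') * a' + (m - m') * a' ^ 2 + (n - n') := by
    linear_combination h' - h
  have hq' := abs_le.1 hq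
  have l : |2 * (1 + q) * (a - a')| = 2 * (1 + q) * |a - a'| := by
    rw [abs_mul, abs_of_pos (by linarith)]
  have u1 : |m * (a + a') * (a - a')| ≤ (3/20) * |a - a'| := by
    rw [abs_mul, abs_mul]
    have : |a + a'| ≤ 3/2 := (abs_add_le a a').trans (by linarith)
    gcongr
    nlinarith [abs_nonneg m, abs_nonneg (a + a')]
  have u2 : |2 * (q - q') * a'| ≤ |q - q'| := by
    rw [abs_mul, abs_mul, abs_two]
    nlinarith [abs_nonneg (q - q')]
  have u3 : |(m - m') * a' ^ 2| ≤ |m - m'| := by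
    rw [abs_mul, abs_pow]
    have : |a'| ^ 2 ≤ 1 := by nlinarith [abs_nonneg a']
    nlinarith [abs_nonneg (m - m')]
  have t : |2 * (1 + q) * (a - a')| ≤ |m * (a + a') * (a - a')| + |2 * (q - q') * a'| + |(m - m') * a' ^ 2| + |n - n'| := by
    rw [e]
    refine (abs_add_le _ _).trans ?_
    gcongr
    refine (abs_add_le _ _).trans ?_
    gcongr
    exact abs_sub _ _
  nlinarith [abs_nonneg (a - a')]

lemma rt_zero (m q : ℝ) : rt m 0 q = 0 := by simp [rt]

def Fm (κ : ℂ → ℂ) (l : ℂ → ℝ) (z v : ℂ) : ℝ :=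
  -(z * v ^ 2).im + (κ z * v ^ 2).re + l z * ‖v‖ ^ 2

def Kc (R : ℝ) (κ : ℂ → ℂ) (z : ℂ) : ℂ := (chi R z : ℂ) * (κ z / z)
def Lc (R : ℝ) (l : ℂ → ℝ) (z : ℂ) : ℝ := chi R z * (l z / ‖z‖)
def Ac (R : ℝ) (κ : ℂ → ℂ) (l : ℂ → ℝ) (z : ℂ) : ℝ :=
  rt (Lc R l z - (Kc R κ z).re) ((Kc R κ z).re + Lc R l z) (Kc R κ z).im

lemma Ac_good {r L R : ℝ} {κ : ℂ → ℂ} {l : ℂ → ℝ} (q : Q1 r L κ) (p : Q1 r L (fun z => (l z : ℂ)))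
    (hR : 0 < R) (hRr : R ≤ r) (hs : 30 * L * R ≤ 1/1000) : Good (30 * L) R (Ac R κ l) ∧
    (∀ z, |Lc R l z - (Kc R κ z).re| ≤ 1/10 ∧ |(Kc R κ z).re + Lc R l z| ≤ 1/10 ∧ |(Kc R κ z).im| ≤ 1/10) := by
  have hL := q.hL
  have k1 : ∀ z z', ‖Kc R κ z - Kc R κ z'‖ ≤ 6 * L * ‖z - z'‖ := fun z z' =>
    cut_lip q (d := fun z => z) (fun z => rfl) (fun z z' => le_rfl) hR hRr z z'
  have k2 : ∀ z z', |Lc R l z - Lc R l z'| ≤ 6 * L * ‖z - z'‖ := fun z z' => by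
    have := cut_lip p (d := fun z => (‖z‖ : ℂ)) (fun z => by simp) (fun z z' => by
      rw [← Complex.ofReal_sub, Complex.norm_real]; exact abs_norm_sub_norm_le _ _) hR hRr z z'
    rw [← Real.norm_eq_abs, ← Complex.norm_real]
    convert this using 2
    simp [Lc]
  have kz : ∀ z, ‖Kc R κ z‖ ≤ 6 * L * R := by
    intro z
    rcases le_total R ‖z‖ with h | h
    · simp [Kc, chi_zero hR h]; positivity
    · have := k1 z 0
      simp only [Kc, div_zero, mul_zero, sub_zero] at this
      refine this.trans ?_
      gcongr
  have lz : ∀ z, |Lc R l z| ≤ 6 * L * R := by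
    intro z
    rcases le_total R ‖z‖ with h | h
    · simp [Lc, chi_zero hR h]; positivity
    · have := k2 z 0
      simp only [Lc, norm_zero, div_zero, mul_zero, sub_zero] at this
      refine this.trans ?_
      gcongr
  have bd : ∀ z, |Lc R l z - (Kc R κ z).re| ≤ 1/10 ∧ |(Kc R κ z).re + Lc R l z| ≤ 1/10 ∧ |(Kc R κ z).im| ≤ 1/10 := by
    intro z
    have h1 := (Complex.abs_re_le_norm _).trans (kz z)
    have h2 := (Complex.abs_im_le_norm _).trans (kz z)
    have h3 := lz z
    refine ⟨(abs_sub _ _).trans (by linarith), (abs_add_le _ _).trans (by linarith), by linarith⟩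
  refine ⟨⟨by positivity, hR, hs, ?_, ?_, ?_⟩, bd⟩
  · intro z z'
    obtain ⟨b1, b2, b3⟩ := bd z
    obtain ⟨b1', b2', b3'⟩ := bd z'
    have s1 := rt_spec b1 b2 b3
    have s2 := rt_spec b1' b2' b3'
    have := rt_diff b1 b3 (by linarith [s1.2]) s2.2 s1.1 s2.1
    refine this.trans ?_
    have h1 := (Complex.abs_re_le_norm _).trans (k1 z z')
    have h2 := (Complex.abs_im_le_norm _).trans (k1 z z')
    have h3 := k2 z z'
    rw [Complex.sub_re] at h1
    rw [Complex.sub_im] at h2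
    have h4 : |Lc R l z - (Kc R κ z).re - (Lc R l z' - (Kc R κ z').re)| ≤ 12 * L * ‖z - z'‖ := by
      rw [sub_sub_sub_comm]
      exact (abs_sub _ _).trans (by linarith)
    have h5 : |(Kc R κ z).re + Lc R l z - ((Kc R κ z').re + Lc R l z')| ≤ 12 * L * ‖z - z'‖ := by
      rw [add_sub_add_comm]
      exact (abs_add_le _ _).trans (by linarith)
    linarith
  · simp [Ac, Kc, Lc, rt_zero]
  · intro z hz
    simp [Ac, Kc, Lc, chi_zero hR hz, rt_zero]

lemma dirs {r L : ℝ} {κ : ℂ → ℂ} {l : ℂ → ℝ} (q : Q1 r L κ) (p : Q1 r L (fun z => (l z : ℂ))) :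
    ∃ (M R : ℝ) (A B : ℂ → ℝ), R ≤ r ∧ GoodP M R A B ∧ ∀ z, z ≠ 0 → ‖z‖ < R / 2 → ∀ v, v ≠ 0 →
      (Fm κ l z v = 0 ↔ ty0 A z v ∨ ty1 B z v) := by
  have hL := q.hL
  have hr := q.hr
  set R := min r (1 / (30000 * (L + 1))) with hRdef
  have hR : 0 < R := lt_min hr (by positivity)
  have hRr : R ≤ r := min_le_left _ _
  have hs : 30 * L * R ≤ 1/1000 := by
    have h1 : R ≤ 1 / (30000 * (L + 1)) := min_le_right _ _
    rw [le_div_iff₀ (by positivity)] at h1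
    nlinarith
  have p' : Q1 r L (fun z => ((-l z : ℝ) : ℂ)) := ⟨hr, hL, by simpa using p.zero, fun z z' h1 h2 => by
    have := p.lip z z' h1 h2
    have e : ((-l z : ℝ) : ℂ) - ((-l z' : ℝ) : ℂ) = -((l z : ℂ) - (l z' : ℂ)) := by push_cast; ring
    rw [e, norm_neg]; exact this⟩
  obtain ⟨gA, bA⟩ := Ac_good q p hR hRr hs
  obtain ⟨gB, bB⟩ := Ac_good q p' hR hRr hs
  refine ⟨30 * L, R, Ac R κ l, Ac R κ (fun z => -l z), hRr, ⟨gA, gB⟩, ?_⟩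
  intro z z0 hz v v0
  have hc := chi_one hR hz.le
  have n0 : ‖z‖ ≠ 0 := norm_ne_zero_iff.2 z0
  have eK : Kc R κ z = κ z / z := by simp [Kc, hc]
  have eL : Lc R l z = l z / ‖z‖ := by simp [Lc, hc]
  have eL' : Lc R (fun z => -l z) z = -Lc R l z := by simp [Lc, hc, neg_div]
  obtain ⟨m1, m2, m3⟩ := bA z
  obtain ⟨m1', m2', m3'⟩ := bB z
  have sA := rt_spec m1 m2 m3
  have sB := rt_spec m1' m2' m3'
  have eF : Fm κ l z v = -(z * v ^ 2).im + (Kc R κ z * (z * v ^ 2)).re + Lc R l z * ‖z * v ^ 2‖ := by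
    rw [eK, eL, ← mul_assoc, div_mul_cancel₀ _ z0, norm_mul, norm_pow, ← mul_assoc, div_mul_cancel₀ _ n0]
    rfl
  have hA : Ac R κ l z = rt (Lc R l z - (Kc R κ z).re) ((Kc R κ z).re + Lc R l z) (Kc R κ z).im := rfl
  have hB : Ac R κ (fun z => -l z) z = rt (Lc R (fun z => -l z) z - (Kc R κ z).re) ((Kc R κ z).re + Lc R (fun z => -l z) z) (Kc R κ z).im := rfl
  rw [← hA] at sA
  rw [← hB] at sB
  rw [eL'] at sB m1' m2'
  have uA : ∀ a, |a| ≤ 1 → (Lc R l z - (Kc R κ z).re) * a ^ 2 - 2 * (1 + (Kc R κ z).im) * a + ((Kc R κ z).re + Lc R l z) = 0 → a = Ac R κ l z := by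
    intro a ha h
    have := rt_diff m1 m3 ha sA.2 h sA.1
    simp at this
    linarith [sub_eq_zero.1 this]
  have uB : ∀ a, |a| ≤ 1 → (-Lc R l z - (Kc R κ z).re) * a ^ 2 - 2 * (1 + (Kc R κ z).im) * a + ((Kc R κ z).re + -Lc R l z) = 0 → a = Ac R κ (fun z => -l z) z := by
    intro a ha h
    have := rt_diff m1' m3 ha sB.2 h sB.1
    simp at this
    linarith [sub_eq_zero.1 this]
  have eσ : ∀ σ : ℂ, z * v ^ 2 = σ ^ 2 → Fm κ l z v = (Lc R l z + (Kc R κ z).re) * σ.re ^ 2 - 2 * (1 + (Kc R κ z).im) * σ.re * σ.im + (Lc R l z - (Kc R κ z).re) * σ.im ^ 2 := by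
    intro σ h
    rw [eF, h, norm_pow, ← Complex.normSq_eq_norm_sq, Complex.normSq_apply]
    simp only [pow_two, Complex.mul_re, Complex.mul_im]
    ring
  have hsv : z * v ^ 2 ≠ 0 := mul_ne_zero z0 (pow_ne_zero 2 v0)
  unfold ty0 ty1
  set a := Ac R κ l z
  set b := Ac R κ (fun z => -l z) z
  constructor
  · intro h
    obtain ⟨σ, hσ⟩ := IsAlgClosed.exists_pow_nat_eq (z * v ^ 2) (n := 2) two_pos
    rw [eσ σ hσ.symm] at h
    rw [← hσ] at hsv ⊢
    have σ0 : σ ≠ 0 := by rintro rfl; simp at hsv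
    rcases le_total |σ.im| |σ.re| with hle | hle
    · left
      have hp : σ.re ≠ 0 := by
        intro h0; rw [h0, abs_zero] at hle
        exact σ0 (Complex.ext h0 (abs_eq_zero.1 (le_antisymm hle (abs_nonneg _))))
      have := uA (σ.im / σ.re) (by rw [abs_div]; exact div_le_one_of_le₀ hle (abs_nonneg _)) (by
        field_simp; linear_combination h)
      refine ⟨σ.re ^ 2, by positivity, ?_⟩
      rw [← this]
      push_cast
      rw [← mul_pow]
      congr 1
      rw [mul_add, ← mul_assoc, mul_div_cancel₀ _ (by exact_mod_cast hp), mul_one, Complex.re_add_im]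
    · right
      have hp : σ.im ≠ 0 := by
        intro h0; rw [h0, abs_zero] at hle
        exact σ0 (Complex.ext (abs_eq_zero.1 (le_antisymm hle (abs_nonneg _))) h0)
      have := uB (-σ.re / σ.im) (by rw [abs_div, abs_neg]; exact div_le_one_of_le₀ hle (abs_nonneg _)) (by
        field_simp; linear_combination -h)
      refine ⟨σ.im ^ 2, by positivity, ?_⟩
      rw [← this]
      have e2 : σ = Complex.I * (σ.im * (1 + ((-σ.re / σ.im : ℝ) : ℂ) * Complex.I)) := by
        have : (σ.im : ℂ) ≠ 0 := by exact_mod_cast hp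
        push_cast
        field_simp
        conv_lhs => rw [← Complex.re_add_im σ]
        linear_combination (σ.re : ℂ) * Complex.I_sq
      conv_lhs => rw [e2]
      rw [mul_pow, mul_pow, Complex.I_sq]
      push_cast; ring
  · rintro (⟨k, hk, h⟩ | ⟨k, hk, h⟩)
    · have hk2 : ((√k : ℝ) : ℂ) ^ 2 = k := by exact_mod_cast Real.sq_sqrt hk.le
      have hk3 := Real.sq_sqrt hk.le
      rw [eσ (√k * (1 + a * Complex.I)) (by rw [h, mul_pow, hk2])]
      simp
      linear_combination k * sA.1 + (Lc R l z + (Kc R κ z).re - 2 * (1 + (Kc R κ z).im) * a + (Lc R l z - (Kc R κ z).re) * a ^ 2) * hk3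
    · have hk2 : ((√k : ℝ) : ℂ) ^ 2 = k := by exact_mod_cast Real.sq_sqrt hk.le
      have hk3 := Real.sq_sqrt hk.le
      rw [eσ (Complex.I * (√k * (1 + b * Complex.I))) (by rw [h, mul_pow, mul_pow, hk2, Complex.I_sq]; ring)]
      simp
      linear_combination -k * sB.1 + ((Lc R l z + (Kc R κ z).re) * b ^ 2 + 2 * (1 + (Kc R κ z).im) * b + (Lc R l z - (Kc R κ z).re)) * hk3

end SB

namespace SB

abbrev Sm (g : ℝ × ℝ → ℝ) : Prop := ContDiff ℝ (⊤ : ℕ∞) g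

lemma Sm.diff {g : ℝ × ℝ → ℝ} (h : Sm g) : Differentiable ℝ g := h.differentiable (by simp)

lemma pdx_eq {g : ℝ × ℝ → ℝ} (h : Sm g) (p : ℝ × ℝ) : pdx g p = fderiv ℝ g p (1, 0) := by
  unfold pdx
  have h1 : HasDerivAt (fun s : ℝ => (s, p.2)) ((1 : ℝ), (0 : ℝ)) p.1 :=
    (hasDerivAt_id p.1).prodMk (hasDerivAt_const _ _)
  exact ((h.diff p).hasFDerivAt.comp_hasDerivAt p.1 h1).deriv

lemma pdy_eq {g : ℝ × ℝ → ℝ} (h : Sm g) (p : ℝ × ℝ) : pdy g p = fderiv ℝ g p (0, 1) := by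
  unfold pdy
  have h1 : HasDerivAt (fun s : ℝ => (p.1, s)) ((0 : ℝ), (1 : ℝ)) p.2 :=
    (hasDerivAt_const _ _).prodMk (hasDerivAt_id p.2)
  exact ((h.diff p).hasFDerivAt.comp_hasDerivAt p.2 h1).deriv

lemma sm_fd {g : ℝ × ℝ → ℝ} (h : Sm g) (v : ℝ × ℝ) : Sm (fun p => fderiv ℝ g p v) := by
  have := h.fderiv_right (m := (⊤ : ℕ∞)) (by simp)
  exact this.clm_apply contDiff_const

lemma Sm.x {g : ℝ × ℝ → ℝ} (h : Sm g) : Sm (pdx g) := by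
  rw [show pdx g = _ from funext (pdx_eq h)]; exact sm_fd h _
lemma Sm.y {g : ℝ × ℝ → ℝ} (h : Sm g) : Sm (pdy g) := by
  rw [show pdy g = _ from funext (pdy_eq h)]; exact sm_fd h _

lemma Sm.lin {u w : ℝ × ℝ → ℝ} (hu : Sm u) (hw : Sm w) (a b : ℝ) : Sm (fun p => a * u p + b * w p) :=
  (contDiff_const.mul hu).add (contDiff_const.mul hw)

lemma fd_lin {u w : ℝ × ℝ → ℝ} (hu : Sm u) (hw : Sm w) (a b : ℝ) (p v : ℝ × ℝ) :
    fderiv ℝ (fun p => a * u p + b * w p) p v = a * fderiv ℝ u p v + b * fderiv ℝ w p v := by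
  have := ((hu.diff p).hasFDerivAt.const_mul a).add ((hw.diff p).hasFDerivAt.const_mul b)
  have e := HasFDerivAt.fderiv (f := fun p => a * u p + b * w p) this
  rw [e]; simp

lemma pdx_lin {u w : ℝ × ℝ → ℝ} (hu : Sm u) (hw : Sm w) (a b : ℝ) :
    pdx (fun p => a * u p + b * w p) = fun p => a * pdx u p + b * pdx w p := by
  funext p; rw [pdx_eq (hu.lin hw a b), pdx_eq hu, pdx_eq hw, fd_lin hu hw]
lemma pdy_lin {u w : ℝ × ℝ → ℝ} (hu : Sm u) (hw : Sm w) (a b : ℝ) :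
    pdy (fun p => a * u p + b * w p) = fun p => a * pdy u p + b * pdy w p := by
  funext p; rw [pdy_eq (hu.lin hw a b), pdy_eq hu, pdy_eq hw, fd_lin hu hw]

lemma fd_fd {g : ℝ × ℝ → ℝ} (h : Sm g) (p v w : ℝ × ℝ) :
    fderiv ℝ (fun p => fderiv ℝ g p v) p w = fderiv ℝ (fderiv ℝ g) p w v := by
  have h2 := h.fderiv_right (m := (⊤ : ℕ∞)) (by simp)
  have := ((h2.differentiable (by simp)) p).hasFDerivAt.clm_apply (hasFDerivAt_const v p)
  rw [this.fderiv]; simp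

lemma pd_comm {g : ℝ × ℝ → ℝ} (h : Sm g) : pdx (pdy g) = pdy (pdx g) := by
  funext p
  rw [pdx_eq h.y, pdy_eq h.x, show pdx g = _ from funext (pdx_eq h),
    show pdy g = _ from funext (pdy_eq h), fd_fd h, fd_fd h]
  have := (h.contDiffAt (x := p)).isSymmSndFDerivAt (by simpa using (WithTop.coe_le_coe.2 (le_top : (2 : ℕ∞) ≤ ⊤)))
  exact this _ _

def Dv (a b : ℝ) (g : ℝ × ℝ → ℝ) : ℝ × ℝ → ℝ := fun p => a * pdx g p + b * pdy g p

lemma Sm.D {g : ℝ × ℝ → ℝ} (h : Sm g) (a b : ℝ) : Sm (Dv a b g) := h.x.lin h.y a b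

lemma deriv_line {g : ℝ × ℝ → ℝ} (h : Sm g) (a b : ℝ) :
    deriv (fun t : ℝ => g (t * a, t * b)) = fun t => Dv a b g (t * a, t * b) := by
  funext t
  have h1 : HasDerivAt (fun t : ℝ => (t * a, t * b)) (a, b) t := by
    simpa using ((hasDerivAt_id t).mul_const a).prodMk ((hasDerivAt_id t).mul_const b)
  have h2 := ((h.diff (t * a, t * b)).hasFDerivAt.comp_hasDerivAt t h1).deriv
  refine h2.trans ?_
  unfold Dv
  rw [pdx_eq h, pdy_eq h]
  have : ((a, b) : ℝ × ℝ) = a • (1, 0) + b • (0, 1) := by simp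
  rw [this, map_add, map_smul, map_smul]
  simp

lemma jet1 (n : ℕ) : ∀ {φ : ℝ → ℝ}, ContDiff ℝ (⊤ : ℕ∞) φ → (φ =o[nhds 0] fun t => t ^ n) →
    ∀ k ≤ n, iteratedDeriv k φ 0 = 0 := by
  have main : ∀ n : ℕ, ∀ {φ : ℝ → ℝ}, ContDiff ℝ (⊤ : ℕ∞) φ → (φ =o[nhds 0] fun t => t ^ n) →
      (∀ k < n, iteratedDeriv k φ 0 = 0) → iteratedDeriv n φ 0 = 0 := by
    intro n φ hφ ho hk
    have h1 := taylor_isLittleO_univ (x₀ := 0) (n := n) (f := φ) (hφ.of_le (by exact_mod_cast le_top))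
    have h2 : ∀ t, taylorWithinEval φ n univ 0 t = ((n.factorial : ℝ)⁻¹ * iteratedDeriv n φ 0) * t ^ n := by
      intro t
      rw [taylor_within_apply, Finset.sum_range_succ, Finset.sum_eq_zero]
      · simp; ring
      · intro k hk'
        rw [iteratedDerivWithin_univ, hk k (Finset.mem_range.1 hk'), smul_zero]
    simp only [h2, sub_zero] at h1
    have h3 := ho.sub h1
    simp only [sub_sub_cancel] at h3
    by_contra hne
    have hc : ((n.factorial : ℝ)⁻¹ * iteratedDeriv n φ 0) ≠ 0 :=
      mul_ne_zero (inv_ne_zero (by exact_mod_cast n.factorial_ne_zero)) hne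
    have h4 := (isLittleO_const_mul_left_iff hc).1 h3
    have h5 := h4.def (c := 1/2) (by norm_num)
    rw [Metric.eventually_nhds_iff] at h5
    obtain ⟨ε, hε, h5⟩ := h5
    have h6 := h5 (y := ε / 2) (by rw [Real.dist_eq, sub_zero, abs_of_pos] <;> linarith)
    have : 0 < ‖(ε / 2) ^ n‖ := norm_pos_iff.2 (pow_ne_zero _ (by positivity))
    linarith
  induction n with
  | zero =>
    intro φ hφ ho k hk
    obtain rfl : k = 0 := by omega
    exact main 0 hφ ho (by simp)
  | succ n ih =>
    intro φ hφ ho k hk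
    have ho' : φ =o[nhds 0] fun t : ℝ => t ^ n := by
      apply ho.trans_isBigO
      apply IsBigO.of_bound 1
      filter_upwards [Metric.ball_mem_nhds (0:ℝ) one_pos] with t ht
      rw [mem_ball_zero_iff] at ht
      rw [norm_pow, norm_pow, one_mul]
      exact pow_le_pow_of_le_one (norm_nonneg _) ht.le (Nat.le_succ n)
    rcases hk.lt_or_eq with h | rfl
    · exact ih hφ ho' k (by omega)
    · exact main (n+1) hφ ho (fun j hj => ih hφ ho' j (by omega))

lemma jet_line {g : ℝ × ℝ → ℝ} (h : Sm g) {n : ℕ} (ho : g =o[nhds 0] fun p => ‖p‖ ^ n) (a b : ℝ) :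
    ∀ k ≤ n, ((Dv a b)^[k] g) 0 = 0 := by
  intro k hk
  have hl : ContDiff ℝ (⊤ : ℕ∞) (fun t : ℝ => g (t * a, t * b)) :=
    h.comp ((contDiff_id.mul contDiff_const).prodMk (contDiff_id.mul contDiff_const))
  have it : ∀ k : ℕ, Sm ((Dv a b)^[k] g) ∧ iteratedDeriv k (fun t : ℝ => g (t * a, t * b)) = fun t => ((Dv a b)^[k] g) (t * a, t * b) := by
    intro k
    induction k with
    | zero => exact ⟨h, by simp⟩
    | succ k ih =>
      rw [Function.iterate_succ_apply', iteratedDeriv_succ, ih.2, deriv_line ih.1]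
      exact ⟨ih.1.D a b, rfl⟩
  have hc : Tendsto (fun t : ℝ => (t * a, t * b)) (nhds 0) (nhds (0 : ℝ × ℝ)) := by
    have : Continuous (fun t : ℝ => (t * a, t * b)) := by fun_prop
    have := this.tendsto 0
    simp only [zero_mul] at this
    exact this
  have h1 := ho.comp_tendsto hc
  have h2 : (fun t : ℝ => g (t * a, t * b)) =o[nhds 0] fun t : ℝ => t ^ n := by
    refine h1.trans_isBigO (IsBigO.of_bound (‖(a, b)‖ ^ n) (Eventually.of_forall fun t => ?_))
    simp only [Function.comp]
    have : (t * a, t * b) = t • (a, b) := by simp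
    rw [this, norm_smul, norm_pow, norm_mul, norm_norm, norm_norm, norm_pow, mul_pow, mul_comm]
  have := jet1 n hl h2 k hk
  rw [(it k).2] at this
  simp only [zero_mul] at this
  exact this

lemma Dv2 {g : ℝ × ℝ → ℝ} (h : Sm g) (a b : ℝ) : Dv a b (Dv a b g) = fun p =>
    a ^ 2 * pdx (pdx g) p + 2 * a * b * pdy (pdx g) p + b ^ 2 * pdy (pdy g) p := by
  funext p
  change a * pdx (fun p => a * pdx g p + b * pdy g p) p + b * pdy (fun p => a * pdx g p + b * pdy g p) p = _
  rw [pdx_lin h.x h.y, pdy_lin h.x h.y, pd_comm h]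
  ring

lemma J2 {g : ℝ × ℝ → ℝ} (h : Sm g) {n : ℕ} (hn : 2 ≤ n) (ho : g =o[nhds 0] fun p => ‖p‖ ^ n) :
    g 0 = 0 ∧ pdx g 0 = 0 ∧ pdy g 0 = 0 ∧ pdx (pdx g) 0 = 0 ∧ pdy (pdx g) 0 = 0 ∧ pdy (pdy g) 0 = 0 := by
  have j := jet_line h ho
  have a0 := j 1 0 0 (by omega)
  have a1 := j 1 0 1 (by omega)
  have a2 := j 0 1 1 (by omega)
  have b1 := j 1 0 2 (by omega)
  have b2 := j 0 1 2 (by omega)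
  have b3 := j 1 1 2 (by omega)
  simp only [Function.iterate_succ, Function.iterate_zero, Function.comp, id, Dv2 h] at a0 a1 a2 b1 b2 b3
  simp only [Dv] at a1 a2
  norm_num at a0 a1 a2 b1 b2 b3
  refine ⟨a0, a1, a2, b1, ?_, b2⟩
  linarith

lemma Dv3 {g : ℝ × ℝ → ℝ} (h : Sm g) (a b : ℝ) (p : ℝ × ℝ) : Dv a b (Dv a b (Dv a b g)) p =
    a ^ 3 * pdx (pdx (pdx g)) p + 3 * a ^ 2 * b * pdy (pdx (pdx g)) p +
    3 * a * b ^ 2 * pdy (pdy (pdx g)) p + b ^ 3 * pdy (pdy (pdy g)) p := by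
  rw [Dv2 (h.D a b)]
  have e1 : pdx (Dv a b g) = fun p => a * pdx (pdx g) p + b * pdy (pdx g) p := by
    unfold Dv; rw [pdx_lin h.x h.y, pd_comm h]
  have e2 : pdy (Dv a b g) = fun p => a * pdy (pdx g) p + b * pdy (pdy g) p := by
    unfold Dv; rw [pdy_lin h.x h.y]
  simp only [e1, e2]
  rw [pdx_lin h.x.x h.x.y, pdy_lin h.x.x h.x.y, pdy_lin h.x.y h.y.y, pd_comm h.x]
  ring

lemma J3 {g : ℝ × ℝ → ℝ} (h : Sm g) (ho : g =o[nhds 0] fun p => ‖p‖ ^ 3) :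
    pdx (pdx (pdx g)) 0 = 0 ∧ pdy (pdx (pdx g)) 0 = 0 ∧ pdy (pdy (pdx g)) 0 = 0 ∧
    pdy (pdy (pdy g)) 0 = 0 := by
  have j := jet_line h ho
  have b1 := j 1 0 3 le_rfl
  have b2 := j 0 1 3 le_rfl
  have b3 := j 1 1 3 le_rfl
  have b4 := j 1 (-1) 3 le_rfl
  simp only [Function.iterate_succ, Function.iterate_zero, Function.comp, id, Dv3 h] at b1 b2 b3 b4
  norm_num at b1 b2 b3 b4
  refine ⟨b1, by linarith, by linarith, b2⟩

lemma fd_zero {g : ℝ × ℝ → ℝ} (h : Sm g) (hx : pdx g 0 = 0) (hy : pdy g 0 = 0) :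
    HasFDerivAt g (0 : ℝ × ℝ →L[ℝ] ℝ) 0 := by
  have h1 := (h.diff 0).hasFDerivAt
  have : fderiv ℝ g 0 = 0 := by
    ext
    · simpa [pdx_eq h] using hx
    · simpa [pdy_eq h] using hy
  rwa [this] at h1

/-- second partials of f minus the linear terms have zero 1-jet -/
lemma second {f : ℝ × ℝ → ℝ} (hf : Sm f) {α β : ℝ}
    (hj : HasJetAt0 f (fun p => p.1*p.2^2 - p.1^3 + α*p.1^3*p.2 + β*p.2^4) 4) :
    ∃ a b c : ℝ × ℝ → ℝ, (Sm a ∧ Sm b ∧ Sm c) ∧ (a 0 = 0 ∧ b 0 = 0 ∧ c 0 = 0) ∧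
     (HasFDerivAt a (0 : ℝ × ℝ →L[ℝ] ℝ) 0 ∧ HasFDerivAt b (0 : ℝ × ℝ →L[ℝ] ℝ) 0 ∧
      HasFDerivAt c (0 : ℝ × ℝ →L[ℝ] ℝ) 0) ∧
     (∀ p, fyy f p = 2 * p.1 + a p) ∧ (∀ p, fxy f p = 2 * p.2 + b p) ∧ (∀ p, fxx f p = -6 * p.1 + c p) := by
  set q : ℝ × ℝ → ℝ := fun p => p.1*p.2^2 - p.1^3 with hq
  have sq : Sm q := by rw [hq]; unfold Sm; fun_prop
  set g : ℝ × ℝ → ℝ := fun p => 1 * f p + (-1) * q p with hg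
  have sg : Sm g := hf.lin sq 1 (-1)
  have ho : g =o[nhds 0] fun p => ‖p‖ ^ 3 := by
    have h1 : (fun p : ℝ × ℝ => ‖p‖ ^ 4) =o[nhds 0] fun p => ‖p‖ ^ 3 := by
      have : (fun p : ℝ × ℝ => ‖p‖ * ‖p‖ ^ 3) =o[nhds 0] fun p => 1 * ‖p‖ ^ 3 := by
        apply IsLittleO.mul_isBigO _ (isBigO_refl _ _)
        rw [isLittleO_one_iff]
        simpa using (continuous_norm (E := ℝ × ℝ)).tendsto 0
      simpa [← pow_succ', one_mul] using this
    have h2 : (fun p : ℝ × ℝ => α*p.1^3*p.2 + β*p.2^4) =O[nhds 0] fun p => ‖p‖ ^ 4 := by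
      apply IsBigO.of_bound (|α| + |β|)
      refine Eventually.of_forall fun p => ?_
      have a1 : |p.1| ≤ ‖p‖ := norm_fst_le p
      have a2 : |p.2| ≤ ‖p‖ := norm_snd_le p
      rw [Real.norm_eq_abs, norm_pow, norm_norm]
      calc _ ≤ |α*p.1^3*p.2| + |β*p.2^4| := abs_add_le _ _
        _ = |α| * (|p.1|^3 * |p.2|) + |β| * |p.2|^4 := by simp only [abs_mul, abs_pow]; ring
        _ ≤ |α| * (‖p‖^3 * ‖p‖) + |β| * ‖p‖^4 := by gcongr
        _ = _ := by ring
    have h3 := (hj.trans h1).add (h2.trans_isLittleO h1)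
    refine h3.congr_left fun p => ?_
    simp only [hg, hq]; ring
  obtain ⟨-, -, -, xx, yx, yy⟩ := J2 sg (by norm_num : 2 ≤ 3) ho
  obtain ⟨xxx, yxx, yyx, yyy⟩ := J3 sg ho
  have qx : pdx q = fun p => p.2^2 - 3 * p.1^2 := by
    funext p
    have h1 : HasDerivAt (fun s : ℝ => s * p.2^2 - s^3) (1 * p.2^2 - (3:ℕ) * p.1^2) p.1 := by
      exact ((hasDerivAt_id p.1).mul_const (p.2^2)).sub (hasDerivAt_pow 3 p.1)
    have := h1.deriv
    simp only [pdx, hq]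
    rw [this]; push_cast; ring
  have qy : pdy q = fun p => 2 * p.1 * p.2 := by
    funext p
    have h1 : HasDerivAt (fun s : ℝ => p.1 * s^2 - p.1^3) (p.1 * ((2:ℕ) * p.2^1)) p.2 := by
      simpa using ((hasDerivAt_pow 2 p.2).const_mul p.1).sub_const (p.1^3)
    have := h1.deriv
    simp only [pdy, hq]
    rw [this]; push_cast; ring
  have qxx : pdx (pdx q) = fun p => -6 * p.1 := by
    funext p
    rw [qx]
    have h1 : HasDerivAt (fun s : ℝ => p.2^2 - 3 * s^2) (-(3 * ((2:ℕ) * p.1^1))) p.1 := by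
      simpa using ((hasDerivAt_pow 2 p.1).const_mul 3).const_sub (p.2^2)
    have := h1.deriv
    simp only [pdx]
    rw [this]; push_cast; ring
  have qxy : pdy (pdx q) = fun p => 2 * p.2 := by
    funext p
    rw [qx]
    have h1 : HasDerivAt (fun s : ℝ => s^2 - 3 * p.1^2) ((2:ℕ) * p.2^1) p.2 := by
      simpa using (hasDerivAt_pow 2 p.2).sub_const (3 * p.1^2)
    have := h1.deriv
    simp only [pdy]
    rw [this]; push_cast; ring
  have qyy : pdy (pdy q) = fun p => 2 * p.1 := by
    funext p
    rw [qy]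
    have h1 : HasDerivAt (fun s : ℝ => 2 * p.1 * s) (2 * p.1 * 1) p.2 := (hasDerivAt_id p.2).const_mul _
    have := h1.deriv
    simp only [pdy]
    rw [this, mul_one]
  refine ⟨pdy (pdy g), pdy (pdx g), pdx (pdx g), ⟨sg.y.y, sg.x.y, sg.x.x⟩, ⟨yy, yx, xx⟩,
    ⟨fd_zero sg.y.y ?_ yyy, fd_zero sg.x.y ?_ yyx, fd_zero sg.x.x xxx yxx⟩, ?_, ?_, ?_⟩
  · rw [pd_comm sg.y, pd_comm sg]; exact yyx
  · rw [pd_comm sg.x]; exact yxx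
  · intro p; rw [hg, pdy_lin hf sq, pdy_lin hf.y sq.y, qyy, fyy]; ring
  · intro p; rw [hg, pdx_lin hf sq, pdy_lin hf.x sq.x, qxy, fxy]; ring
  · intro p; rw [hg, pdx_lin hf sq, pdx_lin hf.x sq.x, qxx, fxx]; ring

end SB

namespace SB

lemma lo_of {a : ℝ × ℝ → ℝ} (h : HasFDerivAt a (0 : ℝ × ℝ →L[ℝ] ℝ) 0) (h0 : a 0 = 0) :
    a =o[nhds 0] fun p : ℝ × ℝ => ‖p‖ := by
  have := h.isLittleO
  simp only [h0, sub_zero, ContinuousLinearMap.zero_apply] at this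
  exact this.norm_right

lemma discr_sm {f : ℝ × ℝ → ℝ} (hf : Sm f) : Sm (bdeDiscr f) := by
  unfold bdeDiscr fxy fxx fyy
  exact (hf.x.y.pow 2).sub (hf.x.x.mul hf.y.y)

lemma discr_jet {f : ℝ × ℝ → ℝ} (hf : Sm f) {α β : ℝ}
    (hj : HasJetAt0 f (fun p => p.1*p.2^2 - p.1^3 + α*p.1^3*p.2 + β*p.2^4) 4) :
    HasJetAt0 (bdeDiscr f) (fun p => 4 * p.2 ^ 2 + 12 * p.1 ^ 2) 2 := by
  obtain ⟨a, b, c, -, ⟨a0, b0, c0⟩, ⟨ha, hb, hc⟩, ea, eb, ec⟩ := second hf hj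
  have oa := lo_of ha a0
  have ob := lo_of hb b0
  have oc := lo_of hc c0
  have o1 : (fun p : ℝ × ℝ => p.1) =O[nhds 0] fun p : ℝ × ℝ => ‖p‖ :=
    IsBigO.of_bound 1 (Eventually.of_forall fun p => by simpa using norm_fst_le p)
  have o2 : (fun p : ℝ × ℝ => p.2) =O[nhds 0] fun p : ℝ × ℝ => ‖p‖ :=
    IsBigO.of_bound 1 (Eventually.of_forall fun p => by simpa using norm_snd_le p)
  unfold HasJetAt0
  have t := ((((o2.mul_isLittleO ob).const_mul_left 4).add (ob.mul_isBigO ob.isBigO)).add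
    (((o1.mul_isLittleO oa).const_mul_left 6).sub ((o1.mul_isLittleO oc).const_mul_left 2))).sub
    (oc.mul_isBigO oa.isBigO)
  have e : (fun p : ℝ × ℝ => ‖p‖ ^ 2) = fun p => ‖p‖ * ‖p‖ := by funext p; ring
  rw [e]
  refine t.congr_left fun p => ?_
  simp only [bdeDiscr, ea, eb, ec]
  ring

lemma discr_parts {d : ℝ × ℝ → ℝ} (hd : Sm d)
    (hj : HasJetAt0 d (fun p => 4 * p.2 ^ 2 + 12 * p.1 ^ 2) 2) :
    d 0 = 0 ∧ (pdx d 0, pdy d 0) = (0, 0) ∧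
    (∀ v : ℝ × ℝ, v ≠ 0 →
      pdx (pdx d) 0 * v.1 ^ 2 + 2 * pdy (pdx d) 0 * v.1 * v.2 +
        pdy (pdy d) 0 * v.2 ^ 2 > 0) ∧
    (∃ U ∈ nhds (0 : ℝ × ℝ), ∀ p ∈ U, (d p = 0 ↔ p = 0)) := by
  set q : ℝ × ℝ → ℝ := fun p => 4 * p.2 ^ 2 + 12 * p.1 ^ 2 with hq
  have sq : Sm q := by rw [hq]; unfold Sm; fun_prop
  have e : (fun p => d p - q p) = fun p => 1 * d p + (-1) * q p := by funext p; ring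
  have hj' := hj
  unfold HasJetAt0 at hj'
  rw [e] at hj'
  obtain ⟨j0, jx, jy, jxx, jxy, jyy⟩ := J2 (hd.lin sq 1 (-1)) le_rfl hj'
  rw [pdx_lin hd sq] at jx jxx jxy
  rw [pdy_lin hd sq] at jy jyy
  rw [pdx_lin hd.x sq.x] at jxx
  rw [pdy_lin hd.x sq.x] at jxy
  rw [pdy_lin hd.y sq.y] at jyy
  have qx : pdx q = fun p => 24 * p.1 := by
    funext p
    have h1 : HasDerivAt (fun s : ℝ => 4 * p.2 ^ 2 + 12 * s ^ 2) (12 * ((2:ℕ) * p.1^1)) p.1 := by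
      simpa using ((hasDerivAt_pow 2 p.1).const_mul 12).const_add (4 * p.2 ^ 2)
    have := h1.deriv
    simp only [pdx, hq]
    rw [this]; push_cast; ring
  have qy : pdy q = fun p => 8 * p.2 := by
    funext p
    have h1 : HasDerivAt (fun s : ℝ => 4 * s ^ 2 + 12 * p.1 ^ 2) (4 * ((2:ℕ) * p.2^1)) p.2 := by
      simpa using ((hasDerivAt_pow 2 p.2).const_mul 4).add_const (12 * p.1 ^ 2)
    have := h1.deriv
    simp only [pdy, hq]
    rw [this]; push_cast; ring
  have qxx : pdx (pdx q) = fun p => 24 := by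
    funext p
    rw [qx]
    have h1 : HasDerivAt (fun s : ℝ => 24 * s) (24 * 1) p.1 := (hasDerivAt_id p.1).const_mul _
    simp only [pdx]
    rw [h1.deriv]; norm_num
  have qxy : pdy (pdx q) = fun p => 0 := by
    funext p
    rw [qx]
    simp [pdy]
  have qyy : pdy (pdy q) = fun p => 8 := by
    funext p
    rw [qy]
    have h1 : HasDerivAt (fun s : ℝ => 8 * s) (8 * 1) p.2 := (hasDerivAt_id p.2).const_mul _
    simp only [pdy]
    rw [h1.deriv]; norm_num
  rw [qx] at jx
  rw [qy] at jy
  rw [qxx] at jxx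
  rw [qxy] at jxy
  rw [qyy] at jyy
  simp [hq] at j0 jx jy jxx jxy jyy
  have kxx : pdx (pdx d) 0 = 24 := by linarith
  have kyy : pdy (pdy d) 0 = 8 := by linarith
  refine ⟨j0, by rw [jx, jy], ?_, ?_⟩
  · intro v hv
    rw [kxx, jxy, kyy]
    have : v.1 ≠ 0 ∨ v.2 ≠ 0 := by
      by_contra! h
      exact hv (Prod.ext h.1 h.2)
    rcases this with h | h
    · have := sq_pos_of_ne_zero h
      nlinarith [sq_nonneg v.2]
    · have := sq_pos_of_ne_zero h
      nlinarith [sq_nonneg v.1]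
  · have h1 := hj.def (c := 1) one_pos
    refine ⟨_, h1, fun p hp => ⟨fun h => ?_, fun h => by rw [h, j0]⟩⟩
    simp only [mem_setOf_eq, h, one_mul, norm_pow, norm_norm, zero_sub, norm_neg] at hp
    rw [Real.norm_eq_abs] at hp
    have h2 := (le_abs_self _).trans hp
    have h3 : ‖p‖ ^ 2 ≤ p.1 ^ 2 + p.2 ^ 2 := by
      rw [Prod.norm_def]
      rcases max_cases ‖p.1‖ ‖p.2‖ with ⟨hh, -⟩ | ⟨hh, -⟩ <;> rw [hh, Real.norm_eq_abs, sq_abs] <;> nlinarith [sq_nonneg p.1, sq_nonneg p.2]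
    simp only [hq] at h2
    have h4 : p.1 = 0 := by nlinarith [sq_nonneg p.1, sq_nonneg p.2]
    have h5 : p.2 = 0 := by nlinarith [sq_nonneg p.1, sq_nonneg p.2]
    exact Prod.ext h4 h5

/-- The zero 1-jet estimate from smoothness -/
lemma Q1_of {G : ℂ → ℂ} (hG : ContDiff ℝ (⊤ : ℕ∞) G) (h0 : G 0 = 0)
    (h1 : HasFDerivAt G (0 : ℂ →L[ℝ] ℂ) 0) : ∃ r L, Q1 r L G := by
  have hd : ContDiff ℝ (⊤ : ℕ∞) (fderiv ℝ G) := hG.fderiv_right (by simp)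
  obtain ⟨K, t, ht, hK⟩ := (hd.contDiffAt (x := 0)).of_le (n := (⊤:ℕ∞)) (m := 1) (by simpa using (WithTop.coe_le_coe.2 (le_top : (1 : ℕ∞) ≤ ⊤))) |>.exists_lipschitzOnWith
  obtain ⟨ε, hε, hb⟩ := Metric.mem_nhds_iff.1 ht
  refine ⟨ε / 2, K, by positivity, K.2, h0, ?_⟩
  intro z z' hle hz
  have key := Convex.norm_image_sub_le_of_norm_fderiv_le (𝕜 := ℝ) (f := G) (C := K * ‖z‖)
    (s := Metric.closedBall 0 ‖z‖) (x := z') (y := z)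
    (fun x _ => hG.differentiable (by simp) x) ?_ (convex_closedBall _ _) (by simpa using hle) (by simp)
  · exact key
  · intro x hx
    have hx' : ‖x‖ ≤ ‖z‖ := by simpa using hx
    have := hK.dist_le_mul x (hb (by rw [mem_ball_zero_iff]; linarith)) 0 (hb (by simpa using hε))
    rw [h1.fderiv, dist_zero_right, dist_zero_right] at this
    exact this.trans (by gcongr)

lemma Q1.mono {r L r' L' : ℝ} {G : ℂ → ℂ} (q : Q1 r L G) (h1 : 0 < r') (h2 : r' ≤ r) (h3 : L ≤ L') :
    Q1 r' L' G :=
  ⟨h1, q.hL.trans h3, q.zero, fun z z' h4 h5 => (q.lip z z' h4 (h5.trans h2)).trans (by gcongr)⟩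

end SB

namespace SB

variable {M R : ℝ} {A B : ℂ → ℝ}

def Conv (ω : ℝ × ℝ → ℝ × ℝ → ℝ) (E : ℂ ≃L[ℝ] ℝ × ℝ) (A B : ℂ → ℝ) (U : Set ℂ) : Prop :=
  ∀ z ∈ U, ∀ v, v ≠ 0 → (ω (E z) (E v) = 0 ↔ z = 0 ∨ ty0 A z v ∨ ty1 B z v)

lemma Conv.to {ω : ℝ × ℝ → ℝ × ℝ → ℝ} {E : ℂ ≃L[ℝ] ℝ × ℝ} {U : Set ℂ} (h : Conv ω E A B U)
    {γ : ℝ → ℝ × ℝ} {I : Set ℝ} (hc : IsIntegralCurveOnBDE ω γ I) (hU : ∀ t ∈ I, E.symm (γ t) ∈ U) :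
    ∃ γ', Crv A B (fun t => E.symm (γ t)) γ' I := by
  obtain ⟨-, d, dc, hd⟩ := hc
  refine ⟨fun t => E.symm (d t), ?_, ?_, ?_, ?_⟩
  · intro t ht
    exact (E.symm : ℝ × ℝ →L[ℝ] ℂ).hasFDerivAt.comp_hasDerivAt t (hd t ht).1
  · exact E.symm.continuous.comp_continuousOn dc
  · intro t ht
    have := (hd t ht).2.1
    simpa using this
  · intro t ht
    apply (h _ (hU t ht) _ (by simpa using (hd t ht).2.1)).1
    simpa using (hd t ht).2.2

lemma Conv.from {ω : ℝ × ℝ → ℝ × ℝ → ℝ} {E : ℂ ≃L[ℝ] ℝ × ℝ} {U : Set ℂ} (h : Conv ω E A B U)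
    {γ γ' : ℝ → ℂ} {a b : ℝ} (hc : Crv A B γ γ' (Ioo a b)) (hU : ∀ t ∈ Ioo a b, γ t ∈ U) :
    IsIntegralCurveOnBDE ω (fun t => E (γ t)) (Ioo a b) := by
  refine ⟨⟨a, b, rfl⟩, fun t => E (γ' t), E.continuous.comp_continuousOn hc.cont, ?_⟩
  intro t ht
  refine ⟨(E : ℂ →L[ℝ] ℝ × ℝ).hasFDerivAt.comp_hasDerivAt t (hc.der t ht), ?_, ?_⟩
  · simpa using hc.ne t ht
  · exact (h _ (hU t ht) _ (hc.ne t ht)).2 (hc.typ t ht)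

lemma g00 : GoodP 0 1 (fun _ => 0) (fun _ => 0) := by
  constructor <;> constructor <;> simp

lemma hh00 (z : ℂ) : hh (fun _ => 0) (fun _ => 0) z = z := by
  have := hh_sub g00 z
  simp at this
  exact sub_eq_zero.1 this

lemma empty_curve (ω : ℝ × ℝ → ℝ × ℝ → ℝ) : IsIntegralCurveOnBDE ω (fun _ => 0) (∅ : Set ℝ) :=
  ⟨⟨0, 0, by simp⟩, fun _ => 0, by simp, by simp⟩

/-- transfer of curves -/
lemma trans {M' R' : ℝ} {A' B' : ℂ → ℝ} (g : GoodP M R A B) (g' : GoodP M' R' A' B')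
    {ω Ω : ℝ × ℝ → ℝ × ℝ → ℝ} {E E' : ℂ ≃L[ℝ] ℝ × ℝ} {U U' : Set ℂ}
    (c : Conv ω E A B U) (c' : Conv Ω E' A' B' U') {C : ℝ} (hC : ∀ z ∈ U, ‖z‖ ≤ C)
    (k : ℂ → ℂ) (hk : ∀ z, hh A' B' (k z) = hh A B z) (hU : ∀ z ∈ U, k z ∈ U')
    {γ : ℝ → ℝ × ℝ} {I : Set ℝ} (hc : IsIntegralCurveOnBDE ω γ I) (hγ : ∀ t ∈ I, E.symm (γ t) ∈ U) :
    ∃ σ J, IsIntegralCurveOnBDE Ω σ J ∧ (fun p => E' (k (E.symm p))) '' (γ '' I) = σ '' J := by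
  obtain ⟨γ', h1⟩ := c.to hc hγ
  obtain ⟨⟨a, b, rfl⟩, -⟩ := hc
  rcases le_or_gt b a with hab | hab
  · rw [Ioo_eq_empty (not_lt.2 hab)]
    exact ⟨_, _, empty_curve Ω, by simp⟩
  have h2 := fwd g hab h1 (C := C) (fun t ht => hC _ (hγ t ht))
  obtain ⟨σ, σ', a', b', hab', h3, h4⟩ := bwd g' h2
  have key : k '' ((fun t => E.symm (γ t)) '' Ioo a b) = σ '' Ioo a' b' := by
    apply (image_injective.2 (fun x y h => hh_inj g' h : Function.Injective (hh A' B')))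
    rw [h4, image_image]
    simp only [hk]
  refine ⟨fun t => E' (σ t), Ioo a' b', c'.from h3 ?_, ?_⟩
  · intro t ht
    have : σ t ∈ σ '' Ioo a' b' := ⟨t, ht, rfl⟩
    rw [← key, image_image] at this
    obtain ⟨s, hs, e⟩ := this
    rw [← e]
    exact hU _ (hγ s hs)
  · have := congrArg (fun X => E' '' X) key
    simpa [image_image] using this

lemma equiv_of (g : GoodP M R A B) {ω Ω : ℝ × ℝ → ℝ × ℝ → ℝ} {E E' : ℂ ≃L[ℝ] ℝ × ℝ} {r : ℝ} (hr : 0 < r)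
    (c : Conv ω E A B (Metric.ball 0 r)) (c' : Conv Ω E' (fun _ => 0) (fun _ => 0) univ) :
    TopEquivAt0 ω Ω := by
  obtain ⟨H, hH⟩ := hh_homeo g
  have H0 : H 0 = 0 := by rw [hH, hh_zero]
  have H0' : H.symm 0 = 0 := by rw [← H0, H.symm_apply_apply, H0]
  refine ⟨E.symm ⁻¹' Metric.ball 0 r, E'.symm ⁻¹' (H.symm ⁻¹' Metric.ball 0 r),
    fun p => E' (H (E.symm p)), fun p => E (H.symm (E'.symm p)), ?_, ?_, ?_, ?_, ?_, ?_, ?_, ?_, ?_, ?_, ?_⟩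
  · exact Metric.isOpen_ball.preimage E.symm.continuous
  · exact (Metric.isOpen_ball.preimage H.symm.continuous).preimage E'.symm.continuous
  · simp [hr]
  · simp [H0', hr]
  · simp [H0]
  · exact (E'.continuous.comp (H.continuous.comp E.symm.continuous)).continuousOn
  · exact (E.continuous.comp (H.symm.continuous.comp E'.symm.continuous)).continuousOn
  · refine ⟨fun p hp => by simpa using hp, fun p _ q _ h => by simpa using h, fun p hp => ?_⟩
    exact ⟨E (H.symm (E'.symm p)), by simpa using hp, by simp⟩
  · exact ⟨fun p _ => by simp, fun p _ => by simp⟩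
  · intro γ I hc hm
    exact trans g g00 c c' (C := r) (fun z hz => by simpa using (Metric.mem_ball.1 hz).le) H
      (fun z => by rw [hh00, hH]) (fun _ _ => mem_univ _) hc hm
  · intro γ I hc hm
    have c'' : Conv Ω E' (fun _ => 0) (fun _ => 0) (H.symm ⁻¹' Metric.ball 0 r) :=
      fun z _ v hv => c' z (mem_univ _) v hv
    refine trans g00 g c'' c (C := 2 * r) (fun z hz => ?_) H.symm
      (fun z => by rw [hh00, ← hH, H.apply_symm_apply]) (fun _ h => h) hc hm
    have h1 := hh_norm g (H.symm z)
    rw [← hH, H.apply_symm_apply] at h1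
    have h2 : ‖H.symm z‖ < r := by simpa using hz
    have h3 := norm_sub_norm_le z (H.symm z)
    linarith [norm_nonneg (H.symm z)]

def E0 : ℂ ≃L[ℝ] ℝ × ℝ := Complex.equivRealProdCLM
lemma E0_apply (z : ℂ) : E0 z = (z.re, z.im) := rfl

def E1 : ℂ ≃L[ℝ] ℝ × ℝ := LinearEquiv.toContinuousLinearEquiv
  { toFun := fun z => (-z.im, √3 * z.re)
    invFun := fun p => ⟨p.2 / √3, -p.1⟩
    map_add' := fun z w => by simp; constructor <;> ring
    map_smul' := fun c z => by simp; ring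
    left_inv := fun z => by apply Complex.ext <;> simp
    right_inv := fun p => by
      have : √3 ≠ 0 := by positivity
      ext <;> simp; field_simp }
lemma E1_apply (z : ℂ) : E1 z = (-z.im, √3 * z.re) := rfl

lemma star_conv : Conv (BDE (fun p => p.2) (fun p => -p.1) (fun p => -p.2)) E0 (fun _ => 0) (fun _ => 0) univ := by
  intro z _ v hv
  have e : BDE (fun p => p.2) (fun p => -p.1) (fun p => -p.2) (E0 z) (E0 v) = -(z * v ^ 2).im := by
    simp only [BDE, E0_apply, pow_two, Complex.mul_re, Complex.mul_im]; ring
  rw [e]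
  constructor
  · intro h
    by_cases hz : z = 0
    · exact Or.inl hz
    right
    have h1 : z * v ^ 2 = (((z * v ^ 2).re : ℝ) : ℂ) := real_of (by linarith)
    have h2 : (z * v ^ 2).re ≠ 0 := by
      intro h0; rw [h0] at h1
      have : z * v ^ 2 ≠ 0 := mul_ne_zero hz (pow_ne_zero _ hv)
      exact this (by simpa using h1)
    rcases h2.lt_or_gt with h3 | h3
    · right; refine ⟨-(z * v ^ 2).re, by linarith, ?_⟩
      rw [h1]; simp
    · left; refine ⟨(z * v ^ 2).re, h3, ?_⟩
      rw [h1]; simp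
  · rintro (h | ⟨k, -, h⟩ | ⟨k, -, h⟩)
    · simp [h]
    · simp [h]
    · simp [h]

lemma form_eq (f : ℝ × ℝ → ℝ) (a b c : ℝ × ℝ → ℝ) (h1 : ∀ p, fyy f p = 2 * p.1 + a p)
    (h2 : ∀ p, fxy f p = 2 * p.2 + b p) (h3 : ∀ p, fxx f p = -6 * p.1 + c p) (z v : ℂ) :
    asymBDE f (E1 z) (E1 v) = 6 * Fm
      (fun z => (⟨(a (E1 z) / 2 - c (E1 z) / 6) / 2, √3 / 6 * b (E1 z)⟩ : ℂ))
      (fun z => (a (E1 z) / 2 + c (E1 z) / 6) / 2) z v := by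
  have n : ‖v‖ ^ 2 = v.re ^ 2 + v.im ^ 2 := by
    rw [← Complex.normSq_eq_norm_sq, Complex.normSq_apply]; ring
  simp only [asymBDE, BDE, h1, h2, h3, Fm, n]
  simp only [E1_apply, pow_two, Complex.mul_re, Complex.mul_im]
  linear_combination (2 * (-z.im) + a (-z.im, √3 * z.re)) * v.re * v.re * s3 - 4 * z.re * v.re * v.im * s3

lemma main_equiv {α β : ℝ} {f : ℝ × ℝ → ℝ} (hf : Sm f)
    (hj : HasJetAt0 f (fun p => p.1*p.2^2 - p.1^3 + α*p.1^3*p.2 + β*p.2^4) 4) :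
    TopEquivAt0 (asymBDE f) (BDE (fun p => p.2) (fun p => -p.1) (fun p => -p.2)) := by
  obtain ⟨a, b, c, ⟨sa, sb, sc⟩, ⟨a0, b0, c0⟩, ⟨da, db, dc⟩, h1, h2, h3⟩ := second hf hj
  have e10 : E1 0 = 0 := by simp
  have cd : ∀ g : ℝ × ℝ → ℝ, Sm g → ContDiff ℝ (⊤:ℕ∞) (fun z : ℂ => ((g (E1 z) : ℝ) : ℂ)) := fun g hg =>
    Complex.ofRealCLM.contDiff.comp (hg.comp E1.contDiff)
  have dd : ∀ g : ℝ × ℝ → ℝ, HasFDerivAt g (0 : ℝ × ℝ →L[ℝ] ℝ) 0 →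
      HasFDerivAt (fun z : ℂ => ((g (E1 z) : ℝ) : ℂ)) (0 : ℂ →L[ℝ] ℂ) 0 := fun g hg => by
    have hg' : HasFDerivAt g (0 : ℝ × ℝ →L[ℝ] ℝ) (E1 0) := by rw [e10]; exact hg
    have := Complex.ofRealCLM.hasFDerivAt.comp (0:ℂ) (hg'.comp (0:ℂ) E1.hasFDerivAt)
    simpa [Function.comp_def] using this
  have hκ : (fun z => (⟨(a (E1 z) / 2 - c (E1 z) / 6) / 2, √3 / 6 * b (E1 z)⟩ : ℂ)) =
      fun z => (((a (E1 z) : ℝ) : ℂ) * (1/4) + ((c (E1 z) : ℝ) : ℂ) * (-1/12)) +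
        ((b (E1 z) : ℝ) : ℂ) * ((√3 / 6 : ℝ) * Complex.I) := by
    funext z
    apply Complex.ext <;> simp <;> ring
  have hl : (fun z => (((a (E1 z) / 2 + c (E1 z) / 6) / 2 : ℝ) : ℂ)) =
      fun z => (((a (E1 z) : ℝ) : ℂ) * (1/4) + ((c (E1 z) : ℝ) : ℂ) * (1/12)) := by
    funext z
    push_cast; ring
  obtain ⟨r1, L1, q1⟩ : ∃ r L, Q1 r L (fun z => (⟨(a (E1 z) / 2 - c (E1 z) / 6) / 2, √3 / 6 * b (E1 z)⟩ : ℂ)) := by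
    rw [hκ]
    apply Q1_of
    · exact (((cd a sa).mul contDiff_const).add ((cd c sc).mul contDiff_const)).add ((cd b sb).mul contDiff_const)
    · simp [e10, a0, b0, c0]
    · have := (((dd a da).mul_const (1/4)).add ((dd c dc).mul_const (-1/12))).add
        ((dd b db).mul_const (((√3 / 6 : ℝ) : ℂ) * Complex.I))
      refine this.congr_fderiv ?_
      simp
  obtain ⟨r2, L2, q2⟩ : ∃ r L, Q1 r L (fun z => (((a (E1 z) / 2 + c (E1 z) / 6) / 2 : ℝ) : ℂ)) := by
    rw [hl]
    apply Q1_of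
    · exact (((cd a sa).mul contDiff_const).add ((cd c sc).mul contDiff_const))
    · simp [e10, a0, c0]
    · have := (((dd a da).mul_const (1/4)).add ((dd c dc).mul_const (1/12)))
      refine this.congr_fderiv ?_
      simp
  have hr := lt_min q1.hr q2.hr
  obtain ⟨M, R, A, B, -, g, hd⟩ := dirs (q1.mono hr (min_le_left _ _) (le_max_left L1 L2))
    (q2.mono hr (min_le_right _ _) (le_max_right L1 L2))
  refine equiv_of g (E := E1) (E' := E0) (half_pos g.a.hR) ?_ star_conv
  intro z hz v hv
  by_cases h0 : z = 0
  · subst h0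
    simp [asymBDE, BDE, h1, h2, h3, a0, b0, c0]
  · rw [form_eq f a b c h1 h2 h3, ← hd z h0 (by simpa using hz) v hv]
    simp [h0]

end SB

/-- class `Π^f_1` (three real root directions): for smooth `f` with
`j⁴f(0) = xy² − x³ + αx³y + βy⁴`, the discriminant `δ` vanishes to first order
at `0`, `j²δ(0) = 4y² + 12x²` (so `Hess δ(0)` is positive definite and the
origin is an isolated point of the parabolic set), and the asymptotic BDE of
`f` is topologically equivalent at `0` to the star BDE
`y dy² − 2x dxdy − y dx² = 0`. -/
theorem stmt8 (α β : ℝ) (f : ℝ × ℝ → ℝ) (hf : ContDiff ℝ (⊤ : ℕ∞) f)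
    (hjet : HasJetAt0 f
      (fun p => p.1 * p.2 ^ 2 - p.1 ^ 3 + α * p.1 ^ 3 * p.2 + β * p.2 ^ 4) 4) :
    bdeDiscr f 0 = 0 ∧
    (pdx (bdeDiscr f) 0, pdy (bdeDiscr f) 0) = (0, 0) ∧
    HasJetAt0 (bdeDiscr f) (fun p => 4 * p.2 ^ 2 + 12 * p.1 ^ 2) 2 ∧
    -- the Hessian of δ at 0 is positive definite
    (∀ v : ℝ × ℝ, v ≠ 0 →
      pdx (pdx (bdeDiscr f)) 0 * v.1 ^ 2 + 2 * pdy (pdx (bdeDiscr f)) 0 * v.1 * v.2 +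
        pdy (pdy (bdeDiscr f)) 0 * v.2 ^ 2 > 0) ∧
    -- the origin is an isolated point of the parabolic set
    (∃ U ∈ nhds (0 : ℝ × ℝ), ∀ p ∈ U, (bdeDiscr f p = 0 ↔ p = 0)) ∧
    TopEquivAt0 (asymBDE f)
      (BDE (fun p => p.2) (fun p => -p.1) (fun p => -p.2)) := by
  have hd := SB.discr_sm hf
  have hj2 := SB.discr_jet hf hjet
  obtain ⟨h1, h2, h3, h4⟩ := SB.discr_parts hd hj2
  exact ⟨h1, h2, hj2, h3, h4, SB.main_equiv hf hjet⟩
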